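/- arXiv:1705.02993 — 3 statements merged into one kernel-verified Lean document; each statement's English description precedes it below -/
import Mathlib

section
/- Fix integers n ≥ 3 and d ≥ 2 and a real ε > 0. There exists a constant C > 0, depending only on n, d and ε, such that for every prime p and every nontrivial irreducible unitary representation π of SLₙ(ℤ/pℤ), the proportion of tuples S = (g₁, …, g_d) ∈ (SLₙ(ℤ/pℤ))^d (with respect to the uniform measure on the d-fold product) satisfying D(μ_{π,S}, f_{2d}) ≤ ε is at least 1 − C·p^{−1}. -/
open MeasureTheory

noncomputable section

abbrev SL (n p : ℕ) := Matrix.SpecialLinearGroup (Fin n) (ZMod p)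

/-- Density of the Kesten–McKay law with parameter `2d`. -/
noncomputable def kmDensity (d : ℕ) (x : ℝ) : ℝ :=
  if x ^ 2 ≤ 4 * (2 * (d : ℝ) - 1) then
    2 * d * Real.sqrt (4 * (2 * (d : ℝ) - 1) - x ^ 2) /
      (2 * Real.pi * ((2 * (d : ℝ)) ^ 2 - x ^ 2))
  else 0

/-- The Kesten–McKay law with parameter `2d`, as a measure on `ℝ`. -/
noncomputable def kestenMcKay (d : ℕ) : Measure ℝ :=
  MeasureTheory.volume.withDensity fun x => ENNReal.ofReal (kmDensity d x)

/-- Discrepancy between two measures on ℝ. -/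
noncomputable def discrepancy (ν μ : Measure ℝ) : ℝ :=
  sSup {r : ℝ | ∃ a b : ℝ, a ≤ b ∧
    r = |(ν (Set.Icc a b)).toReal - (μ (Set.Icc a b)).toReal|}

/-- The element of the free group on `d` generators given by a word of length `m`. -/
def wordProd {d m : ℕ} (w : Fin m → Fin d × Bool) : FreeGroup (Fin d) :=
  (List.ofFn fun j => if (w j).2 then FreeGroup.of (w j).1 else (FreeGroup.of (w j).1)⁻¹).prod

/-- Evaluation of a word of length `m` in `d` letters at a tuple `S`. -/
def wordEval {G : Type*} [Group G] {d m : ℕ} (S : Fin d → G) (w : Fin m → Fin d × Bool) : G :=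
  (List.ofFn fun j => if (w j).2 then S (w j).1 else (S (w j).1)⁻¹).prod

/-- `N(d,m)`: the number of trivial words of length `m` in `d` letters. -/
noncomputable def Ntriv (d m : ℕ) : ℕ :=
  Nat.card {w : Fin m → Fin d × Bool // wordProd w = 1}

/-- `A_{π,S} = Σᵢ (π gᵢ + (π gᵢ)⁻¹)`. -/
noncomputable def Amat {G : Type*} [Group G] {n d : ℕ}
    (π : G →* Matrix.unitaryGroup (Fin n) ℂ) (S : Fin d → G) : Matrix (Fin n) (Fin n) ℂ :=
  ∑ i, ((π (S i) : Matrix (Fin n) (Fin n) ℂ) + ((π (S i))⁻¹ : Matrix (Fin n) (Fin n) ℂ))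

/-- Spectral probability measure of a Hermitian matrix. -/
noncomputable def specMeasure {n : ℕ} (A : Matrix (Fin n) (Fin n) ℂ) : Measure ℝ := by
  classical
  exact if hA : A.IsHermitian then
    (n : ENNReal)⁻¹ • ∑ j : Fin n, Measure.dirac (hA.eigenvalues j) else 0

/-- A unitary representation is irreducible if the only invariant subspaces are `⊥` and `⊤`. -/
def IsIrreducibleRep {G : Type*} [Group G] {n : ℕ}
    (π : G →* Matrix.unitaryGroup (Fin n) ℂ) : Prop :=
  ∀ W : Submodule ℂ (Fin n → ℂ),
    (∀ g : G, ∀ v ∈ W, (π g : Matrix (Fin n) (Fin n) ℂ).mulVec v ∈ W) → W = ⊥ ∨ W = ⊤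

/-- Number of eigenvalues of a Hermitian matrix with `|λ| > t`, with multiplicity. -/
noncomputable def excCount {n : ℕ} (A : Matrix (Fin n) (Fin n) ℂ) (t : ℝ) : ℕ := by
  classical
  exact if hA : A.IsHermitian then
    (Finset.univ.filter fun j : Fin n => t < |hA.eigenvalues j|).card else 0

end

section Part_P1
open Polynomial MeasureTheory
open Polynomial

/-- The Kesten–McKay orthogonal polynomials. -/
noncomputable def kp (d : ℕ) : ℕ → ℝ[X]
  | 0 => 1
  | 1 => X
  | 2 => X * X - C (2 * (d : ℝ))
  | (k + 3) => X * kp d (k + 2) - C (2 * (d : ℝ) - 1) * kp d (k + 1)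

theorem norm_letter_mul {d : ℕ} (w : FreeGroup (Fin d)) (s : Fin d × Bool) :
    (FreeGroup.mk [s] * w).norm =
      if w.toWord.head? = some (s.1, !s.2) then w.norm - 1 else w.norm + 1 := by
  have h : (FreeGroup.mk [s] * w).toWord = FreeGroup.reduce (s :: w.toWord) := by
    rw [FreeGroup.toWord_mul, FreeGroup.toWord_mk]
    simp
  have h2 : FreeGroup.reduce w.toWord = w.toWord := FreeGroup.reduce_toWord w
  rw [FreeGroup.norm, h, FreeGroup.reduce.cons, h2, FreeGroup.norm]
  rcases hw : w.toWord with _ | ⟨t, L⟩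
  · simp
  · simp only [List.head?_cons, Option.some.injEq]
    by_cases hc : t = (s.1, !s.2)
    · subst hc; simp
    · rw [if_neg, if_neg hc]
      · simp
      · rintro ⟨h1, h2⟩
        apply hc
        exact Prod.ext h1.symm (by simp [h2])

/-- The adjacency element in the group algebra of the free group. -/
noncomputable def adj (d : ℕ) : MonoidAlgebra ℝ (FreeGroup (Fin d)) :=
  ∑ i, (MonoidAlgebra.of ℝ _ (FreeGroup.of i) + MonoidAlgebra.of ℝ _ (FreeGroup.of i)⁻¹)

theorem adj_mul_apply (d : ℕ) (f : MonoidAlgebra ℝ (FreeGroup (Fin d))) (w : FreeGroup (Fin d)) :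
    (adj d * f).coeff w = ∑ s : Fin d × Bool, f.coeff (FreeGroup.mk [s] * w) := by
  have h : ∀ i : Fin d, FreeGroup.mk [(i, true)] = FreeGroup.of i := fun i => rfl
  have h' : ∀ i : Fin d, FreeGroup.mk [(i, false)] = (FreeGroup.of i)⁻¹ := fun i => rfl
  rw [Fintype.sum_prod_type]
  simp only [adj, Finset.sum_mul, add_mul, Fintype.sum_bool, h, h']
  simp [add_comm]

theorem sum_sphere {d : ℕ} (k : ℕ) (w : FreeGroup (Fin d)) :
    (∑ s : Fin d × Bool, if (FreeGroup.mk [s] * w).norm = k then (1 : ℝ) else 0) =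
      if w.norm = 0 then (if k = 1 then 2 * (d : ℝ) else 0)
      else (if w.norm = k + 1 then 1 else 0) + (if w.norm + 1 = k then 2 * (d : ℝ) - 1 else 0) := by
  simp_rw [norm_letter_mul]
  unfold FreeGroup.norm
  rcases hw : w.toWord with _ | ⟨t, L⟩
  · simp [mul_comm, eq_comm]
  · have : ∀ s : Fin d × Bool, (t = (s.1, !s.2)) ↔ s = (t.1, !t.2) := by
      rintro ⟨a, b⟩
      constructor
      · rintro rfl; simp
      · rintro h; simp [Prod.ext_iff] at h; simp [h, Prod.ext_iff]
    simp only [List.head?_cons, Option.some.injEq, this]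
    rw [← Finset.add_sum_erase _ _ (Finset.mem_univ (t.1, !t.2))]
    rw [Finset.sum_congr (g := fun _ => if L.length + 1 + 1 = k then (1:ℝ) else 0) rfl]
    · rw [Finset.sum_const, Finset.card_erase_of_mem (Finset.mem_univ _), Finset.card_univ]
      have hd : 1 ≤ d := by have := t.1.2; omega
      simp only [Fintype.card_prod, Fintype.card_fin, Fintype.card_bool]
      simp only [List.length_cons, if_true]
      have : ((d * 2 - 1 : ℕ) : ℝ) = 2 * d - 1 := by
        rw [Nat.cast_sub (by omega)]; push_cast; ring
      rw [nsmul_eq_mul, this]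
      simp
    · intro s hs
      rw [if_neg (Finset.ne_of_mem_erase hs)]
      simp

theorem kp_adj (d : ℕ) (k : ℕ) (w : FreeGroup (Fin d)) :
    (aeval (adj d) (kp d k)).coeff w = if w.norm = k then 1 else 0 := by
  induction k using Nat.strong_induction_on generalizing w with
  | _ k ih =>
    have key : ∀ j < k, (adj d * aeval (adj d) (kp d j)).coeff w =
       if w.norm = 0 then (if j = 1 then 2 * (d : ℝ) else 0)
      else (if w.norm = j + 1 then 1 else 0) + (if w.norm + 1 = j then 2 * (d : ℝ) - 1 else 0) := by
      intro j hj
      rw [adj_mul_apply, ← sum_sphere]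
      exact Finset.sum_congr rfl fun s _ => ih j hj _
    match k with
    | 0 => 
      simp [kp, MonoidAlgebra.one_def, Finsupp.single_apply]
      simp [eq_comm]
    | 1 =>
      have := key 0 (by omega)
      simp only [kp, map_one, mul_one] at this
      simp only [kp, aeval_X, this]
      by_cases h : w.norm = 0 <;> simp [h]
    | 2 =>
      have := key 1 (by omega)
      simp only [kp, aeval_X] at this
      simp only [kp, map_sub, map_mul, aeval_X, aeval_C, MonoidAlgebra.coeff_sub, Finsupp.sub_apply, this]
      simp [MonoidAlgebra.coe_algebraMap, Finsupp.single_apply]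
      by_cases h : w.norm = 0
      · have : w = 1 := FreeGroup.norm_eq_zero.1 h
        subst this; simp
      · have : ¬ w = 1 := fun h' => h (FreeGroup.norm_eq_zero.2 h')
        simp [this, eq_comm]
    | (k+3) =>
      have := key (k+2) (by omega)
      have i1 := ih (k+1) (by omega) w
      have e : aeval (adj d) (kp d (k + 3)) = adj d * aeval (adj d) (kp d (k + 2)) -
          (2 * (d : ℝ) - 1) • aeval (adj d) (kp d (k + 1)) := by
        simp only [kp]
        rw [map_sub, map_mul, map_mul, aeval_X, aeval_C, Algebra.smul_def]
      rw [e, MonoidAlgebra.coeff_sub, Finsupp.sub_apply, this, MonoidAlgebra.coeff_smul,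
        Finsupp.smul_apply, i1]
      by_cases h : w.norm = 0
      · simp [h]
      · by_cases h2 : w.norm = k + 1
        · simp [h2]
        · simp [h2, h]

theorem kp_natDegree_monic (d k : ℕ) : (kp d k).Monic ∧ (kp d k).natDegree = k := by
  induction k using Nat.strong_induction_on with
  | _ k ih =>
    match k with
    | 0 => simp [kp]
    | 1 => simp [kp, monic_X]
    | 2 => 
      have h1 : (X * X : ℝ[X]).Monic := monic_X.mul monic_X
      have : (C (2 * (d : ℝ))).degree < (X * X : ℝ[X]).degree := by
        refine lt_of_le_of_lt degree_C_le ?_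
        rw [← pow_two, degree_X_pow]; norm_num
      refine ⟨h1.sub_of_left this, ?_⟩
      simp only [kp]
      rw [natDegree_sub_eq_left_of_natDegree_lt]
      · simp [natDegree_mul]
      · rw [natDegree_C]; simp [natDegree_mul]
    | (k+3) =>
      obtain ⟨a1, a2⟩ := ih (k+2) (by omega)
      obtain ⟨b1, b2⟩ := ih (k+1) (by omega)
      have h1 : (X * kp d (k+2)).Monic := monic_X.mul a1
      have h2 : (X * kp d (k+2)).natDegree = k + 3 := by
        rw [natDegree_X_mul a1.ne_zero, a2]
      have h3 : (C (2 * (d : ℝ) - 1) * kp d (k + 1)).natDegree < (X * kp d (k+2)).natDegree := by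
        rw [h2]
        refine lt_of_le_of_lt (natDegree_C_mul_le _ _) ?_
        omega
      simp only [kp]
      exact ⟨h1.sub_of_left (degree_lt_degree h3), by rw [natDegree_sub_eq_left_of_natDegree_lt h3, h2]⟩

/-- Two linear functionals agreeing on `kp` agree. -/
theorem kp_ext (d : ℕ) (f g : ℝ[X] →ₗ[ℝ] ℝ) (h : ∀ k, f (kp d k) = g (kp d k)) (P : ℝ[X]) :
    f P = g P := by
  induction hn : P.natDegree using Nat.strong_induction_on generalizing P with
  | _ n ih =>
    obtain ⟨h1, h2⟩ := kp_natDegree_monic d n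
    have hz : f (P - C P.leadingCoeff * kp d n) = g (P - C P.leadingCoeff * kp d n) := by
      by_cases hn0 : n = 0
      · subst hn0
        have : P = C (P.coeff 0) := eq_C_of_natDegree_eq_zero hn
        rw [this]; simp [kp]
      · by_cases hP : P = 0
        · subst hP; simp
        have hlt : (P - C P.leadingCoeff * kp d n).natDegree < n := by
          have : (C P.leadingCoeff * kp d n).degree = P.degree := by
            rw [degree_mul, degree_C (leadingCoeff_ne_zero.2 hP), degree_eq_natDegree h1.ne_zero, h2,
              degree_eq_natDegree hP, hn]; simp
          have h3 := degree_sub_lt_left this.symm hP (by rw [leadingCoeff_mul, h1]; simp)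
          by_cases h4 : P - C P.leadingCoeff * kp d n = 0
          · rw [h4]; simp; omega
          · exact (natDegree_lt_natDegree h4 h3).trans_eq hn
        exact ih _ hlt _ rfl
    have e : ∀ F : ℝ[X] →ₗ[ℝ] ℝ, F P = F (P - C P.leadingCoeff * kp d n) + P.leadingCoeff * F (kp d n) := by
      intro F
      rw [← smul_eq_C_mul, map_sub, map_smul]; simp
    rw [e f, e g, hz, h]

end Part_P1

section Part_P2
open Polynomial MeasureTheory
theorem km_den_pos {q : ℝ} (hq : 1 < q) (t : ℝ) : 0 < q ^ 2 + 1 - 2 * q * Real.cos t := by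
  nlinarith [Real.cos_le_one t, sq_nonneg (q - 1)]

theorem km_J {q : ℝ} (hq : 1 < q) (k : ℕ) :
    ∫ θ in (0:ℝ)..(2 * Real.pi), (Real.cos (k * θ) - q⁻¹ * Real.cos ((k - 2) * θ)) /
      (q ^ 2 + 1 - 2 * q * Real.cos (2 * θ)) = if k = 0 then 2 * Real.pi / q ^ 2 else 0 := by
  have hq0 : q ≠ 0 := by linarith
  have hnz : ∀ z : ℂ, ‖z‖ ≤ 1 → ((q : ℂ) ^ 2 - q * z ^ 2) ≠ 0 := by
    intro z hz h
    have h1 : (q : ℂ) * (q - z ^ 2) = 0 := by rw [← h]; ring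
    have h2 : (q : ℂ) = z ^ 2 := by
      rcases mul_eq_zero.1 h1 with h3 | h3
      · exact absurd (by exact_mod_cast h3) hq0
      · exact sub_eq_zero.1 h3
    have h3 : ‖(q : ℂ)‖ = ‖z‖ ^ 2 := by rw [h2, norm_pow]
    rw [Complex.norm_real, Real.norm_eq_abs, abs_of_pos (by linarith)] at h3
    nlinarith [norm_nonneg z]
  have hd : DiffContOnCl ℂ (fun z : ℂ => z ^ k / ((q : ℂ) ^ 2 - q * z ^ 2)) (Metric.ball 0 |1|) := by
    apply DifferentiableOn.diffContOnCl
    intro z hz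
    rw [abs_one, closure_ball _ (by norm_num)] at hz
    apply DifferentiableAt.differentiableWithinAt
    have := hnz z (by simpa using hz)
    fun_prop (disch := assumption)
  have hav := hd.circleAverage
  rw [Real.circleAverage] at hav
  have hpt : ∀ θ : ℝ, (Real.cos (k * θ) - q⁻¹ * Real.cos ((k - 2) * θ)) /
      (q ^ 2 + 1 - 2 * q * Real.cos (2 * θ)) =
      Complex.reCLM ((circleMap 0 1 θ) ^ k / ((q : ℂ) ^ 2 - q * (circleMap 0 1 θ) ^ 2)) := by
    intro θ
    have e : ∀ m : ℕ, (circleMap 0 1 θ) ^ m = (Real.cos (m * θ) : ℂ) + Real.sin (m * θ) * Complex.I := by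
      intro m
      simp only [circleMap, zero_add, Complex.ofReal_one, one_mul]
      rw [← Complex.exp_nat_mul, ← mul_assoc, Complex.exp_mul_I]
      push_cast; rfl
    rw [e, e]
    have h2 := Real.sin_sq_add_cos_sq (2 * θ)
    have h3 : ((k:ℝ) - 2) * θ = k * θ - 2 * θ := by ring
    rw [h3, Real.cos_sub]
    have hp := km_den_pos hq (2 * θ)
    simp only [Nat.cast_ofNat, Complex.reCLM_apply, Complex.div_re, Complex.normSq_apply]
    have r1 : ((q : ℂ) ^ 2 - q * (Real.cos (2 * θ) + Real.sin (2 * θ) * Complex.I)).re = q ^ 2 - q * Real.cos (2 * θ) := by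
      rw [← Complex.ofReal_pow]
      simp only [Complex.sub_re, Complex.ofReal_re, Complex.mul_re, Complex.add_re, Complex.I_re, Complex.I_im, Complex.ofReal_im, Complex.add_im, Complex.mul_im]; ring
    have r2 : ((q : ℂ) ^ 2 - q * (Real.cos (2 * θ) + Real.sin (2 * θ) * Complex.I)).im = - q * Real.sin (2 * θ) := by
      rw [← Complex.ofReal_pow]
      simp only [Complex.sub_im, Complex.ofReal_re, Complex.mul_re, Complex.add_re, Complex.I_re, Complex.I_im, Complex.ofReal_im, Complex.add_im, Complex.mul_im]; ring
    have r3 : ((Real.cos (k * θ) : ℂ) + Real.sin (k * θ) * Complex.I).re = Real.cos (k * θ) := by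
      simp only [Complex.ofReal_re, Complex.mul_re, Complex.add_re, Complex.I_re, Complex.I_im, Complex.ofReal_im]; ring
    have r4 : ((Real.cos (k * θ) : ℂ) + Real.sin (k * θ) * Complex.I).im = Real.sin (k * θ) := by
      simp only [Complex.ofReal_re, Complex.mul_im, Complex.add_im, Complex.I_re, Complex.I_im, Complex.ofReal_im]; ring
    rw [r1, r2, r3, r4]
    have hden : (q ^ 2 - q * Real.cos (2 * θ)) * (q ^ 2 - q * Real.cos (2 * θ)) +
      (- q * Real.sin (2 * θ)) * (- q * Real.sin (2 * θ)) = q ^ 2 * (q ^ 2 + 1 - 2 * q * Real.cos (2 * θ)) := by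
      linear_combination q ^ 2 * h2
    rw [hden]
    field_simp
    ring
  have hIntg : IntervalIntegrable (fun θ : ℝ => (circleMap 0 1 θ) ^ k / ((q : ℂ) ^ 2 - q * (circleMap 0 1 θ) ^ 2)) volume 0 (2 * Real.pi) := by
    apply Continuous.intervalIntegrable
    apply Continuous.div
    · exact (continuous_circleMap 0 1).pow k
    · exact continuous_const.sub (continuous_const.mul ((continuous_circleMap 0 1).pow 2))
    · intro θ
      apply hnz
      simp [circleMap]
  simp_rw [hpt]
  rw [ContinuousLinearMap.intervalIntegral_comp_comm _ hIntg]
  have : (∫ θ in (0:ℝ)..(2 * Real.pi), (circleMap 0 1 θ) ^ k / ((q : ℂ) ^ 2 - q * (circleMap 0 1 θ) ^ 2)) =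
     (2 * Real.pi) * ((0:ℂ) ^ k / ((q : ℂ) ^ 2 - q * 0 ^ 2)) := by
    rw [← hav, Complex.real_smul]
    have : (Real.pi : ℂ) ≠ 0 := by exact_mod_cast Real.pi_ne_zero
    push_cast
    field_simp
  rw [this]
  by_cases hk : k = 0
  · subst hk
    simp only [pow_zero, if_true]
    have : (2 * (Real.pi : ℂ)) * (1 / ((q : ℂ) ^ 2 - q * 0 ^ 2)) = ((2 * Real.pi / q ^ 2 : ℝ) : ℂ) := by
      push_cast; ring
    rw [this]; exact Complex.ofReal_re _
  · simp [hk]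

theorem integral_half {f : ℝ → ℝ} (hf : Continuous f) (h : ∀ x, f (2 * Real.pi - x) = f x) :
    ∫ θ in (0:ℝ)..Real.pi, f θ = (∫ θ in (0:ℝ)..(2 * Real.pi), f θ) / 2 := by
  have h1 : ∫ θ in (0:ℝ)..(2 * Real.pi), f θ = (∫ θ in (0:ℝ)..Real.pi, f θ) + ∫ θ in Real.pi..(2 * Real.pi), f θ :=
    (intervalIntegral.integral_add_adjacent_intervals (hf.intervalIntegrable _ _) (hf.intervalIntegrable _ _)).symm
  have h2 : ∫ θ in Real.pi..(2 * Real.pi), f θ = ∫ θ in (0:ℝ)..Real.pi, f θ := by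
    have := intervalIntegral.integral_comp_sub_left (a := 0) (b := Real.pi) f (2 * Real.pi)
    simp_rw [h] at this
    rw [this]; congr 1 <;> ring
  rw [h1, h2]; ring

theorem km_J_half {q : ℝ} (hq : 1 < q) (k : ℕ) :
    ∫ θ in (0:ℝ)..Real.pi, (Real.cos (k * θ) - q⁻¹ * Real.cos ((k - 2) * θ)) /
      (q ^ 2 + 1 - 2 * q * Real.cos (2 * θ)) = if k = 0 then Real.pi / q ^ 2 else 0 := by
  rw [integral_half, km_J hq]
  · split_ifs <;> ring
  · apply Continuous.div (by fun_prop) (by fun_prop)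
    intro x; exact (km_den_pos hq _).ne'
  · intro x
    have e1 : Real.cos (k * (2 * Real.pi - x)) = Real.cos (k * x) := by
      rw [mul_sub, Real.cos_nat_mul_two_pi_sub]
    have e2 : Real.cos ((k - 2) * (2 * Real.pi - x)) = Real.cos ((k - 2) * x) := by
      have : ((k:ℝ) - 2) * (2 * Real.pi - x) = ((k - 2 : ℤ) : ℝ) * (2 * Real.pi) - (k-2) * x := by push_cast; ring
      rw [this, Real.cos_int_mul_two_pi_sub]
    have e3 : Real.cos (2 * (2 * Real.pi - x)) = Real.cos (2 * x) := by
      have := Real.cos_nat_mul_two_pi_sub (2 * x) 2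
      rw [← this]; congr 1; push_cast; ring
    rw [e1, e2, e3]

theorem kp_sin (d : ℕ) (hd : 2 ≤ d) (θ : ℝ) (k : ℕ) :
    Real.sin θ * (kp d (k+1)).eval (2 * Real.sqrt (2 * d - 1) * Real.cos θ) =
      Real.sqrt (2 * d - 1) ^ (k + 1) * (Real.sin ((k + 2) * θ) - (2 * (d:ℝ) - 1)⁻¹ * Real.sin (k * θ)) := by
  have hd' : (2:ℝ) ≤ d := by exact_mod_cast hd
  set q : ℝ := 2 * d - 1 with hq
  have hq1 : q ≠ 0 := by rw [hq]; linarith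
  have hs : Real.sqrt q ^ 2 = q := Real.sq_sqrt (by rw [hq]; linarith)
  set s := Real.sqrt q
  have hd2 : 2 * (d:ℝ) = q + 1 := by rw [hq]; ring
  have rec1 : ∀ m : ℝ, 2 * Real.cos θ * Real.sin (m * θ) = Real.sin ((m+1) * θ) + Real.sin ((m-1)*θ) := by
    intro m
    rw [add_mul, sub_mul, one_mul, Real.sin_add, Real.sin_sub]; ring
  induction k using Nat.strong_induction_on with
  | _ k ih =>
    match k with
    | 0 => 
      simp [kp, Real.sin_two_mul]; ring
    | 1 =>
      simp only [kp, eval_sub, eval_mul, eval_X, eval_C]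
      rw [hd2]
      have h1 := rec1 2
      have h2 := rec1 1
      norm_num at h1 h2
      norm_num
      have h5 : ∀ x y : ℝ, q * (x - q⁻¹ * y) = q * x - y := by intro x y; field_simp
      rw [hs, h5]
      have h4 : Real.sin (3 * θ) = 2 * Real.cos θ * (2 * Real.cos θ * Real.sin θ) - Real.sin θ := by
        rw [h2, h1]; ring
      rw [h4]
      linear_combination Real.sin θ * 4 * Real.cos θ ^ 2 * hs
    | (k+2) =>
      have i1 := ih (k+1) (by omega)
      have i0 := ih k (by omega)
      simp only [kp, eval_sub, eval_mul, eval_X, eval_C]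
      have e : Real.sin θ * (2 * s * Real.cos θ * (kp d (k+2)).eval (2 * s * Real.cos θ) - q * (kp d (k+1)).eval (2 * s * Real.cos θ))
        = s * (2 * Real.cos θ) * (Real.sin θ * (kp d (k+1+1)).eval (2 * s * Real.cos θ)) - q * (Real.sin θ * (kp d (k+1)).eval (2 * s * Real.cos θ)) := by ring
      rw [e, i1, i0]
      have r1 := rec1 (k + 3)
      have r2 := rec1 (k + 1)
      push_cast
      have a1 : ((k:ℝ) + 1 + 2) = k + 3 := by ring
      have a2 : ((k:ℝ) + 2 + 2) = k + 3 + 1 := by ring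
      have a3 : ((k:ℝ) + 3 - 1) = k + 2 := by ring
      have a4 : ((k:ℝ) + 2) = k + 1 + 1 := by ring
      have a5 : ((k:ℝ) + 1 - 1) = k := by ring
      rw [a3] at r1
      rw [a5] at r2
      rw [a1, a2]
      rw [← a4] at r2
      linear_combination s ^ (k+3) * r1 - s ^ (k + 3) * q⁻¹ * r2 + s ^ (k+1) * (Real.sin ((k + 2) * θ) - q⁻¹ * Real.sin (k * θ)) * hs

theorem km_pos_facts (d : ℕ) (hd : 2 ≤ d) {x : ℝ} (hx : x ^ 2 ≤ 4 * (2 * (d : ℝ) - 1)) :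
    (2 * (d:ℝ) - 2) ^ 2 ≤ (2 * (d : ℝ)) ^ 2 - x ^ 2 := by nlinarith

theorem kmDensity_nonneg (d : ℕ) (hd : 2 ≤ d) (x : ℝ) : 0 ≤ kmDensity d x := by
  unfold kmDensity
  split_ifs with h
  · have := km_pos_facts d hd h
    have h2 : 0 ≤ (2 * (d : ℝ)) ^ 2 - x ^ 2 := le_trans (sq_nonneg _) this
    have := Real.pi_pos
    positivity
  · exact le_rfl

theorem kmDensity_le (d : ℕ) (hd : 2 ≤ d) (x : ℝ) : kmDensity d x ≤ 2 * d * Real.sqrt (4 * (2 * d - 1)) := by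
  unfold kmDensity
  have hd' : (2:ℝ) ≤ d := by exact_mod_cast hd
  split_ifs with h
  · have h1 := km_pos_facts d hd h
    have h2 : 1 ≤ (2 * (d : ℝ)) ^ 2 - x ^ 2 := by nlinarith
    have h3 : 1 ≤ 2 * Real.pi * ((2 * (d : ℝ)) ^ 2 - x ^ 2) := by
      nlinarith [Real.pi_gt_three]
    refine (div_le_self (by positivity) h3).trans ?_
    gcongr
    nlinarith [sq_nonneg x]
  · positivity

theorem kmDensity_measurable (d : ℕ) : Measurable (kmDensity d) := by
  unfold kmDensity
  apply Measurable.ite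
  · exact measurableSet_le (by fun_prop) (by fun_prop)
  · fun_prop
  · fun_prop

theorem km_integral (d : ℕ) (hd : 2 ≤ d) (g : ℝ → ℝ) :
    ∫ x, g x ∂(kestenMcKay d) = ∫ θ in (0:ℝ)..Real.pi,
      (2 * d * (4 * (2 * d - 1)) / (2 * Real.pi)) * ((Real.sin θ * (Real.sin θ * g (2 * Real.sqrt (2 * d - 1) * Real.cos θ))) /
        ((2 * (d:ℝ) - 1) ^ 2 + 1 - 2 * (2 * d - 1) * Real.cos (2 * θ))) := by
  have hd' : (2:ℝ) ≤ d := by exact_mod_cast hd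
  have hd2 : 2 * (d:ℝ) = (2 * d - 1) + 1 := by ring
  obtain ⟨R, hR⟩ : ∃ R, R = 2 * Real.sqrt (2 * (d:ℝ) - 1) := ⟨_, rfl⟩
  rw [← hR]
  have hR2 : R ^ 2 = 4 * (2 * d - 1) := by
    rw [hR, mul_pow, Real.sq_sqrt (by linarith)]; ring
  have hR0 : 0 ≤ R := by rw [hR]; positivity
  unfold kestenMcKay
  rw [integral_withDensity_eq_integral_toReal_smul (kmDensity_measurable d).ennreal_ofReal (by simp)]
  simp_rw [ENNReal.toReal_ofReal (kmDensity_nonneg d hd _), smul_eq_mul]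
  rw [← setIntegral_eq_integral_of_forall_compl_eq_zero (s := Set.Icc (-R) R), integral_Icc_eq_integral_Ioc,
    ← intervalIntegral.integral_of_le (by linarith)]
  · have := intervalIntegral.integral_comp_mul_deriv_of_deriv_nonpos (a := 0) (b := Real.pi) (f := fun θ => R * Real.cos θ) (f' := fun θ => - R * Real.sin θ)
      (g := fun x => kmDensity d x * g x) (by fun_prop) (by
        intro x _
        have := (Real.hasDerivAt_cos x).const_mul R
        rwa [mul_neg, ← neg_mul] at this) (by
        intro x hx
        rw [min_eq_left Real.pi_pos.le, max_eq_right Real.pi_pos.le] at hx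
        have := Real.sin_nonneg_of_mem_Icc ⟨hx.1.le, hx.2.le⟩
        nlinarith)
    simp only [Real.cos_zero, Real.cos_pi, mul_one, mul_neg] at this
    rw [intervalIntegral.integral_symm, ← this, ← intervalIntegral.integral_neg]
    apply intervalIntegral.integral_congr
    intro θ hθ
    rw [Set.uIcc_of_le Real.pi_pos.le] at hθ
    have hs := Real.sin_nonneg_of_mem_Icc hθ
    have hsq : (R * Real.cos θ) ^ 2 ≤ 4 * (2 * (d:ℝ) - 1) := by
      rw [mul_pow, hR2]
      nlinarith [Real.cos_sq_le_one θ]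
    have hsq2 : Real.sqrt (4 * (2 * (d:ℝ) - 1) - (R * Real.cos θ) ^ 2) = R * Real.sin θ := by
      rw [← hR2, ← Real.sqrt_sq (mul_nonneg hR0 hs)]
      congr 1
      linear_combination R ^ 2 * (Real.sin_sq_add_cos_sq θ).symm
    have hden : (2 * (d:ℝ) - 1) ^ 2 + 1 - 2 * (2 * d - 1) * Real.cos (2 * θ) = (2 * (d:ℝ)) ^ 2 - (R * Real.cos θ) ^ 2 := by
      rw [Real.cos_two_mul]; linear_combination (Real.cos θ ^ 2) * hR2
    have hpos : (2 * (d:ℝ)) ^ 2 - (R * Real.cos θ) ^ 2 ≠ 0 := by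
      have := km_pos_facts d hd hsq
      nlinarith
    simp only [Function.comp, kmDensity]
    rw [if_pos hsq, hsq2, hden, ← hR2]
    have := Real.pi_ne_zero
    field_simp
  · intro x hx
    have : ¬ x ^ 2 ≤ 4 * (2 * (d:ℝ) - 1) := by
      intro h
      rw [← hR2] at h
      exact hx (abs_le.1 (abs_le_of_sq_le_sq h hR0))
    simp [kmDensity, this]

theorem km_kp (d : ℕ) (hd : 2 ≤ d) (k : ℕ) :
    ∫ x, (kp d k).eval x ∂(kestenMcKay d) = if k = 0 then 1 else 0 := by
  have hd' : (2:ℝ) ≤ d := by exact_mod_cast hd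
  rw [km_integral d hd, intervalIntegral.integral_const_mul]
  have hJ := km_J_half (q := 2 * (d:ℝ) - 1) (by linarith)
  have hI : ∀ k : ℕ, IntervalIntegrable (fun θ : ℝ => (Real.cos (k * θ) - (2 * (d:ℝ) - 1)⁻¹ * Real.cos ((k - 2) * θ)) /
      ((2 * (d:ℝ) - 1) ^ 2 + 1 - 2 * (2 * (d:ℝ) - 1) * Real.cos (2 * θ))) volume 0 Real.pi := by
    intro k
    apply Continuous.intervalIntegrable
    apply Continuous.div (by fun_prop) (by fun_prop)
    intro x; exact (km_den_pos (by linarith) _).ne'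
  have hd2 : 2 * (d:ℝ) = (2 * d - 1) + 1 := by ring
  have hq : 1 < 2 * (d:ℝ) - 1 := by linarith
  match k with
  | 0 =>
    set q := 2 * (d:ℝ) - 1
    have hq1 : q + 1 ≠ 0 := by linarith
    have hq0 : q ≠ 0 := by linarith
    have e : ∀ θ : ℝ, (Real.sin θ * (Real.sin θ * (kp d 0).eval (2 * Real.sqrt q * Real.cos θ))) /
        (q ^ 2 + 1 - 2 * q * Real.cos (2 * θ)) = (q / (q + 1) / 2) * 
        ((Real.cos ((0:ℕ) * θ) - q⁻¹ * Real.cos (((0:ℕ) - 2) * θ)) / (q ^ 2 + 1 - 2 * q * Real.cos (2 * θ))) +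
        (1 / (q + 1) / 2 - 1 / 2) * ((Real.cos ((2:ℕ) * θ) - q⁻¹ * Real.cos (((2:ℕ) - 2) * θ)) / (q ^ 2 + 1 - 2 * q * Real.cos (2 * θ))) := by
      intro θ
      have hp := km_den_pos hq (2 * θ)
      have : Real.sin θ * Real.sin θ = (1 - Real.cos (2 * θ)) / 2 := by
        rw [Real.cos_two_mul, ← pow_two, Real.sin_sq]; ring
      simp only [kp, eval_one, mul_one, this]
      simp only [Nat.cast_zero, Nat.cast_ofNat, zero_mul, zero_sub, sub_self, neg_mul, Real.cos_neg, Real.cos_zero]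
      field_simp
      ring
    simp_rw [e]
    rw [intervalIntegral.integral_add ((hI 0).const_mul _) ((hI 2).const_mul _), intervalIntegral.integral_const_mul,
      intervalIntegral.integral_const_mul, hJ, hJ, hd2]
    simp only [if_true]
    have := Real.pi_ne_zero
    field_simp
    norm_num
  | (k+1) =>
    have hks := fun θ => kp_sin d hd θ k
    set q := 2 * (d:ℝ) - 1
    have e : ∀ θ : ℝ, (Real.sin θ * (Real.sin θ * (kp d (k+1)).eval (2 * Real.sqrt q * Real.cos θ))) /
        (q ^ 2 + 1 - 2 * q * Real.cos (2 * θ)) = (Real.sqrt q ^ (k+1) / 2) * 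
        ((Real.cos ((k+1:ℕ) * θ) - q⁻¹ * Real.cos (((k+1:ℕ) - 2) * θ)) / (q ^ 2 + 1 - 2 * q * Real.cos (2 * θ))) -
        (Real.sqrt q ^ (k+1) / 2) * ((Real.cos ((k+3:ℕ) * θ) - q⁻¹ * Real.cos (((k+3:ℕ) - 2) * θ)) / (q ^ 2 + 1 - 2 * q * Real.cos (2 * θ))) := by
      intro θ
      rw [hks]
      have b : ∀ m : ℝ, Real.sin θ * Real.sin (m * θ) = (Real.cos ((m - 1) * θ) - Real.cos ((m+1) * θ)) / 2 := by
        intro m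
        rw [add_mul, sub_mul, one_mul, Real.cos_add, Real.cos_sub]; ring
      have b1 := b (k + 2)
      have b2 := b k
      have a1 : ((k + 1 : ℕ) : ℝ) = k + 1 := by push_cast; ring
      have a2 : ((k + 3 : ℕ) : ℝ) = k + 2 + 1 := by push_cast; ring
      have a3 : (k:ℝ) + 2 + 1 - 2 = k + 1 := by ring
      have a4 : (k:ℝ) + 1 - 2 = k - 1 := by ring
      have a5 : (k:ℝ) + 2 - 1 = k + 1 := by ring
      rw [a1, a2, a3, a4]
      rw [a5] at b1
      have : Real.sin θ * (Real.sqrt q ^ (k + 1) * (Real.sin ((k + 2) * θ) - q⁻¹ * Real.sin (k * θ))) =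
         Real.sqrt q ^ (k + 1) * (Real.sin θ * Real.sin ((k + 2) * θ) - q⁻¹ * (Real.sin θ * Real.sin (k * θ))) := by ring
      rw [this, b1, b2]
      ring
    simp_rw [e]
    rw [intervalIntegral.integral_sub ((hI (k+1)).const_mul _) ((hI (k+3)).const_mul _), intervalIntegral.integral_const_mul,
      intervalIntegral.integral_const_mul, hJ, hJ]
    simp

theorem km_prob (d : ℕ) (hd : 2 ≤ d) : IsProbabilityMeasure (kestenMcKay d) := by
  have h := km_kp d hd 0
  simp only [kp, eval_one, integral_const, smul_eq_mul, mul_one, if_true, measureReal_def] at h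
  exact ⟨(ENNReal.toReal_eq_one_iff _).1 h⟩

theorem km_support (d : ℕ) (hd : 2 ≤ d) : ∀ᵐ x : ℝ ∂(kestenMcKay d), |x| ≤ 2 * (d : ℝ) := by
  have hd' : (2:ℝ) ≤ d := by exact_mod_cast hd
  unfold kestenMcKay
  rw [ae_withDensity_iff (kmDensity_measurable d).ennreal_ofReal]
  refine Filter.Eventually.of_forall fun x hx => ?_
  by_contra h
  apply hx
  have : ¬ x ^ 2 ≤ 4 * (2 * (d:ℝ) - 1) := by
    intro h2
    apply h
    apply abs_le_of_sq_le_sq (by nlinarith) (by positivity)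
  simp [kmDensity, this]

theorem km_Icc_le (d : ℕ) (hd : 2 ≤ d) (a b : ℝ) (hab : a ≤ b) :
    (kestenMcKay d).real (Set.Icc a b) ≤ 2 * d * Real.sqrt (4 * (2 * d - 1)) * (b - a) := by
  have : kestenMcKay d (Set.Icc a b) ≤ ENNReal.ofReal (2 * d * Real.sqrt (4 * (2 * d - 1)) * (b - a)) := by
    unfold kestenMcKay
    rw [withDensity_apply _ measurableSet_Icc]
    calc _ ≤ ∫⁻ x in Set.Icc a b, ENNReal.ofReal (2 * d * Real.sqrt (4 * (2 * d - 1))) :=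
          lintegral_mono fun x => ENNReal.ofReal_le_ofReal (kmDensity_le d hd x)
      _ = _ := by
        rw [setLIntegral_const, Real.volume_Icc, ← ENNReal.ofReal_mul (by positivity)]
  exact ENNReal.toReal_le_of_le_ofReal (mul_nonneg (by positivity) (by linarith)) this

theorem km_poly_integrable (d : ℕ) (hd : 2 ≤ d) {f : ℝ → ℝ} (hf : Continuous f) :
    Integrable f (kestenMcKay d) := by
  have := km_prob d hd
  obtain ⟨M, hM⟩ := (isCompact_Icc (a := -(2 * (d:ℝ))) (b := 2 * d)).exists_bound_of_continuousOn hf.continuousOn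
  refine Integrable.of_bound hf.aestronglyMeasurable M ?_
  filter_upwards [km_support d hd] with x hx
  exact hM x (abs_le.1 hx)

end Part_P2

section Part_P3
open Polynomial MeasureTheory
/-- Piecewise linear cutoff. -/
noncomputable def cutoff (h s x : ℝ) : ℝ := max 0 (min 1 ((s + h - x) / h))

theorem cutoff_cont (h s : ℝ) : Continuous (cutoff h s) := by unfold cutoff; fun_prop

theorem cutoff_nonneg (h s x : ℝ) : 0 ≤ cutoff h s x := le_max_left _ _
theorem cutoff_le_one (h s x : ℝ) : cutoff h s x ≤ 1 := max_le zero_le_one (min_le_left _ _)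
theorem cutoff_eq_one {h s x : ℝ} (hh : 0 < h) (hx : x ≤ s) : cutoff h s x = 1 := by
  have : 1 ≤ (s + h - x) / h := by rw [le_div_iff₀ hh]; linarith
  simp [cutoff, this]
theorem cutoff_eq_zero {h s x : ℝ} (hh : 0 < h) (hx : s + h ≤ x) : cutoff h s x = 0 := by
  have : (s + h - x) / h ≤ 0 := div_nonpos_of_nonpos_of_nonneg (by linarith) hh.le
  simp [cutoff, this]

theorem cutoff_integrable (μ : Measure ℝ) [IsProbabilityMeasure μ] (h s : ℝ) : Integrable (cutoff h s) μ := by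
  refine Integrable.of_bound (cutoff_cont h s).aestronglyMeasurable 1 (Filter.Eventually.of_forall fun x => ?_)
  rw [Real.norm_eq_abs, abs_of_nonneg (cutoff_nonneg _ _ _)]
  exact cutoff_le_one _ _ _

theorem le_cutoff (μ : Measure ℝ) [IsProbabilityMeasure μ] {h s t : ℝ} (hh : 0 < h) (ht : t ≤ s) :
    μ.real (Set.Iic t) ≤ ∫ x, cutoff h s x ∂μ := by
  rw [← integral_indicator_one measurableSet_Iic]
  refine integral_mono (IntegrableOn.integrable_indicator (integrable_const _).integrableOn measurableSet_Iic) (cutoff_integrable μ h s) fun x => ?_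
  by_cases hx : x ≤ t
  · rw [cutoff_eq_one hh (hx.trans ht)]; simp [hx]
  · simp [hx, cutoff_nonneg]

theorem cutoff_le_Iic (μ : Measure ℝ) [IsProbabilityMeasure μ] {h s t : ℝ} (hh : 0 < h) (ht : s + h ≤ t) :
    ∫ x, cutoff h s x ∂μ ≤ μ.real (Set.Iio t) := by
  rw [← integral_indicator_one measurableSet_Iio]
  refine integral_mono (cutoff_integrable μ h s) (IntegrableOn.integrable_indicator (integrable_const _).integrableOn measurableSet_Iio) fun x => ?_
  by_cases hx : x < t
  · simp [hx, cutoff_le_one]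
  · rw [cutoff_eq_zero hh (ht.trans (not_lt.1 hx))]; simp [hx]

theorem poly_close (μ : Measure ℝ) [IsProbabilityMeasure μ] {R η : ℝ} (hμ : ∀ᵐ x : ℝ ∂μ, |x| ≤ R) 
    {f : ℝ → ℝ} (hf : Continuous f) (P : ℝ[X]) (hP : ∀ x, |x| ≤ R → |P.eval x - f x| ≤ η) :
    |∫ x, P.eval x ∂μ - ∫ x, f x ∂μ| ≤ η := by
  have hIntg : ∀ g : ℝ → ℝ, Continuous g → Integrable g μ := by
    intro g hg
    obtain ⟨M, hM⟩ := (isCompact_Icc (a := -R) (b := R)).exists_bound_of_continuousOn hg.continuousOn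
    refine Integrable.of_bound hg.aestronglyMeasurable M ?_
    filter_upwards [hμ] with x hx
    exact hM x (abs_le.1 hx)
  rw [← integral_sub (hIntg _ P.continuous) (hIntg _ hf)]
  have := norm_integral_le_of_norm_le_const (μ := μ) (f := fun x => P.eval x - f x) (C := η) (by
    filter_upwards [hμ] with x hx
    exact hP x hx)
  simpa using this

theorem km_approx (d : ℕ) (hd : 2 ≤ d) (ε : ℝ) (hε : 0 < ε) :
    ∃ (T : Finset ℝ[X]) (δ : ℝ), 0 < δ ∧ ∀ μ : Measure ℝ, IsProbabilityMeasure μ →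
      (∀ᵐ x : ℝ ∂μ, |x| ≤ 2 * (d:ℝ)) →
      (∀ P ∈ T, |∫ x, P.eval x ∂μ - ∫ x, P.eval x ∂(kestenMcKay d)| ≤ δ) →
      discrepancy μ (kestenMcKay d) ≤ ε := by
  have hν := km_prob d hd
  have hνs := km_support d hd
  have hK := km_Icc_le d hd
  set ν := kestenMcKay d
  set K := 2 * d * Real.sqrt (4 * (2 * d - 1))
  have hK0 : 0 ≤ K := by positivity
  set R : ℝ := 2 * d
  set h := ε / (8 * (K + 1))
  have hh : 0 < h := by positivity
  set η := ε / 12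
  have hη : 0 < η := by positivity
  have hKh : 4 * K * h + 6 * η ≤ ε := by
    have : 4 * K * h ≤ ε / 2 := by
      have : 4 * K * h = (ε / 2) * (K / (K + 1)) := by
        simp only [h]; field_simp; ring
      rw [this]
      apply mul_le_of_le_one_right (by positivity)
      rw [div_le_one (by positivity)]; linarith
    have : 6 * η = ε / 2 := by simp only [η]; ring
    linarith
  have hex : ∀ j : ℤ, ∃ P : ℝ[X], ∀ x, |x| ≤ R → |P.eval x - cutoff h (j * h) x| ≤ η := by
    intro j
    obtain ⟨P, hP⟩ := exists_polynomial_near_of_continuousOn (-R) R (cutoff h (j * h)) (cutoff_cont _ _).continuousOn η hη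
    exact ⟨P, fun x hx => (hP x (abs_le.1 hx)).le⟩
  choose P hP using hex
  classical
  refine ⟨(Finset.Icc (⌊-R / h⌋ - 1) (⌊R / h⌋ + 1)).image P, η, hη, ?_⟩
  intro μ hμ hμs hT
  have hclose : ∀ j ∈ Finset.Icc (⌊-R / h⌋ - 1) (⌊R / h⌋ + 1),
      |∫ x, cutoff h (j * h) x ∂μ - ∫ x, cutoff h (j * h) x ∂ν| ≤ 3 * η := by
    intro j hj
    have h1 := hT _ (Finset.mem_image_of_mem P hj)
    have h2 := poly_close μ hμs (cutoff_cont _ _) _ (hP j)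
    have h3 := poly_close ν hνs (cutoff_cont _ _) _ (hP j)
    rw [abs_le] at *
    constructor <;> linarith [h1.1, h1.2, h2.1, h2.2, h3.1, h3.2]
  have hmain : ∀ t : ℝ, ν.real (Set.Iic t) - (2 * K * h + 3 * η) ≤ μ.real (Set.Iio t) ∧
      μ.real (Set.Iic t) ≤ ν.real (Set.Iio t) + (2 * K * h + 3 * η) := by
    intro t
    have hρ : 0 ≤ 2 * K * h + 3 * η := by positivity
    have hz : ∀ κ : Measure ℝ, (∀ᵐ x : ℝ ∂κ, |x| ≤ R) → t < -R → κ.real (Set.Iic t) = 0 := by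
      intro κ hκ ht
      rw [measureReal_def, (measure_eq_zero_iff_ae_notMem).2, ENNReal.toReal_zero]
      filter_upwards [hκ] with x hx
      simp only [Set.mem_Iic, not_le]
      linarith [(abs_le.1 hx).1]
    have ho : ∀ κ : Measure ℝ, IsProbabilityMeasure κ → (∀ᵐ x : ℝ ∂κ, |x| ≤ R) → R < t → κ.real (Set.Iio t) = 1 := by
      intro κ _ hκ ht
      rw [measureReal_def, (mem_ae_iff_prob_eq_one measurableSet_Iio).1, ENNReal.toReal_one]
      filter_upwards [hκ] with x hx
      simp only [Set.mem_Iio]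
      linarith [(abs_le.1 hx).2]
    by_cases h1 : t < -R
    · rw [hz μ hμs h1, hz ν hνs h1]
      exact ⟨by linarith [measureReal_nonneg (μ := μ) (s := Set.Iio t)], by linarith [measureReal_nonneg (μ := ν) (s := Set.Iio t)]⟩
    by_cases h2 : R < t
    · rw [ho μ hμ hμs h2, ho ν hν hνs h2]
      exact ⟨by linarith [measureReal_le_one (μ := ν) (s := Set.Iic t)], by linarith [measureReal_le_one (μ := μ) (s := Set.Iic t)]⟩
    push Not at h1 h2
    set j := ⌊t / h⌋
    have j1 : ⌊-R / h⌋ ≤ j := Int.floor_le_floor (by gcongr)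
    have j2 : j ≤ ⌊R / h⌋ := Int.floor_le_floor (by gcongr)
    have t1 : j * h ≤ t := by
      have := Int.floor_le (t / h)
      rwa [le_div_iff₀ hh] at this
    have t2 : t < (j + 1) * h := by
      have := Int.lt_floor_add_one (t / h)
      rwa [div_lt_iff₀ hh] at this
    have c1 := hclose (j - 1) (by rw [Finset.mem_Icc]; omega)
    have c2 := hclose (j + 1) (by rw [Finset.mem_Icc]; omega)
    push_cast at c1 c2
    rw [abs_le] at c1 c2
    constructor
    · have a1 := cutoff_le_Iic μ (s := (j - 1) * h) (t := t) hh (by linarith)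
      have a2 := le_cutoff ν (t := (j - 1) * h) hh le_rfl
      have a3 : ν.real (Set.Iic t) ≤ ν.real (Set.Iic ((j - 1) * h)) + ν.real (Set.Icc ((j - 1) * h) t) := by
        refine (measureReal_mono ?_).trans (measureReal_union_le _ _)
        intro x hx
        by_cases hx2 : x ≤ (j - 1) * h
        · exact Or.inl hx2
        · exact Or.inr ⟨(not_le.1 hx2).le, hx⟩
      have a4 := hK ((j - 1) * h) t (by linarith)
      have a5 : K * (t - (j - 1) * h) ≤ 2 * K * h := by nlinarith
      linarith [c1.1]
    · have a1 := cutoff_le_Iic ν (s := (j + 1) * h) (t := (j + 2) * h) hh (by linarith)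
      have a2 := le_cutoff μ (s := (j + 1) * h) (t := t) hh t2.le
      have a3 : ν.real (Set.Iio ((j + 2) * h)) ≤ ν.real (Set.Iio t) + ν.real (Set.Icc t ((j + 2) * h)) := by
        refine (measureReal_mono ?_).trans (measureReal_union_le _ _)
        intro x hx
        by_cases hx2 : x < t
        · exact Or.inl hx2
        · exact Or.inr ⟨not_lt.1 hx2, le_of_lt hx⟩
      have a4 := hK t ((j + 2) * h) (by linarith)
      have a5 : K * ((j + 2) * h - t) ≤ 2 * K * h := by nlinarith
      linarith [c2.2]
  unfold discrepancy
  apply Real.sSup_le _ hε.le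
  rintro r ⟨a, b, hab, rfl⟩
  have hI : ∀ κ : Measure ℝ, IsProbabilityMeasure κ → (κ (Set.Icc a b)).toReal = κ.real (Set.Iic b) - κ.real (Set.Iio a) := by
    intro κ _
    have : Set.Iic b = Set.Iio a ∪ Set.Icc a b := (Set.Iio_union_Icc_eq_Iic hab).symm
    rw [this, measureReal_union _ measurableSet_Icc, ← measureReal_def]
    · ring
    · rw [Set.disjoint_left]
      intro x hx hx2
      exact absurd hx2.1 (not_le.2 hx)
  have hio : ∀ κ : Measure ℝ, IsProbabilityMeasure κ → ∀ t, κ.real (Set.Iio t) ≤ κ.real (Set.Iic t) := by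
    intro κ _ t
    exact measureReal_mono Set.Iio_subset_Iic_self
  rw [hI μ hμ, hI ν hν]
  obtain ⟨a1, a2⟩ := hmain a
  obtain ⟨b1, b2⟩ := hmain b
  have := hio μ hμ a
  have := hio μ hμ b
  have := hio ν hν a
  have := hio ν hν b
  rw [abs_le]
  constructor <;> linarith

end Part_P3

section Part_P4
open Polynomial MeasureTheory
section P4

theorem sl_val_mul {ι F : Type*} [Fintype ι] [DecidableEq ι] [CommRing F]
    (A B : Matrix.SpecialLinearGroup ι F) : (A * B).1 = A.1 * B.1 := rfl

theorem sl_val_trans {ι F : Type*} [Fintype ι] [DecidableEq ι] [Field F] {i j : ι} (hij : i ≠ j)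
    (c : F) : (Matrix.SpecialLinearGroup.transvection hij c).1 = 1 + Matrix.single i j c := rfl

open Matrix Matrix.SpecialLinearGroup in
theorem diag2n_eq {ι F : Type*} [Fintype ι] [DecidableEq ι] [Field F] {i j : ι} (hij : i ≠ j)
    (c : F) (hc : c ≠ 0) :
    diag2n hij c hc = transvection hij c * transvection hij.symm (-c⁻¹) * transvection hij c
      * transvection hij (-1) * transvection hij.symm 1 * transvection hij (-1) := by
  apply Subtype.ext
  simp only [sl_val_mul, sl_val_trans, diag2n_coe, mul_add, add_mul, mul_one,
    one_mul, single_mul_single_same, single_mul_single_of_ne _ _ _ _ hij,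
    single_mul_single_of_ne _ _ _ _ hij.symm, add_zero, zero_add, mul_neg, neg_mul, inv_mul_cancel₀ hc,
    mul_inv_cancel₀ hc, neg_neg, zero_mul]
  ext a b
  simp only [Matrix.add_apply, single_apply, diagonal_apply, Matrix.one_apply]
  split_ifs <;> first | (exfalso; grind) | (field_simp; ring) | grind

open Matrix Matrix.SpecialLinearGroup in
theorem sl_trivial {n : ℕ} (hn : 3 ≤ n) {F H : Type*} [Field F] [Group H]
    (f : SpecialLinearGroup (Fin n) F →* H) (i0 : Fin n)
    (h0 : ∀ (j : Fin n) (hj : i0 ≠ j) (c : F), f (transvection hj c) = 1) : f = 1 := by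
  have comm : ∀ (i j k : Fin n) (hij : i ≠ j) (hjk : j ≠ k) (hik : i ≠ k) (a b : F),
      transvection hij a * transvection hjk b * transvection hij (-a) * transvection hjk (-b)
        = transvection hik (a * b) := by
    intro i j k hij hjk hik a b
    apply Subtype.ext
    simp only [sl_val_mul, sl_val_trans, mul_add, add_mul, mul_one,
      one_mul, single_mul_single_same, single_mul_single_of_ne _ _ _ _ hij,
      single_mul_single_of_ne _ _ _ _ hij.symm, single_mul_single_of_ne _ _ _ _ hik.symm,
      single_mul_single_of_ne _ _ _ _ hik,
      single_mul_single_of_ne _ _ _ _ hjk.symm, add_zero, zero_add, mul_neg, neg_mul,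
      neg_neg, zero_mul]
    ext a b
    simp only [Matrix.add_apply, single_apply, diagonal_apply, Matrix.one_apply]
    split_ifs <;> first | (exfalso; grind) | (field_simp; ring) | grind
  have h1 : ∀ (i j : Fin n) (hij : i ≠ j) (hj0 : i0 ≠ j) (c : F), f (transvection hij c) = 1 := by
    intro i j hij hj0 c
    by_cases hi : i = i0
    · subst hi; exact h0 j hij c
    · have := congrArg f (comm i i0 j hi hj0 hij 1 c)
      simp only [map_mul, h0, mul_one, one_mul] at this
      rw [← this, ← map_mul, transvection_mul_neg, map_one]
  have h2 : ∀ (i j : Fin n) (hij : i ≠ j) (c : F), f (transvection hij c) = 1 := by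
    intro i j hij c
    by_cases hj : i0 = j
    · obtain ⟨k, hk1, hk2⟩ : ∃ k : Fin n, k ≠ i ∧ k ≠ j := by
        by_contra! hcon
        have : (Finset.univ : Finset (Fin n)) ⊆ {i, j} := by
          intro k _
          by_cases hk : k = i
          · simp [hk]
          · simp [hcon k hk]
        have := Finset.card_le_card this
        have h2 := Finset.card_le_two (a := i) (b := j)
        simp at this
        omega
      have := congrArg f (comm i k j hk1.symm hk2 hij c 1)
      simp only [map_mul, h1 i k hk1.symm (by rw [hj]; exact hk2.symm), mul_one, one_mul] at this
      rw [← this, ← map_mul, transvection_mul_neg, map_one]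
    · exact h1 i j hij hj c
  ext M
  haveI : Nontrivial (Fin n) := Fin.nontrivial_iff_two_le.2 (by omega)
  refine diagonal_transvection_induction' (fun g => f g = 1) M ?_ ?_ ?_
  · intro i j hij c hc
    show f _ = 1
    rw [diag2n_eq]
    simp [h2]
  · exact h2
  · intro A B hA hB
    show f _ = 1
    rw [map_mul, hA, hB, one_mul]

/-- matrix representation as a `Representation`. -/
noncomputable def repOf {G : Type*} [Group G] {k : ℕ} (φ : G →* Matrix (Fin k) (Fin k) ℂ) :
    Representation ℂ G (Fin k → ℂ) :=
  (Matrix.toLinAlgEquiv' (R := ℂ) (n := Fin k)).toAlgHom.toMonoidHom.comp φ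

theorem repOf_apply {G : Type*} [Group G] {k : ℕ} (φ : G →* Matrix (Fin k) (Fin k) ℂ) (g : G)
    (v : Fin k → ℂ) : repOf φ g v = (φ g).mulVec v := by
  simp [repOf]

theorem repOf_char {G : Type*} [Group G] {k : ℕ} (φ : G →* Matrix (Fin k) (Fin k) ℂ) (g : G) :
    (repOf φ).character g = (φ g).trace := by
  have : repOf φ g = Matrix.toLin' (φ g) := by
    ext v; simp [repOf_apply]
  rw [Representation.character, this, LinearMap.trace_eq_matrix_trace ℂ (Pi.basisFun ℂ (Fin k))]
  congr 1
  rw [← Matrix.toLin_eq_toLin', LinearMap.toMatrix_toLin]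

/-- average of trace is dimension of invariants. -/
theorem dim_lemma {V : Type*} [AddCommGroup V] [Fintype V] {k : ℕ}
    (φ : Multiplicative V →* Matrix (Fin k) (Fin k) ℂ) (ψ : AddChar V ℂ) (hψ : ψ ≠ 1) (c : ℂ)
    (hc : ∀ a : V, a ≠ 0 → (φ (Multiplicative.ofAdd a)).trace = c) :
    (∀ a, φ a = 1) ∨ Fintype.card V ≤ k + 1 := by
  classical
  haveI : Invertible (Nat.card (Multiplicative V) : ℂ) := invertibleOfNonzero (by
    simp)
  let φ' : Multiplicative V →* Matrix (Fin k) (Fin k) ℂ :=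
    { toFun := fun a => ψ (Multiplicative.toAdd a) • φ a
      map_one' := by simp
      map_mul' := by
        intro a b
        rw [toAdd_mul, AddChar.map_add_eq_mul, map_mul, Matrix.smul_mul, Matrix.mul_smul,
          smul_smul] }
  have h1 := Representation.card_inv_mul_sum_char_eq_finrank (repOf φ)
  have h2 := Representation.card_inv_mul_sum_char_eq_finrank (repOf φ')
  set r := Module.finrank ℂ (repOf φ).invariants with hr
  set s := Module.finrank ℂ (repOf φ').invariants with hs
  have hsum0 : ∑ a : V, ψ a = 0 := AddChar.sum_eq_zero_of_ne_one hψ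
  have htr : ∀ a : V, (φ (Multiplicative.ofAdd a)).trace = c + if a = 0 then (k:ℂ) - c else 0 := by
    intro a
    by_cases ha : a = 0
    · subst ha; simp
    · simp [ha, hc a ha]
  have e1 : ∑ g, (repOf φ).character g = Fintype.card V * c + (k - c) := by
    rw [← Equiv.sum_comp Multiplicative.ofAdd]
    simp_rw [repOf_char, htr, Finset.sum_add_distrib]
    simp
  have e2 : ∑ g, (repOf φ').character g = (k - c) := by
    rw [← Equiv.sum_comp Multiplicative.ofAdd]
    have : ∀ a : V, (repOf φ').character (Multiplicative.ofAdd a) =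
        c * ψ a + if a = 0 then (k:ℂ) - c else 0 := by
      intro a
      rw [repOf_char]
      show (ψ a • φ (Multiplicative.ofAdd a)).trace = _
      rw [Matrix.trace_smul, htr, smul_eq_mul]
      by_cases ha : a = 0
      · subst ha; simp
      · simp [ha, mul_comm]
    simp_rw [this, Finset.sum_add_distrib, ← Finset.mul_sum, hsum0]
    simp
  have hV : (Fintype.card V : ℂ) ≠ 0 := by simp
  have hcard : (Nat.card (Multiplicative V) : ℂ) = Fintype.card V := by
    rw [Nat.card_eq_fintype_card]; simp
  rw [e1, hcard, inv_mul_eq_iff_eq_mul₀ hV] at h1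
  rw [e2, hcard, inv_mul_eq_iff_eq_mul₀ hV] at h2
  have hk : (k : ℂ) + s = r + Fintype.card V * s := by
    have : (Fintype.card V : ℂ) * (k + s) = Fintype.card V * (r + Fintype.card V * s) := by
      linear_combination h1 + ((Fintype.card V : ℂ) - 1) * h2
    exact mul_left_cancel₀ hV this
  have hk' : k + s = r + Fintype.card V * s := by exact_mod_cast hk
  rcases Nat.eq_zero_or_pos s with h | h
  · left
    have hrk : r = k := by rw [h] at hk'; omega
    have htop : (repOf φ).invariants = ⊤ := by
      apply Submodule.eq_top_of_finrank_eq
      rw [← hr, hrk]; simp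
    intro a
    apply Matrix.ext_of_mulVec_single
    intro i
    have : (Pi.single i 1 : Fin k → ℂ) ∈ (repOf φ).invariants := by rw [htop]; trivial
    have := (Representation.mem_invariants _ _).1 this a
    rw [repOf_apply] at this
    rw [this, Matrix.one_mulVec]
  · right
    have : 1 ≤ s := h
    have hV1 : 1 ≤ Fintype.card V := Fintype.card_pos
    nlinarith

end P4

end Part_P4

section Part_P4b
open Polynomial MeasureTheory
section P4b

open Matrix

/-- The elementary unipotent `1 + u ⊗ f` with `f · u = 0`. -/
def tv {n : ℕ} {F : Type*} [Field F] (u f : Fin n → F) (h : f ⬝ᵥ u = 0) :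
    SpecialLinearGroup (Fin n) F :=
  ⟨1 + vecMulVec u f, by
    rw [vecMulVec_eq Unit, det_one_add_replicateCol_mul_replicateRow, h, add_zero]⟩

theorem tv_comm {n : ℕ} {F : Type*} [Field F] (u a b x y : Fin n → F) (hb : b ⬝ᵥ u = 0)
    (hy : y ⬝ᵥ x = 0) (hyu : y ⬝ᵥ u = 0) (ha : a ⬝ᵥ u = 0) (hab : a = b + (b ⬝ᵥ x) • y) :
    tv x y hy * tv u a ha = tv u b hb * tv x y hy := by
  apply Subtype.ext
  show (1 + vecMulVec x y) * (1 + vecMulVec u a) = (1 + vecMulVec u b) * (1 + vecMulVec x y)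
  simp only [mul_add, add_mul, one_mul, mul_one, vecMulVec_mul_vecMulVec, hyu]
  rw [hab]
  simp only [vecMulVec_add, vecMulVec_smul, zero_smul]
  simp
  abel

theorem dot_cons {m : ℕ} {F : Type*} [Field F] (a b : Fin m → F) (s t : F) :
    (Fin.cons s a : Fin (m+1) → F) ⬝ᵥ (Fin.cons t b : Fin (m+1) → F) = s * t + a ⬝ᵥ b := by
  simp [dotProduct, Fin.sum_univ_succ]

theorem dot_e0 {m : ℕ} {F : Type*} [Field F] (a : Fin m → F) :
    (Fin.cons 0 a : Fin (m+1) → F) ⬝ᵥ (Fin.cons 1 0 : Fin (m+1) → F) = 0 := by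
  rw [dot_cons]; simp

/-- first-row unipotent subgroup -/
def rowU {m : ℕ} {F : Type*} [Field F] :
    Multiplicative (Fin m → F) →* SpecialLinearGroup (Fin (m+1)) F where
  toFun a := tv (Fin.cons 1 0) (Fin.cons 0 a.toAdd) (dot_e0 _)
  map_one' := by
    apply Subtype.ext
    show 1 + vecMulVec _ _ = 1
    ext i j
    refine Fin.cases ?_ (fun j => ?_) j <;> simp [vecMulVec_apply]
  map_mul' a b := by
    apply Subtype.ext
    show 1 + vecMulVec _ _ = (1 + vecMulVec _ _) * (1 + vecMulVec _ _)
    simp only [mul_add, add_mul, one_mul, mul_one, vecMulVec_mul_vecMulVec, dot_e0]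
    ext i j
    refine Fin.cases ?_ (fun j => ?_) j <;> simp [vecMulVec_apply, mul_add] 
    ring

/-- class functions are constant on the nontrivial elements. -/
theorem rowU_conj {m : ℕ} (hm : 2 ≤ m) {F : Type*} [Field F] {X : Type*}
    (χ : SpecialLinearGroup (Fin (m+1)) F → X) (hχ : ∀ g h, χ (g * h * g⁻¹) = χ h)
    (a b : Fin m → F) (ha : a ≠ 0) (hb : b ≠ 0) :
    χ (rowU (Multiplicative.ofAdd a)) = χ (rowU (Multiplicative.ofAdd b)) := by
  have key : ∀ a b x : Fin m → F, b ⬝ᵥ x = 1 → a ⬝ᵥ x = 1 →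
      χ (rowU (Multiplicative.ofAdd a)) = χ (rowU (Multiplicative.ofAdd b)) := by
    intro a b x hbx hax
    have hy : (Fin.cons 0 (a - b) : Fin (m+1) → F) ⬝ᵥ (Fin.cons 0 x : Fin (m+1) → F) = 0 := by
      rw [dot_cons, sub_dotProduct, hbx, hax]; simp
    have := tv_comm (Fin.cons 1 0) (Fin.cons 0 a) (Fin.cons 0 b) (Fin.cons 0 x)
      (Fin.cons 0 (a - b)) (dot_e0 b) hy (dot_e0 _) (dot_e0 a) (by
        rw [dot_cons, hbx]
        ext i
        refine Fin.cases ?_ (fun j => ?_) i <;> simp)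
    rw [← hχ (tv _ _ hy) (rowU (Multiplicative.ofAdd a))]
    congr 1
    rw [mul_inv_eq_iff_eq_mul]
    exact this
  have k1 : ∀ (a : Fin m → F) (j l : Fin m), l ≠ j → a l ≠ 0 →
      χ (rowU (Multiplicative.ofAdd a)) = χ (rowU (Multiplicative.ofAdd (Pi.single j 1))) := by
    intro a j l hlj hal
    refine key a _ (Pi.single j 1 + ((1 - a j) / a l) • Pi.single l 1) ?_ ?_
    · simp [hlj, hlj.symm]
    · simp [dotProduct_add, dotProduct_smul]
      field_simp
      ring
  haveI : Nontrivial (Fin m) := Fin.nontrivial_iff_two_le.2 hm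
  have k2 : ∀ (a : Fin m → F) (j : Fin m), a ≠ 0 → 
      χ (rowU (Multiplicative.ofAdd a)) = χ (rowU (Multiplicative.ofAdd (Pi.single j 1))) := by
    intro a j ha
    by_cases h : ∃ l, l ≠ j ∧ a l ≠ 0
    · obtain ⟨l, h1, h2⟩ := h
      exact k1 a j l h1 h2
    · push Not at h
      have haj : a j ≠ 0 := by
        intro h0
        apply ha
        ext l
        by_cases hl : l = j
        · rw [hl, h0]; rfl
        · exact h l hl
      obtain ⟨j', hj'⟩ := exists_ne j
      rw [k1 a j' j hj'.symm haj, k1 (Pi.single j' 1) j j' hj' (by simp)]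
  obtain ⟨j⟩ : Nonempty (Fin m) := inferInstance
  rw [k2 a j ha, k2 b j hb]

theorem exists_addChar (p m : ℕ) [Fact p.Prime] (hm : 1 ≤ m) :
    ∃ ψ : AddChar (Fin m → ZMod p) ℂ, ψ ≠ 1 := by
  obtain ⟨ψ, hψ⟩ := AddChar.exists_apply_ne_zero.2
    (show (Pi.single ⟨0, hm⟩ 1 : Fin m → ZMod p) ≠ 0 by simp)
  refine ⟨ψ, fun h => hψ ?_⟩
  rw [h]; simp

theorem dim_bound {n p k : ℕ} (hn : 3 ≤ n) (hp : p.Prime)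
    (π : SL n p →* Matrix.unitaryGroup (Fin k) ℂ) (hπ : ∃ g, π g ≠ 1) :
    p ^ (n - 1) ≤ k + 1 := by
  haveI : Fact p.Prime := ⟨hp⟩
  obtain ⟨m, rfl⟩ : ∃ m, n = m + 1 := ⟨n - 1, by omega⟩
  obtain ⟨ψ, hψ⟩ := exists_addChar p m (by omega)
  let φ : Multiplicative (Fin m → ZMod p) →* Matrix (Fin k) (Fin k) ℂ :=
    ((Matrix.unitaryGroup (Fin k) ℂ).subtype.comp π).comp rowU
  let χ : SL (m+1) p → ℂ := fun g => (π g : Matrix (Fin k) (Fin k) ℂ).trace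
  have hχ : ∀ g h, χ (g * h * g⁻¹) = χ h := by
    intro g h
    show (π (g * h * g⁻¹) : Matrix (Fin k) (Fin k) ℂ).trace = _
    have : (π (g * h * g⁻¹) : Matrix (Fin k) (Fin k) ℂ) =
      (π (g * h) : Matrix (Fin k) (Fin k) ℂ) * (π (g⁻¹) : Matrix (Fin k) (Fin k) ℂ) := by
      rw [map_mul]; rfl
    rw [this, Matrix.trace_mul_comm]
    have : (π (g⁻¹) : Matrix (Fin k) (Fin k) ℂ) * (π (g * h) : Matrix (Fin k) (Fin k) ℂ) 
      = (π (g⁻¹ * (g * h)) : Matrix (Fin k) (Fin k) ℂ) := by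
      rw [map_mul π g⁻¹]; rfl
    rw [this, inv_mul_cancel_left]
  rcases dim_lemma φ ψ hψ (χ (rowU (Multiplicative.ofAdd (Pi.single ⟨0, by omega⟩ 1)))) (by
    intro a ha
    exact rowU_conj (by omega) χ hχ a _ ha (by simp)) with h | h
  · exfalso
    obtain ⟨g, hg⟩ := hπ
    apply hg
    have : π = 1 := by
      apply sl_trivial hn π 0
      intro j hj c
      obtain ⟨j, rfl⟩ := Fin.exists_succ_eq.2 hj.symm
      have := h (Multiplicative.ofAdd (Pi.single j c))
      apply Subtype.ext
      refine Eq.trans ?_ this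
      show (π _).1 = (π (rowU _)).1
      congr 2
      apply Subtype.ext
      show 1 + single _ _ _ = 1 + vecMulVec _ _
      congr 1
      ext a b
      refine Fin.cases ?_ (fun a => ?_) a <;> refine Fin.cases ?_ (fun b => ?_) b <;>
        simp [vecMulVec_apply, single_apply, Pi.single_apply, eq_comm, Fin.succ_ne_zero]
    rw [this]; rfl
  · simpa [ZMod.card] using h

theorem char_bound {G : Type*} [Group G] [Finite G] {k : ℕ}
    (π : G →* Matrix.unitaryGroup (Fin k) ℂ) (hirr : IsIrreducibleRep π) (hk : 1 ≤ k) (g : G) :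
    ‖(π g : Matrix (Fin k) (Fin k) ℂ).trace‖ ^ 2 ≤ Nat.card {h : G // h * g = g * h} := by
  classical
  haveI := Fintype.ofFinite G
  haveI : Invertible (Nat.card G : ℂ) := invertibleOfNonzero (by simp)
  let φ : G →* Matrix (Fin k) (Fin k) ℂ := (Matrix.unitaryGroup (Fin k) ℂ).subtype.comp π
  haveI : Nonempty (Fin k) := ⟨⟨0, hk⟩⟩
  haveI : (repOf φ).IsIrreducible := by
    haveI : Nontrivial (Subrepresentation (repOf φ)) := by
      refine ⟨⊥, ⊤, fun h => ?_⟩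
      have := congrArg Subrepresentation.toSubmodule h
      exact bot_ne_top this
    refine ⟨fun W => ?_⟩
    rcases hirr W.toSubmodule (fun g v hv => by
      have := W.apply_mem_toSubmodule g hv
      rwa [repOf_apply] at this) with h | h
    · left; exact Subrepresentation.toSubmodule_injective h
    · right; exact Subrepresentation.toSubmodule_injective h
  have h1 := Representation.char_orthonormal (repOf φ) (repOf φ)
  rw [if_pos ⟨Representation.Equiv.refl _⟩] at h1
  have hconj : ∀ g, (repOf φ).character g * (repOf φ).character g⁻¹ =
      ((‖(φ g).trace‖ ^ 2 : ℝ) : ℂ) := by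
    intro g
    rw [repOf_char, repOf_char]
    have : φ g⁻¹ = (φ g)ᴴ := by
      show (π g⁻¹).1 = star (π g).1
      rw [map_inv]; rfl
    rw [this, trace_conjTranspose]
    have := RCLike.mul_conj ((φ g).trace)
    rw [starRingEnd_apply] at this
    rw [this]; push_cast; rfl
  simp_rw [hconj] at h1
  have hN : (Nat.card G : ℂ) ≠ 0 := by simp
  rw [inv_mul_eq_iff_eq_mul₀ hN] at h1
  have h2 : ∑ x, ‖(φ x).trace‖ ^ 2 = Nat.card G := by
    have : (((∑ x, ‖(φ x).trace‖ ^ 2 : ℝ)) : ℂ) = ((Nat.card G : ℝ) : ℂ) := by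
      push_cast at h1 ⊢; rw [h1]; simp
    exact_mod_cast this
  have hcl : ∀ h, ‖(φ (h * g * h⁻¹)).trace‖ = ‖(φ g).trace‖ := by
    intro h; rw [map_mul, trace_mul_comm, ← map_mul, inv_mul_cancel_left]
  have h3 : (Nat.card G : ℝ) * ‖(φ g).trace‖ ^ 2 ≤ Nat.card {h : G // h * g = g * h} * Nat.card G := by
    calc (Nat.card G : ℝ) * ‖(φ g).trace‖ ^ 2 = ∑ h : G, ‖(φ (h * g * h⁻¹)).trace‖ ^ 2 := by
          simp_rw [hcl]; simp
      _ = ∑ x : G, ∑ h with h * g * h⁻¹ = x, ‖(φ (h * g * h⁻¹)).trace‖ ^ 2 := by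
          exact (Finset.sum_fiberwise _ (fun h => h * g * h⁻¹) _).symm
      _ ≤ ∑ x : G, Nat.card {h : G // h * g = g * h} * ‖(φ x).trace‖ ^ 2 := by
          apply Finset.sum_le_sum
          intro x _
          have : ∑ h with h * g * h⁻¹ = x, ‖(φ (h * g * h⁻¹)).trace‖ ^ 2 =
              ((Finset.univ.filter (fun h : G => h * g * h⁻¹ = x)).card : ℝ) * ‖(φ x).trace‖ ^ 2 := by
            rw [Finset.sum_congr rfl (g := fun _ => ‖(φ x).trace‖ ^ 2)]
            · simp
            · intro h hh
              simp at hh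
              rw [hh]
          rw [this]
          apply mul_le_mul_of_nonneg_right _ (by positivity)
          norm_cast
          rcases (Finset.univ.filter (fun h : G => h * g * h⁻¹ = x)).eq_empty_or_nonempty with he | ⟨h0, hh0⟩
          · rw [he]; simp
          · rw [Nat.card_eq_fintype_card, Fintype.card_subtype]
            apply Finset.card_le_card_of_injOn (fun h => h0⁻¹ * h)
            · intro h hh
              simp at hh hh0 ⊢
              have e1 : h * g = x * h := by rw [← hh]; group
              have e2 : h0 * g = x * h0 := by rw [← hh0]; group
              have e3 : g = h0⁻¹ * x * h0 := by rw [mul_assoc, ← e2]; group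
              rw [mul_assoc, e1]
              conv_rhs => rw [e3]
              group
            · intro a _ b _ hab
              simpa using hab
      _ = _ := by rw [← Finset.mul_sum, h2]
  have hG : (0:ℝ) < Nat.card G := by exact_mod_cast Nat.card_pos
  rw [mul_comm] at h3
  exact le_of_mul_le_mul_right h3 hG

end P4b

end Part_P4b

section Part_P5
open Polynomial MeasureTheory
section P5

open Matrix

def ccR {d : ℕ} (x : Fin d × Bool) : ℝ := 2 * (x.1 : ℕ) + if x.2 then 1 else 0

def barL {d : ℕ} (x : Fin d × Bool) : Fin d × Bool := (x.1, !x.2)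

theorem ccR_inj {d : ℕ} {x y : Fin d × Bool} (h : ccR x = ccR y) : x = y := by
  obtain ⟨⟨i, hi⟩, b⟩ := x
  obtain ⟨⟨j, hj⟩, c⟩ := y
  have h' : 2 * i + (if b then 1 else 0) = 2 * j + (if c then 1 else 0) := by
    simp only [ccR] at h
    cases b <;> cases c <;> simp at h ⊢ <;> exact_mod_cast h
  cases b <;> cases c <;> simp at h' ⊢ <;> omega

theorem barL_ne {d : ℕ} (x : Fin d × Bool) : ccR x - ccR (barL x) ≠ 0 := by
  intro h
  have := ccR_inj (sub_eq_zero.1 h)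
  have := congrArg Prod.snd this
  simp [barL] at this

theorem barL_barL {d : ℕ} (x : Fin d × Bool) : barL (barL x) = x := by
  simp [barL]

def uL {d : ℕ} (x : Fin d × Bool) : Fin 2 → ℝ := ![1, ccR x]

noncomputable def fL {d : ℕ} (x : Fin d × Bool) : Fin 2 → ℝ :=
  (ccR x - ccR (barL x))⁻¹ • ![- ccR (barL x), 1]

theorem fL_uL {d : ℕ} (x y : Fin d × Bool) :
    fL x ⬝ᵥ uL y = (ccR x - ccR (barL x))⁻¹ * (ccR y - ccR (barL x)) := by
  simp [fL, uL]; ring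

theorem fL_uL_ne {d : ℕ} (x y : Fin d × Bool) (h : x.1 = y.1 → x.2 = y.2) :
    fL x ⬝ᵥ uL y ≠ 0 := by
  rw [fL_uL]
  apply mul_ne_zero (inv_ne_zero (barL_ne x))
  intro h0
  have := ccR_inj (sub_eq_zero.1 h0)
  rw [this] at h
  simp [barL] at h

noncomputable def mL {d : ℕ} (t : ℝ) (x : Fin d × Bool) : Matrix (Fin 2) (Fin 2) ℝ :=
  vecMulVec (uL x) (fL x) + t • vecMulVec (uL (barL x)) (fL (barL x))

theorem mL_mul {d : ℕ} (t : ℝ) (x : Fin d × Bool) : mL t (barL x) * mL t x = t • 1 := by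
  have h1 := barL_ne x
  have h2 := barL_ne (barL x)
  rw [barL_barL] at h2
  ext i j
  fin_cases i <;> fin_cases j <;>
    simp [mL, Matrix.mul_apply, Fin.sum_univ_two, vecMulVec_apply, uL, fL, barL_barL] <;>
    field_simp <;> ring

theorem mL_det {d : ℕ} (t : ℝ) (x : Fin d × Bool) : (mL t x).det = t := by
  have h1 := barL_ne x
  have h2 := barL_ne (barL x)
  rw [barL_barL] at h2
  rw [det_fin_two]
  simp [mL, vecMulVec_apply, uL, fL, barL_barL]
  field_simp
  ring

noncomputable def wL {d : ℕ} (t : ℝ) (L : List (Fin d × Bool)) : Matrix (Fin 2) (Fin 2) ℝ :=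
  (L.map (mL t)).prod

theorem wL_det {d : ℕ} (t : ℝ) (L : List (Fin d × Bool)) : (wL t L).det = t ^ L.length := by
  induction L with
  | nil => simp [wL]
  | cons x L ih =>
    have : wL t (x :: L) = mL t x * wL t L := by simp [wL]
    rw [this, det_mul, mL_det, ih, List.length_cons, pow_succ, mul_comm]

theorem wL_cont {d : ℕ} (L : List (Fin d × Bool)) : Continuous (fun t => wL t L) := by
  induction L with
  | nil => simp [wL]; exact continuous_const
  | cons x L ih =>
    have : (fun t => wL t (x :: L)) = fun t => mL t x * wL t L := by ext1 t; simp [wL]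
    rw [this]
    refine Continuous.mul ?_ ih
    unfold mL
    fun_prop

theorem wL_zero {d : ℕ} (L : List (Fin d × Bool)) : ∀ (x : Fin d × Bool),
    FreeGroup.IsReduced (x :: L) → ∃ c : ℝ, c ≠ 0 ∧
    wL 0 (x :: L) = c • vecMulVec (uL x) (fL ((x :: L).getLast (by simp))) := by
  induction L with
  | nil => intro x _; exact ⟨1, one_ne_zero, by simp [wL, mL]⟩
  | cons y L ih =>
    intro x h
    rw [FreeGroup.IsReduced, List.isChain_cons_cons] at h
    obtain ⟨c, hc, hw⟩ := ih y h.2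
    refine ⟨fL x ⬝ᵥ uL y * c, mul_ne_zero (fL_uL_ne x y h.1) hc, ?_⟩
    have : wL 0 (x :: y :: L) = mL 0 x * wL 0 (y :: L) := by simp [wL]
    rw [this, hw]
    simp only [mL, zero_smul, add_zero, Matrix.mul_smul, vecMulVec_mul_vecMulVec]
    rw [vecMulVec_smul, smul_smul, mul_comm]
    simp

def det2 (v w : Fin 2 → ℝ) : ℝ := v 0 * w 1 - v 1 * w 0

theorem det2_mul (M : Matrix (Fin 2) (Fin 2) ℝ) (v w : Fin 2 → ℝ) :
    det2 (M *ᵥ v) (M *ᵥ w) = M.det * det2 v w := by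
  simp [det2, mulVec, dotProduct, Fin.sum_univ_two, det_fin_two]; ring

theorem rank1_pow (c : ℝ) (u f v : Fin 2 → ℝ) (k : ℕ) :
    ((c • vecMulVec u f) ^ (k+1)) *ᵥ v = ((c * (f ⬝ᵥ u)) ^ k * (c * (f ⬝ᵥ v))) • u := by
  have h : ∀ v, (c • vecMulVec u f) *ᵥ v = (c * (f ⬝ᵥ v)) • u := by
    intro v
    rw [smul_mulVec, vecMulVec_mulVec, op_smul_eq_smul, smul_smul]
  induction k with
  | zero => simp [h]
  | succ k ih =>
    rw [pow_succ', ← mulVec_mulVec, ih, mulVec_smul, h, smul_smul]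
    congr 1; ring

theorem two_dim {d : ℕ} (L : List (Fin d × Bool)) (hL : L ≠ []) (hc : FreeGroup.IsCyclicallyReduced L)
    (N : ℕ) : ∃ (t : ℝ) (v : Fin 2 → ℝ), t ≠ 0 ∧ ∀ i j : ℕ, i < j → j ≤ N →
      det2 ((wL t L) ^ i *ᵥ v) ((wL t L) ^ j *ᵥ v) ≠ 0 := by
  obtain ⟨x, L, rfl⟩ := List.exists_cons_of_ne_nil hL
  obtain ⟨c, hc0, hw⟩ := wL_zero L x hc.1
  set z := (x :: L).getLast (by simp) with hz
  have hcyc : fL z ⬝ᵥ uL x ≠ 0 := by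
    apply fL_uL_ne
    apply hc.2 z _ x (by simp)
    rw [hz]; exact List.getLast?_eq_getLast_of_ne_nil _
  have hnn : ∀ x : Fin d × Bool, 0 ≤ ccR x := by
    intro x; unfold ccR; split_ifs <;> positivity
  let v : Fin 2 → ℝ := ![1, -1]
  have hfv : fL z ⬝ᵥ v ≠ 0 := by
    have := hnn (barL z)
    simp only [fL, v, smul_dotProduct, smul_eq_mul]
    apply mul_ne_zero (inv_ne_zero (barL_ne z))
    simp
    intro h; linarith
  have hvu : det2 v (uL x) ≠ 0 := by
    have := hnn x
    simp [det2, v, uL]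
    intro h; linarith
  have h0 : ∀ k : ℕ, det2 v ((wL 0 (x :: L)) ^ (k+1) *ᵥ v) ≠ 0 := by
    intro k
    rw [hw, rank1_pow]
    have : ∀ (a : ℝ) (u : Fin 2 → ℝ), det2 v (a • u) = a * det2 v u := by
      intro a u; simp [det2]; ring
    rw [this]
    exact mul_ne_zero (mul_ne_zero (pow_ne_zero _ (mul_ne_zero hc0 hcyc)) (mul_ne_zero hc0 hfv)) hvu
  have hev : ∀ᶠ t in nhds (0:ℝ), ∀ k ∈ Finset.range N, det2 v ((wL t (x :: L)) ^ (k+1) *ᵥ v) ≠ 0 := by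
    rw [Filter.eventually_all_finset]
    intro k _
    have hcont : Continuous fun t => det2 v ((wL t (x :: L)) ^ (k+1) *ᵥ v) := by
      have h1 : Continuous fun t => (wL t (x :: L)) ^ (k+1) *ᵥ v :=
        Continuous.matrix_mulVec ((wL_cont (x :: L)).pow _) continuous_const
      unfold det2
      fun_prop
    exact hcont.continuousAt.eventually_ne (h0 k)
  obtain ⟨t, ht1, ht2⟩ := ((hev.filter_mono (nhdsWithin_le_nhds (s := {0}ᶜ))).and
    (self_mem_nhdsWithin)).exists
  refine ⟨t, v, ht2, ?_⟩
  intro i j hij hjN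
  obtain ⟨k, rfl⟩ : ∃ k, j = i + (k + 1) := ⟨j - i - 1, by omega⟩
  rw [pow_add, ← mulVec_mulVec, det2_mul, det_pow, wL_det]
  exact mul_ne_zero (pow_ne_zero _ (pow_ne_zero _ ht2)) (ht1 k (by simp; omega))

/-- binary-form monomials -/
def monV (n : ℕ) (v : Fin 2 → ℝ) : Fin n → ℝ := fun j => v 0 ^ (j : ℕ) * v 1 ^ (j.rev : ℕ)

def FormRep (N : ℕ) (F : (Fin 2 → ℝ) → ℝ) : Prop :=
  ∃ c : ℕ → ℝ, ∀ v, F v = ∑ j ∈ Finset.range (N+1), c j * (v 0 ^ j * v 1 ^ (N - j))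

theorem FormRep.lin {N : ℕ} {F : (Fin 2 → ℝ) → ℝ} (h : FormRep N F) (a b : ℝ) :
    FormRep (N+1) (fun v => (a * v 0 + b * v 1) * F v) := by
  obtain ⟨c, hc⟩ := h
  refine ⟨fun j => (match j with | 0 => 0 | (j+1) => a * c j) + if j ≤ N then b * c j else 0, ?_⟩
  intro v
  simp only [add_mul, Finset.sum_add_distrib, hc]
  congr 1
  · rw [Finset.sum_range_succ' _ (N+1)]
    simp only [zero_mul, add_zero, Finset.mul_sum]
    apply Finset.sum_congr rfl
    intro j hj
    rw [show N + 1 - (j + 1) = N - j by omega]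
    ring
  · rw [Finset.sum_range_succ _ (N+1)]
    simp only [Finset.mul_sum]
    rw [if_neg (by omega), zero_mul, add_zero]
    apply Finset.sum_congr rfl
    intro j hj
    have : j ≤ N := by simp at hj; omega
    rw [if_pos this, show N + 1 - j = (N - j) + 1 by omega]
    ring

theorem FormRep.pow_lin (a b : ℝ) {N : ℕ} {F : (Fin 2 → ℝ) → ℝ} (h : FormRep N F) (i : ℕ) :
    FormRep (N+i) (fun v => (a * v 0 + b * v 1) ^ i * F v) := by
  induction i with
  | zero => simpa using h
  | succ i ih =>
    have := ih.lin a b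
    refine (congrArg (FormRep (N+i+1)) ?_).mp this
    funext v
    ring

theorem exists_sym (n : ℕ) (g : Matrix (Fin 2) (Fin 2) ℝ) :
    ∃ B : Matrix (Fin n) (Fin n) ℝ, ∀ v, B *ᵥ monV n v = monV n (g *ᵥ v) := by
  cases n with
  | zero => exact ⟨0, fun v => by ext i; exact i.elim0⟩
  | succ N =>
  have h : ∀ i : Fin (N+1), FormRep N (fun v => monV (N+1) (g *ᵥ v) i) := by
    intro i
    have h0 : FormRep 0 (fun _ => 1) := ⟨fun _ => 1, by simp⟩
    have := FormRep.pow_lin (g 0 0) (g 0 1) (FormRep.pow_lin (g 1 0) (g 1 1) h0 (i.rev : ℕ)) (i : ℕ)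
    rw [show 0 + (i.rev : ℕ) + (i : ℕ) = N by rw [Fin.val_rev]; omega] at this
    convert this using 2
    simp [monV, mulVec, dotProduct, Fin.sum_univ_two]
  choose c hc using h
  refine ⟨Matrix.of fun i j => c i j, fun v => ?_⟩
  ext i
  refine Eq.trans ?_ (hc i v).symm
  rw [Finset.sum_range]
  simp only [mulVec, dotProduct, monV, of_apply]
  apply Finset.sum_congr rfl
  intro j _
  rw [Fin.val_rev, show N + 1 - (j + 1 : ℕ) = N - j by omega]

theorem monV_ext {n : ℕ} (A B : Matrix (Fin n) (Fin n) ℝ)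
    (h : ∀ v, A *ᵥ monV n v = B *ᵥ monV n v) : A = B := by
  let Vm : Matrix (Fin n) (Fin n) ℝ := projVandermonde (fun i => (i:ℕ)) (fun _ => 1)
  have hdet : IsUnit Vmᵀ.det := by
    rw [det_transpose, isUnit_iff_ne_zero, det_projVandermonde]
    apply Finset.prod_ne_zero_iff.2
    intro i _
    apply Finset.prod_ne_zero_iff.2
    intro j hj
    simp at hj
    simp [sub_eq_zero]
    exact fun h => hj.ne' (Fin.ext h)
  have key : A * Vmᵀ = B * Vmᵀ := by
    ext i j
    have := congrFun (h ![(j:ℕ), 1]) i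
    simpa [Vm, mulVec, dotProduct, monV, mul_apply, projVandermonde_apply] using this
  have := congrArg (· * (Vmᵀ)⁻¹) key
  simpa [Matrix.mul_assoc, mul_nonsing_inv _ hdet] using this

/-- word evaluation with adjugates in place of inverses -/
def wv {n d : ℕ} {R : Type*} [CommRing R] (A : Fin d → Matrix (Fin n) (Fin n) R)
    (L : List (Fin d × Bool)) : Matrix (Fin n) (Fin n) R :=
  (L.map fun x => if x.2 then A x.1 else (A x.1).adjugate).prod

/-- Krylov matrix -/
def kry {n : ℕ} {R : Type*} [CommRing R] (M : Matrix (Fin n) (Fin n) R) (v : Fin n → R) :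
    Matrix (Fin n) (Fin n) R := Matrix.of fun i j => (M ^ (i : ℕ) *ᵥ v) j

theorem monV_smul (n : ℕ) (t : ℝ) (v : Fin 2 → ℝ) : monV n (t • v) = t ^ (n - 1) • monV n v := by
  ext j
  simp only [monV, Pi.smul_apply, smul_eq_mul, mul_pow]
  rw [show n - 1 = (j : ℕ) + (j.rev : ℕ) by rw [Fin.val_rev]; omega, pow_add]
  ring

theorem regular_witness (n : ℕ) {d : ℕ} (L : List (Fin d × Bool)) (hL : L ≠ [])
    (hc : FreeGroup.IsCyclicallyReduced L) :
    ∃ (A : Fin d → Matrix (Fin n) (Fin n) ℝ) (v : Fin n → ℝ), (kry (wv A L) v).det ≠ 0 := by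
  obtain ⟨t, v, ht, hv⟩ := two_dim L hL hc n
  choose B hB using fun x : Fin d × Bool => exists_sym n (mL t x)
  have hBB : ∀ x, B (barL x) * B x = t ^ (n-1) • 1 := by
    intro x
    apply monV_ext
    intro v
    rw [← mulVec_mulVec, hB, hB, mulVec_mulVec, mL_mul, smul_mulVec, one_mulVec, monV_smul,
      smul_mulVec, one_mulVec]
  have htn : t ^ (n-1) ≠ 0 := pow_ne_zero _ ht
  have hdet : ∀ x, (B x).det ≠ 0 := by
    intro x h
    have := congrArg det (hBB x)
    rw [det_mul, h, mul_zero, det_smul, det_one, mul_one] at this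
    exact pow_ne_zero _ htn this.symm
  have hadj : ∀ x, (B x).adjugate = ((B x).det * (t ^ (n-1))⁻¹) • B (barL x) := by
    intro x
    have h1 := hBB (barL x)
    rw [barL_barL] at h1
    have h2 : (B x).adjugate * (B x * B (barL x)) = (B x).adjugate * (t ^ (n-1) • 1) := by rw [h1]
    rw [← Matrix.mul_assoc, adjugate_mul, Matrix.mul_smul, Matrix.mul_one, Matrix.smul_mul,
      Matrix.one_mul] at h2
    rw [mul_comm, mul_smul, h2, smul_smul, inv_mul_cancel₀ htn, one_smul]
  let A : Fin d → Matrix (Fin n) (Fin n) ℝ := fun i => B (i, true)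
  have hlet : ∀ x : Fin d × Bool, ∃ s : ℝ, s ≠ 0 ∧
      (if x.2 then A x.1 else (A x.1).adjugate) = s • B x := by
    rintro ⟨i, b⟩
    cases b
    · refine ⟨_, mul_ne_zero (hdet (i, true)) (inv_ne_zero htn), ?_⟩
      simpa [A, barL] using hadj (i, true)
    · exact ⟨1, one_ne_zero, by simp [A]⟩
  have hw : ∀ L : List (Fin d × Bool), ∃ s : ℝ, s ≠ 0 ∧ ∀ v, wv A L *ᵥ monV n v =
      s • monV n (wL t L *ᵥ v) := by
    intro L
    induction L with
    | nil => exact ⟨1, one_ne_zero, by simp [wv, wL]⟩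
    | cons x L ih =>
      obtain ⟨s, hs, h1⟩ := ih
      obtain ⟨s', hs', h2⟩ := hlet x
      refine ⟨s * s', mul_ne_zero hs hs', fun v => ?_⟩
      have e1 : wv A (x :: L) = (s' • B x) * wv A L := by rw [← h2]; simp [wv]
      have e2 : wL t (x :: L) = mL t x * wL t L := by simp [wL]
      rw [e1, e2, ← mulVec_mulVec, h1, mulVec_smul, smul_mulVec, hB, mulVec_mulVec, smul_smul]
  obtain ⟨s, hs, h1⟩ := hw L
  have hpow : ∀ k : ℕ, wv A L ^ k *ᵥ monV n v = s ^ k • monV n (wL t L ^ k *ᵥ v) := by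
    intro k
    induction k with
    | zero => simp
    | succ k ih =>
      rw [pow_succ' (wv A L), ← mulVec_mulVec, ih, mulVec_smul, h1, smul_smul, mulVec_mulVec,
        pow_succ' (wL t L), pow_succ s]
  refine ⟨A, monV n v, ?_⟩
  have : kry (wv A L) (monV n v) = Matrix.diagonal (fun i : Fin n => s ^ (i:ℕ)) *
      projVandermonde (fun i => (wL t L ^ (i:ℕ) *ᵥ v) 0) (fun i => (wL t L ^ (i:ℕ) *ᵥ v) 1) := by
    ext i j
    rw [diagonal_mul, projVandermonde_apply, kry, of_apply, hpow]
    rfl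
  rw [this, det_mul, det_diagonal, det_projVandermonde]
  refine mul_ne_zero (Finset.prod_ne_zero_iff.2 fun i _ => pow_ne_zero _ hs) ?_
  apply Finset.prod_ne_zero_iff.2
  intro i _
  apply Finset.prod_ne_zero_iff.2
  intro j hj
  simp at hj
  have := hv i j hj j.2.le
  unfold det2 at this
  intro h
  apply this
  linarith

end P5

end Part_P5

section Part_P6
open Polynomial MeasureTheory
section P6
open Matrix

theorem wv_map {n d : ℕ} {R S : Type*} [CommRing R] [CommRing S] (f : R →+* S)
    (A : Fin d → Matrix (Fin n) (Fin n) R) (L : List (Fin d × Bool)) :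
    f.mapMatrix (wv A L) = wv (fun i => f.mapMatrix (A i)) L := by
  unfold wv
  rw [map_list_prod, List.map_map]
  congr 1
  apply List.map_congr_left
  intro x _
  simp only [Function.comp]
  split_ifs
  · rfl
  · rw [RingHom.map_adjugate]

theorem kry_map {n : ℕ} {R S : Type*} [CommRing R] [CommRing S] (f : R →+* S)
    (M : Matrix (Fin n) (Fin n) R) (v : Fin n → R) :
    f.mapMatrix (kry M v) = kry (f.mapMatrix M) (f ∘ v) := by
  ext i j
  simp only [kry, RingHom.mapMatrix_apply, Matrix.map_apply, Matrix.of_apply]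
  rw [RingHom.map_mulVec]
  congr 2
  exact (map_pow f.mapMatrix M (i : ℕ))

theorem detkry_map {n d : ℕ} {R S : Type*} [CommRing R] [CommRing S] (f : R →+* S)
    (A : Fin d → Matrix (Fin n) (Fin n) R) (L : List (Fin d × Bool)) (v : Fin n → R) :
    f (kry (wv A L) v).det = (kry (wv (fun i => f.mapMatrix (A i)) L) (f ∘ v)).det := by
  rw [RingHom.map_det, kry_map, wv_map]

/-- generic matrices -/
noncomputable def Xg (n d : ℕ) (σ R : Type*) [CommRing R] (e : Fin d × Fin n × Fin n → σ) :
    Fin d → Matrix (Fin n) (Fin n) (MvPolynomial σ R) :=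
  fun i => Matrix.of fun a b => MvPolynomial.X (e (i, a, b))

theorem int_witness (n : ℕ) {d : ℕ} (L : List (Fin d × Bool)) (hL : L ≠ [])
    (hc : FreeGroup.IsCyclicallyReduced L) :
    ∃ (A : Fin d → Matrix (Fin n) (Fin n) ℤ) (v : Fin n → ℤ), (kry (wv A L) v).det ≠ 0 := by
  classical
  obtain ⟨A, v, h⟩ := regular_witness n L hL hc
  by_contra hcon
  push Not at hcon
  let P : MvPolynomial ((Fin d × Fin n × Fin n) ⊕ Fin n) ℤ :=
    (kry (wv (Xg n d _ ℤ Sum.inl) L) (fun j => MvPolynomial.X (Sum.inr j))).det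
  have hP : P = 0 := by
    apply MvPolynomial.funext
    intro x
    have := detkry_map (MvPolynomial.eval x) (Xg n d _ ℤ Sum.inl) L
      (fun j => MvPolynomial.X (Sum.inr j))
    rw [map_zero]
    exact this.trans (hcon _ _)
  let x : ((Fin d × Fin n × Fin n) ⊕ Fin n) → ℝ := Sum.elim (fun t => A t.1 t.2.1 t.2.2) v
  have h2 := detkry_map (MvPolynomial.eval₂Hom (Int.castRingHom ℝ) x) (Xg n d _ ℤ Sum.inl) L
      (fun j => MvPolynomial.X (Sum.inr j))
  change MvPolynomial.eval₂Hom (Int.castRingHom ℝ) x P = _ at h2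
  rw [hP, map_zero] at h2
  apply h
  rw [h2]
  congr 3
  · funext i
    ext a b
    simp [Xg, x]
  · funext j
    simp [x]

theorem sz {σ F : Type*} [Fintype σ] [Field F] [Fintype F] [DecidableEq F]
    (Q : MvPolynomial σ F) (hQ : Q ≠ 0) :
    Nat.card {x : σ → F // MvPolynomial.eval x Q = 0} * Fintype.card F ≤
      Q.totalDegree * Fintype.card F ^ Fintype.card σ := by
  classical
  let e := Fintype.equivFin σ
  have h1 : MvPolynomial.rename e Q ≠ 0 := by
    intro h
    exact hQ ((MvPolynomial.rename_injective e e.injective) (by rw [h, map_zero]))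
  have h2 := MvPolynomial.schwartz_zippel_totalDegree h1 (Finset.univ : Finset F)
  have hq : (0:ℚ≥0) < Fintype.card F := by exact_mod_cast Fintype.card_pos
  rw [Finset.card_univ, div_le_div_iff₀ (by positivity) hq] at h2
  have h3 := Q.totalDegree_rename_le e
  have h4 : Nat.card {x : σ → F // MvPolynomial.eval x Q = 0} =
    (Finset.filter (fun f => MvPolynomial.eval f (MvPolynomial.rename e Q) = 0)
      (Fintype.piFinset fun _ : Fin (Fintype.card σ) => (Finset.univ : Finset F))).card := by
    rw [Nat.card_eq_fintype_card, Fintype.card_subtype]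
    apply Finset.card_bij' (fun x _ => x ∘ e.symm) (fun x _ => x ∘ e)
    · intro x hx
      simp only [Finset.mem_filter, Finset.mem_univ, true_and] at hx
      simp [MvPolynomial.eval_rename, Function.comp_assoc, hx]
    · intro x hx
      simp [MvPolynomial.eval_rename] at hx
      simpa using hx
    · intro x _; funext; simp
    · intro x _; funext; simp
  rw [h4]
  have h5 := h2.trans (mul_le_mul_left (Nat.cast_le.mpr h3) _)
  exact_mod_cast h5

theorem matrix_count (n : ℕ) {d : ℕ} (L : List (Fin d × Bool)) (hL : L ≠ [])
    (hc : FreeGroup.IsCyclicallyReduced L) :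
    ∃ (v : Fin n → ℤ) (N D : ℕ), N ≠ 0 ∧ ∀ p : ℕ, p.Prime → ¬ p ∣ N →
      Nat.card {A : Fin d → Matrix (Fin n) (Fin n) (ZMod p) //
        (kry (wv A L) (fun j => (v j : ZMod p))).det = 0} * p ≤ D * p ^ (d * (n * n)) := by
  classical
  obtain ⟨A, v, h⟩ := int_witness n L hL hc
  let Q : MvPolynomial (Fin d × Fin n × Fin n) ℤ :=
    (kry (wv (Xg n d _ ℤ id) L) (fun j => MvPolynomial.C (v j))).det
  refine ⟨v, (kry (wv A L) v).det.natAbs, Q.totalDegree, by simpa using h, ?_⟩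
  intro p hp hpN
  haveI := Fact.mk hp
  let Qp := MvPolynomial.map (Int.castRingHom (ZMod p)) Q
  have hev : ∀ B : Fin d → Matrix (Fin n) (Fin n) (ZMod p),
      MvPolynomial.eval (fun t : Fin d × Fin n × Fin n => B t.1 t.2.1 t.2.2) Qp =
      (kry (wv B L) (fun j => (v j : ZMod p))).det := by
    intro B
    have := detkry_map (MvPolynomial.eval₂Hom (Int.castRingHom (ZMod p))
      (fun t : Fin d × Fin n × Fin n => B t.1 t.2.1 t.2.2)) (Xg n d _ ℤ id) L
      (fun j => MvPolynomial.C (v j))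
    rw [MvPolynomial.eval_map]
    refine this.trans ?_
    have e1 : (fun i => (MvPolynomial.eval₂Hom (Int.castRingHom (ZMod p))
      (fun t : Fin d × Fin n × Fin n => B t.1 t.2.1 t.2.2)).mapMatrix (Xg n d _ ℤ id i)) = B := by
      funext i
      ext a b
      simp [Xg]
    have e2 : (MvPolynomial.eval₂Hom (Int.castRingHom (ZMod p))
      (fun t : Fin d × Fin n × Fin n => B t.1 t.2.1 t.2.2)) ∘ (fun j => MvPolynomial.C (v j)) =
        fun j => (v j : ZMod p) := by
      funext j
      exact MvPolynomial.eval₂_C _ _ _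
    rw [e1, e2]
  have hQp : Qp ≠ 0 := by
    intro h0
    have h1 := hev (fun i => (Int.castRingHom (ZMod p)).mapMatrix (A i))
    rw [h0, map_zero] at h1
    have h2 := detkry_map (Int.castRingHom (ZMod p)) A L v
    have h3 : (((kry (wv A L) v).det : ℤ) : ZMod p) = 0 := h2.trans h1.symm
    rw [ZMod.intCast_zmod_eq_zero_iff_dvd] at h3
    exact hpN (Int.natCast_dvd.mp h3)
  have hdeg : Qp.totalDegree ≤ Q.totalDegree := by
    apply Finset.sup_mono
    exact MvPolynomial.support_map_subset _ _
  have hs := sz Qp hQp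
  rw [ZMod.card] at hs
  have hcard : Nat.card {A : Fin d → Matrix (Fin n) (Fin n) (ZMod p) //
        (kry (wv A L) (fun j => (v j : ZMod p))).det = 0} =
      Nat.card {x : Fin d × Fin n × Fin n → ZMod p // MvPolynomial.eval x Qp = 0} := by
    apply Nat.card_congr
    refine Equiv.subtypeEquiv
      ⟨fun B t => B t.1 t.2.1 t.2.2, fun x i => Matrix.of fun a b => x (i, a, b), fun _ => rfl, fun _ => rfl⟩ ?_
    intro B
    rw [← hev B]
    rfl
  rw [hcard]
  refine hs.trans ?_
  simp only [Fintype.card_prod, Fintype.card_fin]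
  gcongr

end P6

end Part_P6

section Part_P7
open Polynomial MeasureTheory
section P7
open Matrix

theorem wv_scale {n d : ℕ} {F : Type*} [Field F] (l : Fin d → F) (hl : ∀ i, l i ≠ 0)
    (A : Fin d → Matrix (Fin n) (Fin n) F) (L : List (Fin d × Bool)) :
    ∃ s : F, s ≠ 0 ∧ wv (fun i => l i • A i) L = s • wv A L := by
  induction L with
  | nil => exact ⟨1, one_ne_zero, by simp [wv]⟩
  | cons x L ih =>
    obtain ⟨s, hs, h⟩ := ih
    have hc : ∀ B : Fin d → Matrix (Fin n) (Fin n) F,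
      wv B (x :: L) = (if x.2 then B x.1 else (B x.1).adjugate) * wv B L := fun B => by simp [wv]
    rw [hc, hc, h]
    by_cases hx : x.2
    · refine ⟨s * l x.1, mul_ne_zero hs (hl _), ?_⟩
      simp only [hx, if_true, smul_mul_assoc, mul_smul_comm, smul_smul]
    · refine ⟨s * l x.1 ^ (n - 1), mul_ne_zero hs (pow_ne_zero _ (hl _)), ?_⟩
      simp [hx, Matrix.adjugate_smul, smul_mul_assoc, mul_smul_comm, smul_smul]

theorem kry_smul {n : ℕ} {F : Type*} [Field F] (s : F) (hs : s ≠ 0)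
    (M : Matrix (Fin n) (Fin n) F) (v : Fin n → F) :
    (kry (s • M) v).det = 0 ↔ (kry M v).det = 0 := by
  have : kry (s • M) v = Matrix.diagonal (fun i : Fin n => s ^ (i : ℕ)) * kry M v := by
    ext i j
    simp [kry, Matrix.diagonal_mul, _root_.smul_pow, Matrix.smul_mulVec]
  rw [this, Matrix.det_mul, Matrix.det_diagonal, mul_eq_zero]
  have h : ∏ i : Fin n, s ^ (i : ℕ) ≠ 0 := Finset.prod_ne_zero_iff.mpr fun i _ => pow_ne_zero _ hs
  simp [h]

theorem sl_bad_count {n d p : ℕ} (hn : 1 ≤ n) (hp : p.Prime) (L : List (Fin d × Bool)) (v : Fin n → ZMod p) :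
    Nat.card {S : Fin d → SL n p // (kry (wv (fun i => (S i).1) L) v).det = 0} * (p - 1) ^ d ≤
      n ^ d * Nat.card {A : Fin d → Matrix (Fin n) (Fin n) (ZMod p) // (kry (wv A L) v).det = 0} := by
  classical
  haveI := Fact.mk hp
  have h1 : Nat.card (Fin d → (ZMod p)ˣ) = (p - 1) ^ d := by
    rw [Nat.card_eq_fintype_card, Fintype.card_pi]
    simp [ZMod.card_units p]
  rw [← h1, ← Nat.card_prod, Nat.card_eq_fintype_card, Nat.card_eq_fintype_card, ← Finset.card_univ,
    ← Finset.card_univ]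
  let f : {S : Fin d → SL n p // (kry (wv (fun i => (S i).1) L) v).det = 0} × (Fin d → (ZMod p)ˣ) →
      {A : Fin d → Matrix (Fin n) (Fin n) (ZMod p) // (kry (wv A L) v).det = 0} :=
    fun x => ⟨fun i => (x.2 i : ZMod p) • (x.1.1 i).1, by
      obtain ⟨s, hs, h⟩ := wv_scale (fun i => (x.2 i : ZMod p)) (fun i => (x.2 i).ne_zero)
        (fun i => (x.1.1 i).1) L
      rw [h, kry_smul s hs]
      exact x.1.2⟩
  apply Finset.card_le_mul_card_image_of_maps_to (f := f) (fun _ _ => Finset.mem_univ _)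
  intro b _
  have hle : (Fintype.piFinset fun i : Fin d => (nthRoots n (b.1 i).det).toFinset).card ≤ n ^ d := by
    rw [Fintype.card_piFinset]
    calc _ ≤ ∏ i : Fin d, n := Finset.prod_le_prod' fun i _ =>
            (Multiset.toFinset_card_le _).trans (card_nthRoots n _)
      _ = n ^ d := by simp
  refine le_trans ?_ hle
  apply Finset.card_le_card_of_injOn (fun x => fun i => (x.2 i : ZMod p))
  · intro x hx
    simp only [Finset.coe_filter, Finset.mem_univ, true_and, Set.mem_setOf_eq] at hx
    simp only [Finset.mem_coe, Fintype.mem_piFinset, Multiset.mem_toFinset]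
    intro i
    rw [mem_nthRoots (by omega), ← hx]
    change _ = ((x.2 i : ZMod p) • (x.1.1 i).1).det
    rw [Matrix.det_smul, (x.1.1 i).2]
    simp
  · intro x hx y hy hxy
    simp only [Finset.coe_filter, Finset.mem_univ, true_and, Set.mem_setOf_eq] at hx hy
    have h2 : x.2 = y.2 := by
      funext i
      exact Units.ext (congrFun hxy i)
    refine Prod.ext ?_ h2
    apply Subtype.ext
    funext i
    apply Subtype.ext
    have h3 := congrFun (congrArg Subtype.val (hx.trans hy.symm)) i
    change (x.2 i : ZMod p) • (x.1.1 i).1 = (y.2 i : ZMod p) • (y.1.1 i).1 at h3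
    rw [← h2] at h3
    exact smul_right_injective _ (x.2 i).ne_zero h3

theorem sl_card {n p : ℕ} (hn : 1 ≤ n) (hp : p.Prime) :
    p ^ (n * n) ≤ 2 ^ n * (Nat.card (SL n p) * (p - 1)) := by
  classical
  haveI := Fact.mk hp
  have h1 : Nat.card (GL (Fin n) (ZMod p)) ≤ Nat.card (SL n p) * (p - 1) := by
    let φ : GL (Fin n) (ZMod p) →* (ZMod p)ˣ := Matrix.GeneralLinearGroup.det
    rw [Subgroup.card_eq_card_quotient_mul_card_subgroup φ.ker, mul_comm]
    apply Nat.mul_le_mul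
    · apply Nat.card_le_card_of_injective (fun g : φ.ker => (⟨g.1.1, by
        have := g.2
        rw [MonoidHom.mem_ker] at this
        exact congrArg Units.val this⟩ : SL n p))
      intro a b h
      exact Subtype.ext (Units.ext (congrArg Subtype.val h))
    · have := Nat.card_le_card_of_injective _ (QuotientGroup.kerLift_injective φ)
      rwa [Nat.card_eq_fintype_card (α := (ZMod p)ˣ), ZMod.card_units p] at this
  refine le_trans ?_ (Nat.mul_le_mul_left _ h1)
  rw [Matrix.card_GL_field, ZMod.card]
  have h2 : ∀ i : Fin n, p ^ n ≤ 2 * (p ^ n - p ^ (i : ℕ)) := by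
    intro i
    have h3 : p ^ (i : ℕ) ≤ p ^ (n - 1) := Nat.pow_le_pow_right hp.pos (by omega)
    have h4 : p ^ n = p ^ (n - 1) * p := by rw [← pow_succ]; congr 1; omega
    have h5 : p ^ (n - 1) * 2 ≤ p ^ (n - 1) * p := Nat.mul_le_mul_left _ hp.two_le
    omega
  calc p ^ (n * n) = ∏ i : Fin n, p ^ n := by simp [pow_mul]
    _ ≤ ∏ i : Fin n, (2 * (p ^ n - p ^ (i : ℕ))) := Finset.prod_le_prod' fun i _ => h2 i
    _ = _ := by rw [Finset.prod_mul_distrib]; simp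

theorem centralizer_card {n p : ℕ} (hp : p.Prime) (g : SL n p) (v : Fin n → ZMod p)
    (h : (kry g.1 v).det ≠ 0) : Nat.card {h : SL n p // h * g = g * h} ≤ p ^ n := by
  classical
  haveI := Fact.mk hp
  have hc : Nat.card (Fin n → ZMod p) = p ^ n := by simp
  rw [← hc]
  apply Nat.card_le_card_of_injective (fun x : {h : SL n p // h * g = g * h} => x.1.1 *ᵥ v)
  intro x y hxy
  simp only at hxy
  have key : ∀ (x : {h : SL n p // h * g = g * h}) (i : ℕ),
      x.1.1 *ᵥ (g.1 ^ i *ᵥ v) = g.1 ^ i *ᵥ (x.1.1 *ᵥ v) := by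
    intro x i
    rw [Matrix.mulVec_mulVec, Matrix.mulVec_mulVec]
    congr 1
    have : Commute x.1.1 g.1 := congrArg Subtype.val x.2
    exact this.pow_right i
  have h2 : x.1.1 * (kry g.1 v)ᵀ = y.1.1 * (kry g.1 v)ᵀ := by
    ext a b
    have h3 : ∀ x : {h : SL n p // h * g = g * h},
        (x.1.1 * (kry g.1 v)ᵀ) a b = (x.1.1 *ᵥ (g.1 ^ (b : ℕ) *ᵥ v)) a := by
      intro x
      simp [Matrix.mul_apply, Matrix.mulVec, dotProduct, kry]
    rw [h3, h3, key, key, hxy]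
  have hu : IsUnit (kry g.1 v)ᵀ := by
    rw [Matrix.isUnit_iff_isUnit_det, Matrix.det_transpose]
    exact isUnit_iff_ne_zero.mpr h
  exact Subtype.ext (Subtype.ext (hu.mul_right_cancel h2))

theorem wv_lift {n d p : ℕ} (S : Fin d → SL n p) (L : List (Fin d × Bool)) :
    (FreeGroup.lift S (FreeGroup.mk L)).1 = wv (fun i => (S i).1) L := by
  rw [FreeGroup.lift_mk]
  induction L with
  | nil => simp [wv]
  | cons x L ih =>
    rw [List.map_cons, List.prod_cons, sl_val_mul, ih]
    simp only [wv, List.map_cons, List.prod_cons]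
    congr 1
    cases x.2 <;> rfl

theorem conj_cent_card {G : Type*} [Group G] [Finite G] (c g : G) :
    Nat.card {h : G // h * (c * g * c⁻¹) = (c * g * c⁻¹) * h} ≤ Nat.card {h : G // h * g = g * h} := by
  apply Nat.card_le_card_of_injective (fun x : {h : G // h * (c * g * c⁻¹) = (c * g * c⁻¹) * h} =>
    (⟨c⁻¹ * x.1 * c, by
      have := x.2
      calc c⁻¹ * x.1 * c * g = c⁻¹ * (x.1 * (c * g * c⁻¹)) * c := by group
        _ = c⁻¹ * ((c * g * c⁻¹) * x.1) * c := by rw [this]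
        _ = _ := by group⟩ : {h : G // h * g = g * h}))
  intro a b h
  have := congrArg Subtype.val h
  simp only [mul_left_inj, mul_right_inj] at this
  exact Subtype.ext this

theorem word_count (n d : ℕ) (hn : 1 ≤ n) (w : FreeGroup (Fin d)) (hw : w ≠ 1) :
    ∃ C : ℕ, ∀ p : ℕ, p.Prime →
      Nat.card {S : Fin d → SL n p // ¬ Nat.card {h : SL n p //
        h * FreeGroup.lift S w = FreeGroup.lift S w * h} ≤ p ^ n} * p ≤
      C * Nat.card (Fin d → SL n p) := by
  classical
  set L := FreeGroup.reduceCyclically w.toWord with hLdef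
  have hc : FreeGroup.IsCyclicallyReduced L :=
    FreeGroup.reduceCyclically.isCyclicallyReduced FreeGroup.isReduced_toWord
  obtain ⟨c, hcw⟩ : ∃ c : FreeGroup (Fin d), w = c * FreeGroup.mk L * c⁻¹ := by
    refine ⟨FreeGroup.mk (FreeGroup.reduceCyclically.conjugator w.toWord), ?_⟩
    rw [FreeGroup.inv_mk, FreeGroup.mul_mk, FreeGroup.mul_mk,
      FreeGroup.reduceCyclically.conj_conjugator_reduceCyclically, FreeGroup.mk_toWord]
  have hL : L ≠ [] := by
    intro h
    rw [h] at hcw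
    apply hw
    rw [hcw, ← FreeGroup.one_eq_mk]
    group
  obtain ⟨v, N, D, hN, hcount⟩ := matrix_count n L hL hc
  refine ⟨max N (n ^ d * D * 2 ^ (n * d)), ?_⟩
  intro p hp
  haveI := Fact.mk hp
  by_cases hpN : p ∣ N
  · rw [mul_comm]
    apply Nat.mul_le_mul
    · exact (Nat.le_of_dvd (Nat.pos_of_ne_zero hN) hpN).trans (le_max_left _ _)
    · exact Nat.card_le_card_of_injective _ Subtype.val_injective
  · have h1 := hcount p hp hpN
    have h2 := sl_bad_count hn hp L (fun j => (v j : ZMod p))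
    have h3 := sl_card hn hp
    have h4 : Nat.card {S : Fin d → SL n p // ¬ Nat.card {h : SL n p //
        h * FreeGroup.lift S w = FreeGroup.lift S w * h} ≤ p ^ n} ≤
        Nat.card {S : Fin d → SL n p // (kry (wv (fun i => (S i).1) L)
          (fun j => (v j : ZMod p))).det = 0} := by
      apply Nat.card_le_card_of_injective (Subtype.map id ?_)
      · exact Subtype.map_injective _ Function.injective_id
      · intro S hS
        by_contra hne
        apply hS
        rw [hcw, map_mul, map_mul, map_inv]
        refine (conj_cent_card _ _).trans ?_
        apply centralizer_card hp _ (fun j => (v j : ZMod p))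
        rw [wv_lift]
        exact hne
    refine le_trans ?_ (Nat.mul_le_mul_right _ (le_max_right _ _))
    have hp1 : 0 < (p - 1) ^ d := pow_pos (by have := hp.two_le; omega) _
    refine (Nat.mul_le_mul_right _ h4).trans ?_
    have hcd : Nat.card (Fin d → SL n p) = Nat.card (SL n p) ^ d := by simp
    rw [hcd]
    apply Nat.le_of_mul_le_mul_right _ hp1
    generalize Nat.card {S : Fin d → SL n p // (kry (wv (fun i => (S i).1) L)
          (fun j => (v j : ZMod p))).det = 0} = B at *
    generalize Nat.card {A : Fin d → Matrix (Fin n) (Fin n) (ZMod p) //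
        (kry (wv A L) (fun j => (v j : ZMod p))).det = 0} = Z at *
    calc B * p * (p - 1) ^ d = (B * (p - 1) ^ d) * p := by ring
      _ ≤ (n ^ d * Z) * p := Nat.mul_le_mul_right _ h2
      _ = n ^ d * (Z * p) := by ring
      _ ≤ n ^ d * (D * p ^ (d * (n * n))) := Nat.mul_le_mul_left _ h1
      _ = n ^ d * D * (p ^ (n * n)) ^ d := by rw [← pow_mul]; ring
      _ ≤ n ^ d * D * (2 ^ n * (Nat.card (SL n p) * (p - 1))) ^ d :=
          Nat.mul_le_mul_left _ (Nat.pow_le_pow_left h3 d)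
      _ = _ := by rw [mul_pow, mul_pow, pow_mul]; ring

end P7

end Part_P7

section Part_P8
open Polynomial MeasureTheory
section P8
open Matrix

theorem unit_inv_val {k : ℕ} (U : Matrix.unitaryGroup (Fin k) ℂ) :
    (U : Matrix (Fin k) (Fin k) ℂ)⁻¹ = (U⁻¹ : Matrix.unitaryGroup (Fin k) ℂ).1 := by
  apply Matrix.inv_eq_left_inv
  have := congrArg Subtype.val (inv_mul_cancel U)
  exact this

theorem Amat_eq {G : Type*} [Group G] {k d : ℕ} (π : G →* Matrix.unitaryGroup (Fin k) ℂ) (S : Fin d → G) :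
    Amat π S = ∑ i, ((π (S i)).1 + (π (S i)⁻¹).1) := by
  unfold Amat
  apply Finset.sum_congr rfl
  intro i _
  rw [map_inv]
  first
  | rfl
  | rw [unit_inv_val]

theorem Amat_herm {G : Type*} [Group G] {k d : ℕ} (π : G →* Matrix.unitaryGroup (Fin k) ℂ) (S : Fin d → G) :
    (Amat π S).IsHermitian := by
  rw [Amat_eq]
  unfold Matrix.IsHermitian
  rw [Matrix.conjTranspose_sum]
  apply Finset.sum_congr rfl
  intro i _
  rw [Matrix.conjTranspose_add, map_inv]
  have h1 : ((π (S i)).1)ᴴ = ((π (S i))⁻¹).1 := rfl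
  have h2 : (((π (S i))⁻¹).1)ᴴ = (π (S i)).1 := by
    rw [← h1, Matrix.conjTranspose_conjTranspose]
  rw [h1, h2, add_comm]

open scoped Matrix.Norms.L2Operator in
theorem eig_bound {G : Type*} [Group G] {k d : ℕ} (hk : 1 ≤ k)
    (π : G →* Matrix.unitaryGroup (Fin k) ℂ) (S : Fin d → G) (j : Fin k) :
    |(Amat_herm π S).eigenvalues j| ≤ 2 * (d : ℝ) := by
  haveI : Nonempty (Fin k) := ⟨⟨0, hk⟩⟩
  have hn : ‖Amat π S‖ ≤ 2 * (d : ℝ) := by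
    rw [Amat_eq]
    refine (norm_sum_le _ _).trans ?_
    have : ∀ i ∈ (Finset.univ : Finset (Fin d)), ‖(π (S i)).1 + (π (S i)⁻¹).1‖ ≤ (2 : ℝ) := by
      intro i _
      refine (norm_add_le _ _).trans ?_
      rw [CStarRing.norm_of_mem_unitary (π (S i)).2, CStarRing.norm_of_mem_unitary (π (S i)⁻¹).2]
      norm_num
    refine (Finset.sum_le_sum this).trans ?_
    simp [mul_comm]
  have h1 := (Amat_herm π S).mulVec_eigenvectorBasis j
  have h2 := Matrix.l2_opNorm_mulVec (Amat π S) ((Amat_herm π S).eigenvectorBasis j)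
  have h3 : ‖(Amat_herm π S).eigenvectorBasis j‖ = 1 := (Amat_herm π S).eigenvectorBasis.orthonormal.1 j
  rw [h3, mul_one] at h2
  have h4 : ‖(WithLp.toLp 2 (Amat π S *ᵥ ⇑((Amat_herm π S).eigenvectorBasis j)) : EuclideanSpace ℂ (Fin k))‖
      = |(Amat_herm π S).eigenvalues j| := by
    rw [h1, WithLp.toLp_smul, norm_smul]
    have : (WithLp.toLp 2 ⇑((Amat_herm π S).eigenvectorBasis j) : EuclideanSpace ℂ (Fin k)) =
      (Amat_herm π S).eigenvectorBasis j := rfl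
    rw [this, h3, mul_one, Real.norm_eq_abs]
  refine le_trans (le_of_eq ?_) (h2.trans hn)
  rw [← h4]
  rfl

theorem spec_eq {G : Type*} [Group G] {k d : ℕ}
    (π : G →* Matrix.unitaryGroup (Fin k) ℂ) (S : Fin d → G) :
    specMeasure (Amat π S) =
      (k : ENNReal)⁻¹ • ∑ j : Fin k, Measure.dirac ((Amat_herm π S).eigenvalues j) := by
  unfold specMeasure
  rw [dif_pos (Amat_herm π S)]

theorem spec_prob {G : Type*} [Group G] {k d : ℕ} (hk : 1 ≤ k)
    (π : G →* Matrix.unitaryGroup (Fin k) ℂ) (S : Fin d → G) :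
    IsProbabilityMeasure (specMeasure (Amat π S)) := by
  rw [spec_eq]
  constructor
  simp only [Measure.smul_apply, Measure.coe_finset_sum, Finset.sum_apply, measure_univ,
    Finset.sum_const, Finset.card_univ, Fintype.card_fin, smul_eq_mul, nsmul_eq_mul, mul_one]
  apply ENNReal.inv_mul_cancel
  · simp; omega
  · simp

theorem spec_bd {G : Type*} [Group G] {k d : ℕ} (hk : 1 ≤ k)
    (π : G →* Matrix.unitaryGroup (Fin k) ℂ) (S : Fin d → G) :
    ∀ᵐ x : ℝ ∂(specMeasure (Amat π S)), |x| ≤ 2 * (d : ℝ) := by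
  rw [spec_eq]
  apply Measure.ae_smul_measure
  rw [ae_iff, Measure.finset_sum_apply, Finset.sum_eq_zero_iff]
  intro j _
  rw [← ae_iff, ae_dirac_iff]
  · exact eig_bound hk π S j
  · exact measurableSet_le (by fun_prop) (by fun_prop)

theorem spec_int {G : Type*} [Group G] {k d : ℕ}
    (π : G →* Matrix.unitaryGroup (Fin k) ℂ) (S : Fin d → G) (P : ℝ[X]) :
    ((∫ x, P.eval x ∂(specMeasure (Amat π S)) : ℝ) : ℂ) = (k : ℂ)⁻¹ * (aeval (Amat π S) P).trace := by
  have hA := Amat_herm π S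
  have h1 : ∫ x, P.eval x ∂(specMeasure (Amat π S)) = (k : ℝ)⁻¹ * ∑ j, P.eval (hA.eigenvalues j) := by
    rw [spec_eq, integral_smul_measure, integral_finset_sum_measure]
    · simp
    · intro i _
      exact integrable_dirac (by simp)
  have h2 : (aeval (Amat π S) P).trace = ∑ j, ((P.eval (hA.eigenvalues j) : ℝ) : ℂ) := by
    have h3 : aeval (Amat π S) P = aeval (Amat π S) (P.map (algebraMap ℝ ℂ)) := by
      rw [aeval_map_algebraMap]
    rw [h3]
    have h4 := hA.spectral_theorem
    generalize hE : hA.eigenvalues = e at *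
    generalize hU : hA.eigenvectorUnitary = U at *
    rw [h4]
    have h5 : ∀ Q : ℂ[X], aeval (Unitary.conjStarAlgAut ℂ _ U (diagonal (RCLike.ofReal ∘ e))) Q =
        Unitary.conjStarAlgAut ℂ _ U (aeval (diagonal (RCLike.ofReal ∘ e)) Q) := fun Q =>
      aeval_algHom_apply
        ((Unitary.conjStarAlgAut ℂ (Matrix (Fin k) (Fin k) ℂ) U).toAlgEquiv.toAlgHom) _ Q
    rw [h5, Unitary.conjStarAlgAut_apply, Matrix.trace_mul_comm, ← mul_assoc]
    have h6 : (star (U : Matrix (Fin k) (Fin k) ℂ)) * U = 1 := U.2.1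
    rw [h6, one_mul]
    have h7 : ∀ Q : ℂ[X], aeval (diagonal ((RCLike.ofReal : ℝ → ℂ) ∘ e)) Q = diagonal (fun j => Q.eval (e j : ℂ)) := by
      intro Q
      have := aeval_algHom_apply (Matrix.diagonalAlgHom (n := Fin k) ℂ (α := ℂ)) ((RCLike.ofReal : ℝ → ℂ) ∘ e) Q
      refine this.trans ?_
      simp only [Matrix.diagonalAlgHom_apply]
      congr 1
      funext j
      have h8 := aeval_algHom_apply (Pi.evalAlgHom ℂ (fun _ : Fin k => ℂ) j) ((RCLike.ofReal : ℝ → ℂ) ∘ e) Q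
      refine h8.symm.trans ?_
      simp [Polynomial.coe_aeval_eq_eval]
    rw [h7, Matrix.trace_diagonal]
    apply Finset.sum_congr rfl
    intro j _
    rw [Polynomial.eval_map_algebraMap]
    exact (Polynomial.aeval_algebraMap_apply ℂ (e j) P).trans (by simp)
  rw [h1, h2]
  push_cast
  rfl

/-- the representation of the free group -/
noncomputable def rhoF {G : Type*} [Group G] {k d : ℕ}
    (π : G →* Matrix.unitaryGroup (Fin k) ℂ) (S : Fin d → G) :
    FreeGroup (Fin d) →* Matrix (Fin k) (Fin k) ℂ :=
  (Submonoid.subtype _).comp (π.comp (FreeGroup.lift S))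

theorem aeval_Amat {G : Type*} [Group G] {k d : ℕ}
    (π : G →* Matrix.unitaryGroup (Fin k) ℂ) (S : Fin d → G) (P : ℝ[X]) :
    (aeval (Amat π S) P).trace =
      ∑ w ∈ (aeval (adj d) P).coeff.support, ((aeval (adj d) P).coeff w : ℂ) *
        (π (FreeGroup.lift S w) : Matrix (Fin k) (Fin k) ℂ).trace := by
  let Φ := MonoidAlgebra.lift ℝ (Matrix (Fin k) (Fin k) ℂ) (FreeGroup (Fin d)) (rhoF π S)
  have h1 : Φ (adj d) = Amat π S := by
    rw [Amat_eq, adj, map_sum]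
    apply Finset.sum_congr rfl
    intro i _
    rw [map_add]
    simp only [Φ]
    rw [MonoidAlgebra.lift_of, MonoidAlgebra.lift_of]
    simp [rhoF]
  rw [← h1, aeval_algHom_apply Φ]
  simp only [Φ]
  rw [MonoidAlgebra.lift_apply, Finsupp.sum, Matrix.trace_sum]
  apply Finset.sum_congr rfl
  intro w _
  rw [Matrix.trace_smul]
  simp [rhoF]

theorem km_coeff (d : ℕ) (hd : 2 ≤ d) (P : ℝ[X]) :
    ∫ x, P.eval x ∂(kestenMcKay d) = (aeval (adj d) P).coeff 1 := by
  let f : ℝ[X] →ₗ[ℝ] ℝ :=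
    { toFun := fun P => ∫ x, P.eval x ∂(kestenMcKay d)
      map_add' := fun P Q => by
        simp only [eval_add]
        exact integral_add (km_poly_integrable d hd P.continuous) (km_poly_integrable d hd Q.continuous)
      map_smul' := fun c P => by
        simp only [eval_smul, smul_eq_mul, RingHom.id_apply]
        exact integral_const_mul _ _ }
  let g : ℝ[X] →ₗ[ℝ] ℝ :=
    { toFun := fun P => (aeval (adj d) P).coeff 1
      map_add' := fun P Q => by simp
      map_smul' := fun c P => by simp }
  refine kp_ext d f g (fun k => ?_) P
  change ∫ x, (kp d k).eval x ∂(kestenMcKay d) = (aeval (adj d) (kp d k)).coeff 1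
  rw [km_kp d hd, kp_adj]
  simp [eq_comm]

end P8

end Part_P8

section Part_P9
open Polynomial MeasureTheory
section P9
open Matrix

theorem union_count {α ι : Type*} [Finite α] (s : Finset ι) (B : α → Prop) (Q : ι → α → Prop)
    (h : ∀ a, B a → ∃ i ∈ s, Q i a) :
    Nat.card {a // B a} ≤ ∑ i ∈ s, Nat.card {a // Q i a} := by
  classical
  haveI := Fintype.ofFinite α
  have e : ∀ R : α → Prop, Nat.card {a // R a} = (Finset.univ.filter R).card := fun R => by
    rw [Nat.card_eq_fintype_card, Fintype.card_subtype]
  simp only [e]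
  refine le_trans (Finset.card_le_card ?_) (Finset.card_biUnion_le (s := s)
    (t := fun i => Finset.univ.filter (Q i)))
  intro a ha
  simp only [Finset.mem_filter, Finset.mem_univ, true_and, Finset.mem_biUnion] at ha ⊢
  exact h a ha

theorem char_small {n p k : ℕ} (hn : 3 ≤ n) (hp : p.Prime) (π : SL n p →* Matrix.unitaryGroup (Fin k) ℂ)
    (hirr : IsIrreducibleRep π) (hπ : ∃ g, π g ≠ 1) (hk : 1 ≤ k) (g : SL n p)
    (hg : Nat.card {h : SL n p // h * g = g * h} ≤ p ^ n) :
    ‖(π g : Matrix (Fin k) (Fin k) ℂ).trace‖ ^ 2 * p ≤ 4 * (k : ℝ) ^ 2 := by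
  haveI := Fact.mk hp
  have h1 := char_bound π hirr hk g
  have h2 := dim_bound hn hp π hπ
  have h3 : p ^ n * p ≤ 4 * k ^ 2 := by
    calc p ^ n * p = p ^ (n + 1) := (pow_succ _ _).symm
      _ ≤ p ^ ((n - 1) * 2) := Nat.pow_le_pow_right hp.pos (by omega)
      _ = (p ^ (n - 1)) ^ 2 := pow_mul _ _ _
      _ ≤ (2 * k) ^ 2 := Nat.pow_le_pow_left (by omega) 2
      _ = _ := by ring
  have h4 : (Nat.card {h : SL n p // h * g = g * h} : ℝ) ≤ (p : ℝ) ^ n := by exact_mod_cast hg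
  calc _ ≤ (p : ℝ) ^ n * p := mul_le_mul_of_nonneg_right (h1.trans h4) (by positivity)
    _ ≤ _ := by exact_mod_cast h3

theorem poly_bad (n d : ℕ) (hn : 3 ≤ n) (hd : 2 ≤ d) (P : ℝ[X]) (δ : ℝ) (hδ : 0 < δ) :
    ∃ C : ℝ, 0 ≤ C ∧ ∀ p : ℕ, p.Prime → ∀ (k : ℕ) (π : SL n p →* Matrix.unitaryGroup (Fin k) ℂ),
      IsIrreducibleRep π → (∃ g, π g ≠ 1) → 1 ≤ k →
      (Nat.card {S : Fin d → SL n p // ¬ |∫ x, P.eval x ∂(specMeasure (Amat π S)) -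
        ∫ x, P.eval x ∂(kestenMcKay d)| ≤ δ} : ℝ) * p ≤ C * (Nat.card (Fin d → SL n p) : ℝ) := by
  classical
  set f := aeval (adj d) P with hf
  set s := f.coeff.support with hs
  have hw : ∀ w : FreeGroup (Fin d), ∃ C : ℕ, w ≠ 1 → ∀ p : ℕ, p.Prime →
      Nat.card {S : Fin d → SL n p // ¬ Nat.card {h : SL n p //
        h * FreeGroup.lift S w = FreeGroup.lift S w * h} ≤ p ^ n} * p ≤
      C * Nat.card (Fin d → SL n p) := by
    intro w
    by_cases h : w = 1
    · exact ⟨0, fun h' => absurd h h'⟩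
    · obtain ⟨C, hC⟩ := word_count n d (by omega) w h
      exact ⟨C, fun _ => hC⟩
  choose Cw hCw using hw
  set M : ℝ := ∑ w ∈ s.erase 1, |f.coeff w| with hM
  have hM0 : 0 ≤ M := Finset.sum_nonneg fun _ _ => abs_nonneg _
  refine ⟨4 * M ^ 2 / δ ^ 2 + ∑ w ∈ s.erase 1, (Cw w : ℝ), by positivity, ?_⟩
  intro p hp k π hirr hπ hk
  haveI := Fact.mk hp
  have hp0 : (0 : ℝ) < p := by exact_mod_cast hp.pos
  have hk0 : (0 : ℝ) < k := by exact_mod_cast hk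
  by_cases hsm : (p : ℝ) < 4 * M ^ 2 / δ ^ 2
  · rw [mul_comm]
    apply mul_le_mul
    · have : (0 : ℝ) ≤ ∑ w ∈ s.erase 1, (Cw w : ℝ) := by positivity
      linarith
    · exact_mod_cast Nat.card_le_card_of_injective _ Subtype.val_injective
    · positivity
    · positivity
  · push Not at hsm
    rw [div_le_iff₀ (by positivity)] at hsm
    have hgood : ∀ S : Fin d → SL n p, (∀ w ∈ s.erase 1, Nat.card {h : SL n p //
        h * FreeGroup.lift S w = FreeGroup.lift S w * h} ≤ p ^ n) →
        |∫ x, P.eval x ∂(specMeasure (Amat π S)) - ∫ x, P.eval x ∂(kestenMcKay d)| ≤ δ := by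
      intro S hS
      have e1 := spec_int π S P
      rw [aeval_Amat, ← hf, ← hs] at e1
      have e2 : ∑ w ∈ s, (f.coeff w : ℂ) * (π (FreeGroup.lift S w) : Matrix (Fin k) (Fin k) ℂ).trace =
          (f.coeff 1 : ℂ) * k + ∑ w ∈ s.erase 1, (f.coeff w : ℂ) *
            (π (FreeGroup.lift S w) : Matrix (Fin k) (Fin k) ℂ).trace := by
        by_cases h1 : (1 : FreeGroup (Fin d)) ∈ s
        · rw [← Finset.add_sum_erase s _ h1]
          simp
        · rw [Finset.erase_eq_of_notMem h1]
          have : f.coeff 1 = 0 := by simpa [hs] using h1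
          rw [this]; simp
      have e3 : ((∫ x, P.eval x ∂(specMeasure (Amat π S)) - ∫ x, P.eval x ∂(kestenMcKay d) : ℝ) : ℂ) =
          (k : ℂ)⁻¹ * ∑ w ∈ s.erase 1, (f.coeff w : ℂ) *
            (π (FreeGroup.lift S w) : Matrix (Fin k) (Fin k) ℂ).trace := by
        rw [Complex.ofReal_sub, e1, e2, km_coeff d hd, ← hf]
        have : (k : ℂ) ≠ 0 := by exact_mod_cast hk0.ne'
        field_simp
        ring
      rw [← Real.norm_eq_abs, ← Complex.norm_real, e3, norm_mul, norm_inv, Complex.norm_natCast]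
      have hB : ∀ w ∈ s.erase 1, ‖(f.coeff w : ℂ) *
            (π (FreeGroup.lift S w) : Matrix (Fin k) (Fin k) ℂ).trace‖ ≤
            |f.coeff w| * (2 * k / Real.sqrt p) := by
        intro w hw
        rw [norm_mul, Complex.norm_real, Real.norm_eq_abs]
        apply mul_le_mul_of_nonneg_left _ (abs_nonneg _)
        have h := char_small hn hp π hirr hπ hk _ (hS w hw)
        rw [le_div_iff₀ (Real.sqrt_pos.mpr hp0)]
        apply le_of_sq_le_sq _ (by positivity)
        rw [mul_pow, Real.sq_sqrt hp0.le]
        linarith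
      have hsum := (norm_sum_le _ _).trans (Finset.sum_le_sum hB)
      rw [← Finset.sum_mul, ← hM] at hsum
      calc _ ≤ (k : ℝ)⁻¹ * (M * (2 * k / Real.sqrt p)) :=
            mul_le_mul_of_nonneg_left hsum (by positivity)
        _ = 2 * M / Real.sqrt p := by field_simp
        _ ≤ δ := by
            rw [div_le_iff₀ (Real.sqrt_pos.mpr hp0)]
            apply le_of_sq_le_sq _ (by positivity)
            rw [mul_pow, mul_pow, Real.sq_sqrt hp0.le]
            linarith
    have hU := union_count (s.erase 1) (fun S : Fin d → SL n p =>
      ¬ |∫ x, P.eval x ∂(specMeasure (Amat π S)) - ∫ x, P.eval x ∂(kestenMcKay d)| ≤ δ)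
      (fun w S => ¬ Nat.card {h : SL n p //
        h * FreeGroup.lift S w = FreeGroup.lift S w * h} ≤ p ^ n) (by
        intro S hS
        by_contra hcon
        push Not at hcon
        exact hS (hgood S hcon))
    have hU2 : (Nat.card {S : Fin d → SL n p // ¬ |∫ x, P.eval x ∂(specMeasure (Amat π S)) -
        ∫ x, P.eval x ∂(kestenMcKay d)| ≤ δ}) * p ≤
        (∑ w ∈ s.erase 1, Cw w) * Nat.card (Fin d → SL n p) := by
      refine (Nat.mul_le_mul_right p hU).trans ?_
      rw [Finset.sum_mul, Finset.sum_mul]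
      exact Finset.sum_le_sum fun w hw => hCw w (Finset.ne_of_mem_erase hw) p hp
    have hU3 : (Nat.card {S : Fin d → SL n p // ¬ |∫ x, P.eval x ∂(specMeasure (Amat π S)) -
        ∫ x, P.eval x ∂(kestenMcKay d)| ≤ δ} : ℝ) * p ≤
        (∑ w ∈ s.erase 1, (Cw w : ℝ)) * (Nat.card (Fin d → SL n p) : ℝ) := by exact_mod_cast hU2
    refine hU3.trans (mul_le_mul_of_nonneg_right ?_ (by positivity))
    have : 0 ≤ 4 * M ^ 2 / δ ^ 2 := by positivity
    linarith

theorem stmt2_aux (n d : ℕ) (hn : 3 ≤ n) (hd : 2 ≤ d) (ε : ℝ) (hε : 0 < ε) :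
    ∃ C : ℝ, 0 < C ∧ ∀ p : ℕ, p.Prime → ∀ (k : ℕ) (π : SL n p →* Matrix.unitaryGroup (Fin k) ℂ),
      IsIrreducibleRep π → (∃ g, π g ≠ 1) →
      (1 - C * (p : ℝ)⁻¹) ≤
        (Nat.card {S : Fin d → SL n p //
          discrepancy (specMeasure (Amat π S)) (kestenMcKay d) ≤ ε} : ℝ) /
        (Nat.card (Fin d → SL n p) : ℝ) := by
  classical
  obtain ⟨T, δ, hδ, hT⟩ := km_approx d hd ε hε
  choose CP hCP0 hCP using fun P : ℝ[X] => poly_bad n d hn hd P δ hδ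
  refine ⟨1 + ∑ P ∈ T, CP P, by have := Finset.sum_nonneg fun P (_ : P ∈ T) => hCP0 P; linarith, ?_⟩
  intro p hp k π hirr hπ
  haveI := Fact.mk hp
  have hk : 1 ≤ k := by
    by_contra h
    obtain rfl : k = 0 := by omega
    obtain ⟨g, hg⟩ := hπ
    apply hg
    apply Subtype.ext
    ext i
    exact i.elim0
  have hp0 : (0 : ℝ) < p := by exact_mod_cast hp.pos
  have hU := union_count T (fun S : Fin d → SL n p =>
      ¬ discrepancy (specMeasure (Amat π S)) (kestenMcKay d) ≤ ε)
      (fun P S => ¬ |∫ x, P.eval x ∂(specMeasure (Amat π S)) - ∫ x, P.eval x ∂(kestenMcKay d)| ≤ δ) (by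
        intro S hS
        by_contra hcon
        push Not at hcon
        exact hS (hT _ (spec_prob hk π S) (spec_bd hk π S) hcon))
  have htot : Nat.card {S : Fin d → SL n p // discrepancy (specMeasure (Amat π S)) (kestenMcKay d) ≤ ε} +
      Nat.card {S : Fin d → SL n p // ¬ discrepancy (specMeasure (Amat π S)) (kestenMcKay d) ≤ ε} =
      Nat.card (Fin d → SL n p) := by
    rw [← Nat.card_sum]
    exact Nat.card_congr (Equiv.sumCompl _)
  have hpos : (0 : ℝ) < (Nat.card (Fin d → SL n p) : ℝ) := by exact_mod_cast Nat.card_pos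
  have htot' : (Nat.card {S : Fin d → SL n p // discrepancy (specMeasure (Amat π S)) (kestenMcKay d) ≤ ε} : ℝ) +
      (Nat.card {S : Fin d → SL n p // ¬ discrepancy (specMeasure (Amat π S)) (kestenMcKay d) ≤ ε} : ℝ) =
      (Nat.card (Fin d → SL n p) : ℝ) := by exact_mod_cast htot
  have hU' : (Nat.card {S : Fin d → SL n p // ¬ discrepancy (specMeasure (Amat π S)) (kestenMcKay d) ≤ ε} : ℝ) * p
      ≤ (∑ P ∈ T, CP P) * (Nat.card (Fin d → SL n p) : ℝ) := by
    have h1 : (Nat.card {S : Fin d → SL n p // ¬ discrepancy (specMeasure (Amat π S)) (kestenMcKay d) ≤ ε} : ℝ) ≤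
      ∑ P ∈ T, (Nat.card {S : Fin d → SL n p // ¬ |∫ x, P.eval x ∂(specMeasure (Amat π S)) -
        ∫ x, P.eval x ∂(kestenMcKay d)| ≤ δ} : ℝ) := by exact_mod_cast hU
    refine (mul_le_mul_of_nonneg_right h1 hp0.le).trans ?_
    rw [Finset.sum_mul, Finset.sum_mul]
    exact Finset.sum_le_sum fun P _ => hCP P p hp k π hirr hπ hk
  rw [le_div_iff₀ hpos]
  rw [← le_div_iff₀ hp0] at hU'
  have h9 : (1 - (1 + ∑ P ∈ T, CP P) * (p : ℝ)⁻¹) * (Nat.card (Fin d → SL n p) : ℝ) =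
    (Nat.card (Fin d → SL n p) : ℝ) - (∑ P ∈ T, CP P) * (Nat.card (Fin d → SL n p) : ℝ) / p -
      (Nat.card (Fin d → SL n p) : ℝ) / p := by
    field_simp
    ring
  rw [h9]
  have : 0 ≤ (Nat.card (Fin d → SL n p) : ℝ) / p := by positivity
  linarith

end P9

end Part_P9

/-- Fix n ≥ 3, d ≥ 2, ε > 0. There exists C > 0 (depending only on n, d, ε) such
that for every prime p and every nontrivial irreducible unitary representation π of SLₙ(ℤ/pℤ),
the proportion of tuples S ∈ SLₙ(ℤ/pℤ)^d with D(μ_{π,S}, f_{2d}) ≤ ε is at least 1 − C·p^{−1}. -/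
theorem stmt2 (n d : ℕ) (hn : 3 ≤ n) (hd : 2 ≤ d) (ε : ℝ) (hε : 0 < ε) :
    ∃ C : ℝ, 0 < C ∧
      ∀ (p : ℕ), p.Prime →
        ∀ (k : ℕ) (π : SL n p →* Matrix.unitaryGroup (Fin k) ℂ),
          IsIrreducibleRep π → (∃ g, π g ≠ 1) →
          (1 - C * (p : ℝ)⁻¹) ≤
            (Nat.card {S : Fin d → SL n p //
                discrepancy (specMeasure (Amat π S)) (kestenMcKay d) ≤ ε} : ℝ) /
              (Nat.card (Fin d → SL n p) : ℝ) := by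
  exact stmt2_aux n d hn hd ε hε
end

section
/- Fix an integer k ≥ 1. There exists a constant C > 0 such that for every prime p and every nonidentity element ω of the free group F_k on k generators, of word length l, the following holds: if there exists a tuple (h₁, …, h_k) ∈ PGL₂(ℤ/pℤ)^k with ω(h₁, …, h_k) ≠ 1, then the proportion of tuples (g₁, …, g_k) ∈ PGL₂(ℤ/pℤ)^k (with respect to the uniform measure) satisfying ω(g₁, …, g_k) = 1 is at most l/p + C/p². -/
open MeasureTheory

/-- PGL₂(ℤ/pℤ): the quotient of GL₂(ℤ/pℤ) by its center. -/
abbrev PGL2 (p : ℕ) :=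
  Matrix.GeneralLinearGroup (Fin 2) (ZMod p) ⧸
    Subgroup.center (Matrix.GeneralLinearGroup (Fin 2) (ZMod p))

open scoped MatrixGroups


section ZeroCount
open MvPolynomial

variable {K : Type*} [Field K] [Fintype K] [DecidableEq K]

/-- number of zeros of a polynomial -/
noncomputable def zeroCount {n : ℕ} (F : MvPolynomial (Fin n) K) : ℕ :=
  (Finset.univ.filter fun x : Fin n → K => eval x F = 0).card

lemma exists_equiv_single {K : Type*} [Field K] {n : ℕ} (v : Fin (n + 1) → K) (hv : v ≠ 0) :
    ∃ g : (Fin (n + 1) → K) ≃ₗ[K] (Fin (n + 1) → K), g (Pi.single 0 1) = v := by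
  have he : (Pi.single 0 1 : Fin (n + 1) → K) ≠ 0 := by simp
  let f := (LinearEquiv.toSpanNonzeroSingleton K _ _ he).symm ≪≫ₗ
    (LinearEquiv.toSpanNonzeroSingleton K _ _ hv)
  obtain ⟨g, hg⟩ := Submodule.exists_linearEquiv_restrict_eq f
  refine ⟨g, ?_⟩
  have h1 := hg ((LinearEquiv.toSpanNonzeroSingleton K _ _ he) 1)
  have h2 : f ((LinearEquiv.toSpanNonzeroSingleton K _ _ he) 1) =
      (LinearEquiv.toSpanNonzeroSingleton K _ _ hv) 1 := by
    simp only [f, LinearEquiv.trans_apply, LinearEquiv.symm_apply_apply]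
  rw [h2, LinearEquiv.toSpanNonzeroSingleton_apply, LinearEquiv.toSpanNonzeroSingleton_apply] at h1
  simpa using h1.symm

lemma change_coords {n d : ℕ} (F : MvPolynomial (Fin (n + 1)) K) (hF : F.IsHomogeneous d)
    (hF0 : F ≠ 0) (hd : d ≤ Fintype.card K) (v : Fin (n + 1) → K) (hv : v ≠ 0)
    (hz : eval v F = 0) :
    ∃ G : MvPolynomial (Fin (n + 1)) K, G.IsHomogeneous d ∧ G ≠ 0 ∧
      eval (Pi.single 0 1) G = 0 ∧ zeroCount F = zeroCount G := by
  obtain ⟨g, hg⟩ := exists_equiv_single v hv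
  let A := LinearMap.toMatrix' (g : (Fin (n + 1) → K) →ₗ[K] (Fin (n + 1) → K))
  let φ : Fin (n + 1) → MvPolynomial (Fin (n + 1)) K := fun i => ∑ j, C (A i j) * X j
  have hφ : ∀ x, (fun i => eval x (φ i)) = g x := by
    intro x
    have : g x = A.mulVec x := by
      simp [A, LinearMap.toMatrix'_mulVec]
    rw [this]
    ext i
    simp [φ, Matrix.mulVec, dotProduct]
  have hev : ∀ x, eval x (aeval φ F) = eval (g x) F := by
    intro x
    rw [← hφ x]
    have := MvPolynomial.eval₂_comp_left (eval x) (C : K →+* _) φ F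
    rw [aeval_def, algebraMap_eq, this]
    rw [show (eval x).comp C = RingHom.id K from by ext; simp]
    rfl
  refine ⟨aeval φ F, ?_, ?_, ?_, ?_⟩
  · have := hF.aeval φ (n := 1) (fun i => IsHomogeneous.sum _ _ _ fun j _ => isHomogeneous_C_mul_X _ _)
    simpa using this
  · intro h0
    apply hF0
    apply hF.eq_zero_of_forall_eval_eq_zero_of_le_card
    · intro r
      have := hev (g.symm r)
      rw [h0] at this
      simpa using this.symm
    · simpa using hd
  · rw [hev, hg, hz]
  · unfold zeroCount
    symm
    apply Finset.card_bij (fun x _ => g x)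
    · intro a ha
      rw [Finset.mem_filter, hev] at ha
      simpa using ha
    · intro a _ b _ h
      exact g.injective h
    · intro b hb
      exact ⟨g.symm b, by rw [Finset.mem_filter, hev]; simpa using hb, by simp⟩

lemma step_count {n d : ℕ} (F : MvPolynomial (Fin (n + 1)) K) (hF : F.IsHomogeneous d)
    (hF0 : F ≠ 0) (hz : eval (Pi.single 0 1) F = 0) :
    ∃ (m e : ℕ) (G : MvPolynomial (Fin n) K), 1 ≤ m ∧ m + e = d ∧ G.IsHomogeneous m ∧ G ≠ 0 ∧
      zeroCount F + zeroCount G * e ≤ Fintype.card K ^ n * e + zeroCount G * Fintype.card K := by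
  set f := finSuccEquiv K n F with hf
  have hf0 : f ≠ 0 := by simpa [hf] using hF0
  set e := f.natDegree with he
  have hlc : f.coeff e ≠ 0 := by
    simpa [he] using hf0
  have hed : e ≤ d := by
    rw [he, hf, natDegree_finSuccEquiv]
    exact (degreeOf_le_totalDegree _ _).trans hF.totalDegree_le
  obtain ⟨m, hm⟩ := Nat.exists_eq_add_of_le hed
  have hGh : (f.coeff e).IsHomogeneous m := hF.finSuccEquiv_coeff_isHomogeneous e m hm.symm
  have hfib : ∀ (y : Fin n → K) (x : K), eval (Fin.cons x y : Fin (n + 1) → K) F =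
      Polynomial.eval x (Polynomial.map (eval y) f) := fun y x => eval_eq_eval_mv_eval' y x F
  refine ⟨m, e, f.coeff e, ?_, by omega, hGh, hlc, ?_⟩
  · by_contra hm0
    have hm0 : m = 0 := by omega
    subst hm0
    have hcons : (Pi.single 0 1 : Fin (n + 1) → K) = Fin.cons 1 0 := by
      ext i
      refine Fin.cases ?_ (fun j => ?_) i <;> simp
    rw [hcons, hfib] at hz
    have hcj : ∀ j < e, eval (0 : Fin n → K) (f.coeff j) = 0 := by
      intro j hj
      have := hF.finSuccEquiv_coeff_isHomogeneous j (d - j) (by omega)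
      rw [← hf] at this
      have h0 := this.coeff_eq_zero (d := 0) (by simp; omega)
      rw [← constantCoeff_eq] at h0
      rw [← h0, eval_zero]
    have hce : eval (0 : Fin n → K) (f.coeff e) ≠ 0 := by
      intro h
      apply hlc
      have h2 := Nat.le_zero.mp hGh.totalDegree_le
      rw [totalDegree_eq_zero_iff_eq_C] at h2
      rw [h2] at h ⊢
      simp at h
      simp [h]
    apply hce
    have := Polynomial.eval_eq_sum_range' (p := Polynomial.map (eval (0 : Fin n → K)) f) (n := e + 1)
      (Nat.lt_succ_of_le Polynomial.natDegree_map_le) 1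
    rw [hz, Finset.sum_range_succ, Finset.sum_eq_zero] at this
    · simpa using this.symm
    · intro j hj
      rw [Polynomial.coeff_map, hcj j (Finset.mem_range.mp hj), zero_mul]
  · have hsplit : zeroCount F = ∑ y : Fin n → K,
        (Finset.univ.filter fun x : K => Polynomial.eval x (Polynomial.map (eval y) f) = 0).card := by
      unfold zeroCount
      simp only [Finset.card_filter]
      rw [← (Fin.consEquiv (fun _ : Fin (n + 1) => K)).sum_comp, Fintype.sum_prod_type,
        Finset.sum_comm]
      refine Finset.sum_congr rfl fun y _ => Finset.sum_congr rfl fun x _ => ?_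
      have : (Fin.consEquiv (fun _ : Fin (n + 1) => K)) (x, y) = (Fin.cons x y : Fin (n+1) → K) := rfl
      rw [this, hfib]
    have hb : ∀ y : Fin n → K,
        (Finset.univ.filter fun x : K => Polynomial.eval x (Polynomial.map (eval y) f) = 0).card
          + (if eval y (f.coeff e) = 0 then e else 0)
          ≤ e + (if eval y (f.coeff e) = 0 then Fintype.card K else 0) := by
      intro y
      split_ifs with h
      · have := Finset.card_le_univ
          (Finset.univ.filter fun x : K => Polynomial.eval x (Polynomial.map (eval y) f) = 0)
        omega
      · simp only [add_zero]
        have hne : Polynomial.map (eval y) f ≠ 0 := by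
          intro h0
          apply h
          rw [← Polynomial.coeff_map, h0, Polynomial.coeff_zero]
        refine le_trans ?_ ((Polynomial.card_roots' (Polynomial.map (eval y) f)).trans
          Polynomial.natDegree_map_le)
        refine le_trans (Finset.card_le_card ?_) (Multiset.toFinset_card_le _)
        intro x hx
        simpa [hne] using hx
    have hs := Finset.sum_le_sum fun y (_ : y ∈ Finset.univ) => hb y
    rw [Finset.sum_add_distrib, Finset.sum_add_distrib, ← hsplit] at hs
    simp only [← Finset.sum_filter, Finset.sum_const, smul_eq_mul, Finset.card_univ,
      Fintype.card_fun, Fintype.card_fin] at hs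
    exact hs

lemma zero_count_le {n d : ℕ} (F : MvPolynomial (Fin (n + 1)) K) (hF : F.IsHomogeneous d)
    (hF0 : F ≠ 0) (hd1 : 1 ≤ d) (hd : d ≤ Fintype.card K) :
    (Fintype.card K : ℤ) * zeroCount F ≤ (Fintype.card K : ℤ) ^ n * (1 + d * (Fintype.card K - 1)) := by
  have hq : (1 : ℤ) < Fintype.card K := by exact_mod_cast Fintype.one_lt_card
  induction n generalizing d with
  | zero =>
    have hz1 : zeroCount F ≤ 1 := by
      by_contra hcon
      unfold zeroCount at hcon
      push Not at hcon
      obtain ⟨v, hv, hv0⟩ := Finset.exists_mem_ne hcon 0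
      obtain ⟨G, hG, hG0, hGz, -⟩ := change_coords F hF hF0 hd v hv0 (by simpa using hv)
      obtain ⟨m, e, H, hm, -, hH, hH0, -⟩ := step_count G hG hG0 hGz
      have := hH.inj_right (isHomogeneous_of_isEmpty _ _ H) hH0
      omega
    have : (zeroCount F : ℤ) ≤ 1 := by exact_mod_cast hz1
    have hd' : (1 : ℤ) ≤ d := by exact_mod_cast hd1
    nlinarith
  | succ n ih =>
    have hd' : (1 : ℤ) ≤ d := by exact_mod_cast hd1
    have hpow : (1 : ℤ) ≤ (Fintype.card K : ℤ) ^ n := one_le_pow₀ hq.le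
    by_cases hv : ∃ v : Fin (n + 1 + 1) → K, v ≠ 0 ∧ eval v F = 0
    · obtain ⟨v, hv0, hv⟩ := hv
      obtain ⟨G, hG, hG0, hGz, hZ⟩ := change_coords F hF hF0 hd v hv0 hv
      obtain ⟨m, e, H, hm, hme, hH, hH0, hle⟩ := step_count G hG hG0 hGz
      rw [hZ]
      have ih' := ih H hH hH0 hm (by omega)
      have hle' : (zeroCount G : ℤ) + zeroCount H * e ≤
        (Fintype.card K : ℤ) ^ (n + 1) * e + zeroCount H * Fintype.card K := by exact_mod_cast hle
      have heq : (e : ℤ) ≤ Fintype.card K := by exact_mod_cast (by omega : e ≤ Fintype.card K)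
      have hm' : (1 : ℤ) ≤ m := by exact_mod_cast hm
      have he0 : (0 : ℤ) ≤ e := by positivity
      have hdd : (d : ℤ) = m + e := by exact_mod_cast hme.symm
      rw [hdd]
      generalize (Fintype.card K : ℤ) = q at *
      generalize (zeroCount G : ℤ) = z at *
      generalize (zeroCount H : ℤ) = w at *
      rw [pow_succ] at *
      generalize q ^ n = P at *
      have h1 : q * z ≤ q * (P * q * e) + (q * w) * (q - e) := by nlinarith
      have h2 : (q * w) * (q - e) ≤ P * (1 + m * (q - 1)) * (q - e) :=
        mul_le_mul_of_nonneg_right ih' (by linarith)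
      have h3 : 0 ≤ P * ((q - 1) * e * (m - 1)) := by
        apply mul_nonneg (by linarith) (mul_nonneg (mul_nonneg (by linarith) he0) (by linarith))
      nlinarith
    · push Not at hv
      have hz1 : zeroCount F ≤ 1 := by
        by_contra hcon
        unfold zeroCount at hcon
        push Not at hcon
        obtain ⟨v, hvz, hv0⟩ := Finset.exists_mem_ne hcon 0
        exact hv v hv0 (by simpa using hvz)
      have : (zeroCount F : ℤ) ≤ 1 := by exact_mod_cast hz1
      rw [pow_succ]
      have h1 : (1 : ℤ) ≤ 1 + d * (Fintype.card K - 1) := by nlinarith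
      have h2 := mul_le_mul hpow h1 (by norm_num) (by linarith)
      nlinarith

end ZeroCount

lemma hybrid_bound {G : Type*} [Fintype G] (k : ℕ) (P : (Fin k → G) → Prop)
    (c : Fin k → ℝ) (hc : ∀ i, 0 ≤ c i)
    (H : ∀ (i : Fin k) (g : Fin k → G), (∃ x, ¬ P (Function.update g i x)) →
      (Nat.card {x : G // P (Function.update g i x)} : ℝ) ≤ c i * Nat.card G)
    (h : ∃ h, ¬ P h) :
    (Nat.card {g : Fin k → G // P g} : ℝ) ≤ (∑ i, c i) * (Nat.card G : ℝ) ^ k := by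
  classical
  induction k with
  | zero =>
    obtain ⟨h, hh⟩ := h
    have : IsEmpty {g : Fin 0 → G // P g} :=
      ⟨fun g => hh (by rw [Subsingleton.elim h g.1]; exact g.2)⟩
    simp
  | succ k ih =>
    obtain ⟨h, hh⟩ := h
    have h0 : (Nat.card {x : G // P (Fin.cons x (Fin.tail h))} : ℝ) ≤ c 0 * Nat.card G := by
      have := H 0 h ⟨h 0, by simpa using hh⟩
      have e : ∀ x, Function.update h 0 x = Fin.cons x (Fin.tail h) := by
        intro x
        conv_lhs => rw [← Fin.cons_self_tail h]
        rw [Fin.update_cons_zero]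
      simpa only [e] using this
    have hrec : ∀ x, ¬ P (Fin.cons x (Fin.tail h)) →
        (Nat.card {g : Fin k → G // P (Fin.cons x g)} : ℝ) ≤
          (∑ i : Fin k, c i.succ) * (Nat.card G : ℝ) ^ k := by
      intro x hx
      apply ih (fun g => P (Fin.cons x g)) (fun i => c i.succ) (fun i => hc _)
      · intro i g hex
        have := H i.succ (Fin.cons x g)
        simp only [← Fin.cons_update] at this
        exact this hex
      · exact ⟨_, hx⟩
    have hsum : (Nat.card {g : Fin (k + 1) → G // P g} : ℝ) =
        ∑ x : G, (Nat.card {g : Fin k → G // P (Fin.cons x g)} : ℝ) := by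
      simp only [Nat.card_eq_fintype_card, Fintype.card_subtype, Finset.card_filter]
      push_cast
      rw [← (Fin.consEquiv (fun _ : Fin (k + 1) => G)).sum_comp, Fintype.sum_prod_type]
      rfl
    have hb : ∀ x : G, (Nat.card {g : Fin k → G // P (Fin.cons x g)} : ℝ) ≤
        (if P (Fin.cons x (Fin.tail h)) then (Nat.card G : ℝ) ^ k else 0) +
          (∑ i : Fin k, c i.succ) * (Nat.card G : ℝ) ^ k := by
      intro x
      have hnn : 0 ≤ (∑ i : Fin k, c i.succ) * (Nat.card G : ℝ) ^ k :=
        mul_nonneg (Finset.sum_nonneg fun i _ => hc _) (by positivity)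
      split_ifs with hx
      · have : Nat.card {g : Fin k → G // P (Fin.cons x g)} ≤ Nat.card (Fin k → G) :=
          Nat.card_le_card_of_injective _ Subtype.val_injective
        have h2 : Nat.card (Fin k → G) = Nat.card G ^ k := by simp
        rw [h2] at this
        have : (Nat.card {g : Fin k → G // P (Fin.cons x g)} : ℝ) ≤ (Nat.card G : ℝ) ^ k := by
          exact_mod_cast this
        linarith
      · simpa using hrec x hx
    rw [hsum]
    refine (Finset.sum_le_sum fun x _ => hb x).trans ?_
    rw [Finset.sum_add_distrib, ← Finset.sum_filter, Finset.sum_const, Finset.sum_const,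
      Fin.sum_univ_succ, nsmul_eq_mul, nsmul_eq_mul, ← Fintype.card_subtype,
      ← Nat.card_eq_fintype_card, Finset.card_univ, ← Nat.card_eq_fintype_card]
    have hp : (0 : ℝ) ≤ (Nat.card G : ℝ) ^ k := by positivity
    have := mul_le_mul_of_nonneg_right h0 hp
    rw [pow_succ]
    nlinarith

section WordPart
open MvPolynomial

variable {K : Type*} [Field K] {k : ℕ}

/-- generic matrix for the `i`-th letter, constant matrices for the others -/
noncomputable def letterPoly (i : Fin k) (g : Fin k → GL (Fin 2) K) (a : Fin k × Bool) :
    Matrix (Fin 2) (Fin 2) (MvPolynomial (Fin 4) K) :=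
  if a.1 = i then cond a.2 !![X 0, X 1; X 2, X 3] !![X 3, -X 1; -X 2, X 0]
  else ((cond a.2 (g a.1) (g a.1)⁻¹ : GL (Fin 2) K).val).map C

/-- entries of a matrix as a vector -/
def vecOf (M : Matrix (Fin 2) (Fin 2) K) : Fin 4 → K := ![M 0 0, M 0 1, M 1 0, M 1 1]

lemma letterPoly_homog (i : Fin k) (g : Fin k → GL (Fin 2) K) (a : Fin k × Bool) (r s : Fin 2) :
    (letterPoly i g a r s).IsHomogeneous (if a.1 = i then 1 else 0) := by
  unfold letterPoly
  split_ifs with h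
  · cases a.2 <;> fin_cases r <;> fin_cases s <;>
      simp [isHomogeneous_X, (isHomogeneous_X _ _).neg]
  · exact isHomogeneous_C _ _

lemma wordPoly_homog (i : Fin k) (g : Fin k → GL (Fin 2) K) (L : List (Fin k × Bool))
    (r s : Fin 2) :
    ((L.map (letterPoly i g)).prod r s).IsHomogeneous (L.map (fun a => if a.1 = i then 1 else 0)).sum := by
  induction L generalizing r s with
  | nil =>
    simp only [List.map_nil, List.prod_nil, List.sum_nil, Matrix.one_apply]
    split_ifs
    · exact isHomogeneous_one _ _
    · exact isHomogeneous_zero _ _ _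
  | cons a L ih =>
    simp only [List.map_cons, List.prod_cons, List.sum_cons, Matrix.mul_apply]
    exact IsHomogeneous.sum _ _ _ fun j _ => (letterPoly_homog i g a r j).mul (ih j s)

lemma letterPoly_eval (i : Fin k) (g : Fin k → GL (Fin 2) K) (x : GL (Fin 2) K)
    (a : Fin k × Bool) :
    ∃ c : K, c ≠ 0 ∧ (letterPoly i g a).map (eval (vecOf x.val)) =
      c • (cond a.2 (Function.update g i x a.1) (Function.update g i x a.1)⁻¹ : GL (Fin 2) K).val := by
  obtain ⟨j, b⟩ := a
  unfold letterPoly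
  by_cases h : j = i
  · subst h
    cases b
    · refine ⟨x.val.det, x.isUnit.map Matrix.detMonoidHom |>.ne_zero, ?_⟩
      have h1 : (x⁻¹ : GL (Fin 2) K).val = (x.val)⁻¹ := Matrix.coe_units_inv x
      have hd : x.val.det ≠ 0 := (x.isUnit.map Matrix.detMonoidHom).ne_zero
      simp only [if_true, cond_false, Function.update_self, h1, Matrix.inv_def,
        Ring.inverse_eq_inv', smul_smul, mul_inv_cancel₀ hd, one_smul, Matrix.adjugate_fin_two]
      ext r s
      fin_cases r <;> fin_cases s <;> simp [vecOf]
    · refine ⟨1, one_ne_zero, ?_⟩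
      simp only [if_true, cond_true, Function.update_self, one_smul]
      ext r s
      fin_cases r <;> fin_cases s <;> simp [vecOf]
  · refine ⟨1, one_ne_zero, ?_⟩
    simp only [h, if_false, one_smul, Function.update_of_ne (Ne.intro h)]
    ext r s
    simp

lemma wordPoly_eval (i : Fin k) (g : Fin k → GL (Fin 2) K) (x : GL (Fin 2) K)
    (L : List (Fin k × Bool)) :
    ∃ c : K, c ≠ 0 ∧ ((L.map (letterPoly i g)).prod).map (eval (vecOf x.val)) =
      c • (L.map fun a => cond a.2 (Function.update g i x a.1)
        (Function.update g i x a.1)⁻¹ : List (GL (Fin 2) K)).prod.val := by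
  induction L with
  | nil => exact ⟨1, one_ne_zero, by simp⟩
  | cons a L ih =>
    obtain ⟨c, hc, h1⟩ := ih
    obtain ⟨c', hc', h2⟩ := letterPoly_eval i g x a
    refine ⟨c' * c, mul_ne_zero hc' hc, ?_⟩
    simp only [List.map_cons, List.prod_cons, Units.val_mul]
    rw [Matrix.map_mul, h1, h2, Matrix.smul_mul, Matrix.mul_smul, smul_smul]

lemma mem_center_iff_entries (M : GL (Fin 2) K) :
    M ∈ Subgroup.center (GL (Fin 2) K) ↔
      M.val 0 1 = 0 ∧ M.val 1 0 = 0 ∧ M.val 0 0 - M.val 1 1 = 0 := by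
  rw [Matrix.GeneralLinearGroup.mem_center_iff_val_mem_range_scalar]
  constructor
  · rintro ⟨c, hc⟩
    rw [← hc]
    simp
  · rintro ⟨h1, h2, h3⟩
    refine ⟨M.val 0 0, ?_⟩
    ext r s
    fin_cases r <;> fin_cases s <;> simp [h1, h2]
    exact sub_eq_zero.mp h3

lemma exists_poly (i : Fin k) (g : Fin k → GL (Fin 2) K) (ω : FreeGroup (Fin k))
    (x₀ : GL (Fin 2) K)
    (h : FreeGroup.lift (Function.update g i x₀) ω ∉ Subgroup.center (GL (Fin 2) K)) :
    ∃ F : MvPolynomial (Fin 4) K,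
      F.IsHomogeneous (ω.toWord.map (fun a => if a.1 = i then 1 else 0)).sum ∧
      eval (vecOf x₀.val) F ≠ 0 ∧
      ∀ x : GL (Fin 2) K,
        FreeGroup.lift (Function.update g i x) ω ∈ Subgroup.center (GL (Fin 2) K) →
          eval (vecOf x.val) F = 0 := by
  have hl : ∀ x, FreeGroup.lift (Function.update g i x) ω =
      (ω.toWord.map fun a => cond a.2 (Function.update g i x a.1)
        (Function.update g i x a.1)⁻¹ : List (GL (Fin 2) K)).prod := by
    intro x
    conv_lhs => rw [← FreeGroup.mk_toWord (x := ω)]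
    rw [FreeGroup.lift_mk]
  have key : ∀ x, ∃ c : K, c ≠ 0 ∧ ∀ r s, eval (vecOf x.val)
      ((ω.toWord.map (letterPoly i g)).prod r s) =
      c * (FreeGroup.lift (Function.update g i x) ω).val r s := by
    intro x
    obtain ⟨c, hc, h1⟩ := wordPoly_eval i g x ω.toWord
    refine ⟨c, hc, fun r s => ?_⟩
    have := congrFun (congrFun h1 r) s
    rw [hl]
    simpa using this
  have hh := wordPoly_homog i g ω.toWord
  generalize (ω.toWord.map (letterPoly i g)).prod = W at *
  obtain ⟨c₀, hc₀, h₀⟩ := key x₀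
  rw [mem_center_iff_entries] at h
  by_cases h01 : (FreeGroup.lift (Function.update g i x₀) ω).val 0 1 = 0
  · by_cases h10 : (FreeGroup.lift (Function.update g i x₀) ω).val 1 0 = 0
    · refine ⟨W 0 0 - W 1 1, (hh 0 0).sub (hh 1 1), ?_, fun x hx => ?_⟩
      · rw [map_sub, h₀, h₀, ← mul_sub]
        exact mul_ne_zero hc₀ fun h2 => h ⟨h01, h10, h2⟩
      · obtain ⟨c, hc, h2⟩ := key x
        rw [map_sub, h2, h2, ← mul_sub, ((mem_center_iff_entries _).mp hx).2.2, mul_zero]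
    · refine ⟨W 1 0, hh 1 0, ?_, fun x hx => ?_⟩
      · rw [h₀]
        exact mul_ne_zero hc₀ h10
      · obtain ⟨c, hc, h2⟩ := key x
        rw [h2, ((mem_center_iff_entries _).mp hx).2.1, mul_zero]
  · refine ⟨W 0 1, hh 0 1, ?_, fun x hx => ?_⟩
    · rw [h₀]
      exact mul_ne_zero hc₀ h01
    · obtain ⟨c, hc, h2⟩ := key x
      rw [h2, ((mem_center_iff_entries _).mp hx).1, mul_zero]

end WordPart

section OneVariable
open MvPolynomial

/-- number of occurrences of the letter `i` in a word -/
def occ {k : ℕ} (ω : FreeGroup (Fin k)) (i : Fin k) : ℕ :=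
  (ω.toWord.map (fun a => if a.1 = i then 1 else 0)).sum

lemma sum_occ {k : ℕ} (ω : FreeGroup (Fin k)) : ∑ i, occ ω i = ω.norm := by
  unfold occ FreeGroup.norm
  induction ω.toWord with
  | nil => simp
  | cons a L ih =>
    simp only [List.map_cons, List.sum_cons, Finset.sum_add_distrib, ih, List.length_cons]
    simp [add_comm]

lemma one_variable {k p : ℕ} (hp : p.Prime) (ω : FreeGroup (Fin k)) (i : Fin k)
    (hocc : occ ω i ≤ p) (g : Fin k → PGL2 p)
    (hx : ∃ x, ¬ FreeGroup.lift (Function.update g i x) ω = 1) :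
    (Nat.card {x : PGL2 p // FreeGroup.lift (Function.update g i x) ω = 1} : ℝ) ≤
      ((occ ω i : ℝ) / p + 8 / (p : ℝ) ^ 2) * Nat.card (PGL2 p) := by
  classical
  haveI : Fact p.Prime := ⟨hp⟩
  have hsurj : ∀ y : PGL2 p, ∃ A : GL (Fin 2) (ZMod p), (A : PGL2 p) = y :=
    QuotientGroup.mk_surjective
  choose g' hg' using fun j => hsurj (g j)
  have hlift : ∀ x : GL (Fin 2) (ZMod p), FreeGroup.lift (Function.update g i (x : PGL2 p)) ω = 1 ↔
      FreeGroup.lift (Function.update g' i x) ω ∈ Subgroup.center (GL (Fin 2) (ZMod p)) := by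
    intro x
    have h1 : FreeGroup.lift (Function.update g i (x : PGL2 p)) =
        (QuotientGroup.mk' (Subgroup.center (GL (Fin 2) (ZMod p)))).comp
          (FreeGroup.lift (Function.update g' i x)) := by
      ext j
      by_cases hj : j = i
      · subst hj
        simp
      · simp [Function.update_of_ne hj, hg']
    rw [h1, MonoidHom.comp_apply, QuotientGroup.mk'_apply, QuotientGroup.eq_one_iff]
  obtain ⟨x₀, hx₀⟩ := hx
  obtain ⟨y₀, rfl⟩ := hsurj x₀
  obtain ⟨F, hF, hF0, hFz⟩ := exists_poly i g' ω y₀ ((hlift y₀).not.mp hx₀)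
  change F.IsHomogeneous (occ ω i) at hF
  have hFne : F ≠ 0 := by
    rintro rfl
    simp at hF0
  have hp2 : (2 : ℤ) ≤ p := by exact_mod_cast hp.two_le
  have hZ : (zeroCount F : ℤ) ≤ p ^ 2 * (1 + occ ω i * (p - 1)) := by
    by_cases h0 : occ ω i = 0
    · rw [h0] at hF ⊢
      have h2 := Nat.le_zero.mp hF.totalDegree_le
      rw [totalDegree_eq_zero_iff_eq_C] at h2
      have h3 : zeroCount F = 0 := by
        unfold zeroCount
        rw [h2] at hF0 ⊢
        simp only [eval_C] at hF0 ⊢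
        simp [hF0]
      rw [h3]
      push_cast
      nlinarith
    · have := zero_count_le F hF hFne (by omega) (by rw [ZMod.card]; exact hocc)
      rw [ZMod.card] at this
      have hpp : (0 : ℤ) < p := by linarith
      refine le_of_mul_le_mul_left ?_ hpp
      calc _ ≤ _ := this
        _ = _ := by ring
  set t : Set (PGL2 p) := {x | FreeGroup.lift (Function.update g i x) ω = 1} with ht
  have hpre := QuotientGroup.card_preimage_mk (Subgroup.center (GL (Fin 2) (ZMod p))) t
  have hle : Nat.card ((QuotientGroup.mk : GL (Fin 2) (ZMod p) → PGL2 p) ⁻¹' t) ≤ zeroCount F := by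
    have : zeroCount F = Nat.card {v : Fin 4 → ZMod p // eval v F = 0} := by
      rw [Nat.card_eq_fintype_card, Fintype.card_subtype]
      rfl
    rw [this]
    refine Nat.card_le_card_of_injective
      (fun x => ⟨vecOf x.1.val, hFz x.1 ((hlift x.1).mp x.2)⟩) ?_
    intro x y hxy
    have h1 : vecOf x.1.val = vecOf y.1.val := congrArg Subtype.val hxy
    apply Subtype.ext
    apply Units.ext
    ext r s
    have e0 := congrFun h1 0
    have e1 := congrFun h1 1
    have e2 := congrFun h1 2
    have e3 := congrFun h1 3
    simp [vecOf] at e0 e1 e2 e3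
    fin_cases r <;> fin_cases s <;> assumption
  have hGL := Matrix.card_GL_field (𝔽 := ZMod p) 2
  rw [Fin.prod_univ_two, ZMod.card] at hGL
  have hquot := Subgroup.card_eq_card_quotient_mul_card_subgroup
    (Subgroup.center (GL (Fin 2) (ZMod p)))
  rw [hGL] at hquot
  have hcpos : 0 < Nat.card (Subgroup.center (GL (Fin 2) (ZMod p))) := Nat.card_pos
  rw [hpre] at hle
  have hcard : ((p : ℝ) ^ 2 - 1) * ((p : ℝ) ^ 2 - p) =
      Nat.card (PGL2 p) * Nat.card (Subgroup.center (GL (Fin 2) (ZMod p))) := by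
    have h1 : p ^ ((0 : Fin 2) : ℕ) ≤ p ^ 2 := Nat.pow_le_pow_right hp.pos (by simp)
    have h2 : p ^ ((1 : Fin 2) : ℕ) ≤ p ^ 2 := Nat.pow_le_pow_right hp.pos (by simp)
    have := congrArg (Nat.cast : ℕ → ℝ) hquot
    rw [Nat.cast_mul, Nat.cast_mul, Nat.cast_sub h1, Nat.cast_sub h2] at this
    simpa using this
  have hle' : (Nat.card (Subgroup.center (GL (Fin 2) (ZMod p))) : ℝ) * Nat.card t ≤
      (p : ℝ) ^ 2 * (1 + occ ω i * (p - 1)) := by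
    have h1 : (zeroCount F : ℝ) ≤ (p : ℝ) ^ 2 * (1 + occ ω i * (p - 1)) := by exact_mod_cast hZ
    have h2 : (Nat.card (Subgroup.center (GL (Fin 2) (ZMod p))) : ℝ) * Nat.card t ≤ zeroCount F := by
      exact_mod_cast hle
    linarith
  change (Nat.card t : ℝ) ≤ _
  have hc' : (0 : ℝ) < Nat.card (Subgroup.center (GL (Fin 2) (ZMod p))) := by exact_mod_cast hcpos
  refine le_of_mul_le_mul_left ?_ hc'
  refine hle'.trans ?_
  have hq : (2 : ℝ) ≤ p := by exact_mod_cast hp.two_le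
  have hd : (occ ω i : ℝ) ≤ p := by exact_mod_cast hocc
  have hd0 : (0 : ℝ) ≤ occ ω i := by positivity
  have e1 : (Nat.card (Subgroup.center (GL (Fin 2) (ZMod p))) : ℝ) *
      (((occ ω i : ℝ) / p + 8 / (p : ℝ) ^ 2) * Nat.card (PGL2 p)) =
      ((occ ω i : ℝ) / p + 8 / (p : ℝ) ^ 2) * (((p : ℝ) ^ 2 - 1) * ((p : ℝ) ^ 2 - p)) := by
    rw [hcard]
    ring
  rw [e1]
  generalize (occ ω i : ℝ) = d at *
  generalize (p : ℝ) = q at *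
  have hq0 : (0 : ℝ) < q := by linarith
  have e2 : (d / q + 8 / q ^ 2) * ((q ^ 2 - 1) * (q ^ 2 - q)) =
      ((d * q + 8) * ((q ^ 2 - 1) * (q - 1))) / q := by
    field_simp
  rw [e2, le_div_iff₀ hq0]
  have h1 : d * (q * (q - 1)) ≤ q * (q * (q - 1)) :=
    mul_le_mul_of_nonneg_right hd (by nlinarith)
  nlinarith [mul_nonneg (mul_nonneg hq0.le hq0.le) (sub_nonneg.mpr hq),
    mul_nonneg (sub_nonneg.mpr hq) (sub_nonneg.mpr hq), mul_nonneg hq0.le (sub_nonneg.mpr hq)]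

end OneVariable

/-- Fix k ≥ 1. There exists C > 0 such that for every prime p and every
nonidentity ω ∈ F_k of word length l: if some tuple in PGL₂(ℤ/pℤ)^k does not satisfy ω, then the
proportion of tuples (g₁,…,g_k) ∈ PGL₂(ℤ/pℤ)^k with ω(g₁,…,g_k) = 1 is at most l/p + C/p². -/
theorem stmt3 (k : ℕ) (hk : 1 ≤ k) :
    ∃ C : ℝ, 0 < C ∧
      ∀ (p : ℕ), p.Prime →
        ∀ ω : FreeGroup (Fin k), ω ≠ 1 →
          (∃ h : Fin k → PGL2 p, FreeGroup.lift h ω ≠ 1) →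
          (Nat.card {g : Fin k → PGL2 p // FreeGroup.lift g ω = 1} : ℝ) /
              (Nat.card (Fin k → PGL2 p) : ℝ) ≤
            (FreeGroup.norm ω : ℝ) / p + C / (p : ℝ) ^ 2 := by
  refine ⟨8 * k, by positivity, ?_⟩
  intro p hp ω _ hex
  classical
  haveI : Fact p.Prime := ⟨hp⟩
  haveI : Fintype (PGL2 p) := Fintype.ofFinite _
  have hp0 : (0 : ℝ) < p := by exact_mod_cast hp.pos
  have hcard : (Nat.card (Fin k → PGL2 p) : ℝ) = (Nat.card (PGL2 p) : ℝ) ^ k := by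
    rw [Nat.card_fun]
    simp
  have hpos : (0 : ℝ) < Nat.card (Fin k → PGL2 p) := by
    exact_mod_cast (Nat.card_pos : 0 < Nat.card (Fin k → PGL2 p))
  rw [div_le_iff₀ hpos]
  by_cases hl : ω.norm ≤ p
  · have hocc : ∀ i, occ ω i ≤ p := by
      intro i
      refine le_trans ?_ hl
      rw [← sum_occ]
      exact Finset.single_le_sum (f := fun i => occ ω i) (fun _ _ => Nat.zero_le _)
        (Finset.mem_univ i)
    have := hybrid_bound k (fun g : Fin k → PGL2 p => FreeGroup.lift g ω = 1)
      (fun i => (occ ω i : ℝ) / p + 8 / (p : ℝ) ^ 2) (fun i => by positivity)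
      (fun i g hx => one_variable hp ω i (hocc i) g hx) hex
    rw [hcard]
    refine this.trans (le_of_eq ?_)
    congr 1
    rw [Finset.sum_add_distrib, ← Finset.sum_div, ← Nat.cast_sum, sum_occ]
    simp
    ring
  · have h1 : (1 : ℝ) ≤ (FreeGroup.norm ω : ℝ) / p := by
      rw [le_div_iff₀ hp0, one_mul]
      exact_mod_cast (not_le.mp hl).le
    have h2 : (0 : ℝ) ≤ 8 * k / (p : ℝ) ^ 2 := by positivity
    have h3 : (Nat.card {g : Fin k → PGL2 p // FreeGroup.lift g ω = 1} : ℝ) ≤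
        Nat.card (Fin k → PGL2 p) := by
      exact_mod_cast Nat.card_le_card_of_injective _ Subtype.val_injective
    nlinarith
end

section
/- Fix an integer k ≥ 1. There exists a constant c > 0 such that for every prime p, every element ω ≠ 1 of the free group F_k on k generators satisfying ω(g₁, …, g_k) = 1 for all tuples (g₁, …, g_k) ∈ SL₂(ℤ/pℤ)^k has word length at least c·p/log p. -/
open MeasureTheory

namespace LawLen

open Polynomial

/-- The sign attached to a letter. -/
def sgn {R : Type*} [CommRing R] (b : Bool) : R := cond b 1 (-1)

/-- Action of a letter on a vector of polynomials: `I + ε t v_c w_cᵀ`. -/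
def act {R : Type*} [CommRing R] (t c e : R) (x : R × R) : R × R :=
  (x.1 + e * t * (c * x.1 - x.2), x.2 + e * t * c * (c * x.1 - x.2))

/-- Action of a word. -/
def run {R : Type*} [CommRing R] {k : ℕ} (f : Fin k → R) (t : R) (x : R × R) :
    List (Fin k × Bool) → R × R
  | [] => x
  | a :: L => act t (f a.1) (sgn a.2) (run f t x L)

/-- The unipotent matrix. -/
def umat {p : ℕ} (t c : ZMod p) : SL 2 p :=
  ⟨!![1 + t * c, -t; t * c * c, 1 - t * c], by rw [Matrix.det_fin_two_of]; ring⟩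

lemma umat_mulVec {p : ℕ} (t c : ZMod p) (b : Bool) (x : ZMod p × ZMod p) :
    (cond b (umat t c) (umat t c)⁻¹ : SL 2 p).1.mulVec ![x.1, x.2] =
      ![(act t c (sgn b) x).1, (act t c (sgn b) x).2] := by
  cases b
  · simp only [cond_false]
    rw [Matrix.SpecialLinearGroup.SL2_inv_expl]
    ext i; fin_cases i <;> simp [umat, act, sgn, Matrix.mulVec, dotProduct, Fin.sum_univ_two] <;> ring
  · simp only [cond_true]
    ext i; fin_cases i <;> simp [umat, act, sgn, Matrix.mulVec, dotProduct, Fin.sum_univ_two] <;> ring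

lemma prod_mulVec {p k : ℕ} (f : Fin k → ZMod p) (t : ZMod p) (x : ZMod p × ZMod p)
    (L : List (Fin k × Bool)) :
    ((L.map fun a => cond a.2 (umat t (f a.1)) (umat t (f a.1))⁻¹).prod).1.mulVec ![x.1, x.2] =
      ![(run f t x L).1, (run f t x L).2] := by
  induction L with
  | nil => simp [run]
  | cons a L ih =>
    rw [List.map_cons, List.prod_cons]
    have : ∀ A B : SL 2 p, (A * B).1 = A.1 * B.1 := fun A B => rfl
    rw [this, ← Matrix.mulVec_mulVec, ih, umat_mulVec]
    rfl

lemma eval_run {R : Type*} [CommRing R] {k : ℕ} (f : Fin k → R) (t : R) (x : R × R)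
    (L : List (Fin k × Bool)) :
    run f t x L = ((run (fun i => C (f i)) X (C x.1, C x.2) L).1.eval t,
      (run (fun i => C (f i)) X (C x.1, C x.2) L).2.eval t) := by
  induction L with
  | nil => simp [run]
  | cons a L ih =>
    have hs : ∀ b, (sgn b : R[X]).eval t = sgn b := by intro b; cases b <;> simp [sgn]
    simp only [run]
    rw [ih]
    simp [act, hs]

lemma sgn_C {R : Type*} [CommRing R] (b : Bool) : (sgn b : R[X]) = C (sgn b) := by
  cases b <;> simp [sgn]

lemma coeff_step {R : Type*} [CommRing R] (P Q : R[X]) (e : R) (n : ℕ) :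
    (P + C e * X * Q).coeff (n + 1) = P.coeff (n + 1) + e * Q.coeff n := by
  rw [coeff_add, mul_assoc, coeff_C_mul, coeff_X_mul]

lemma invariant {p k : ℕ} [Fact p.Prime] (f : Fin k → ZMod p) (hf : Function.Injective f)
    (L : List (Fin k × Bool)) (hne : L ≠ []) : 
    ∃ z : ZMod p × ZMod p, ∀ a : Fin k × Bool, ∀ L' : List (Fin k × Bool), ∀ M, L = M ++ a :: L' →
    FreeGroup.IsReduced (a :: L') → (a :: L').length < p →
    ∃ (d m : ℕ) (s : ZMod p), 1 ≤ m ∧ m ≤ (a :: L').length ∧ d + 1 ≤ (a :: L').length ∧ s ≠ 0 ∧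
      ∀ x, x = run (fun i => C (f i)) X (C z.1, C z.2) (a :: L') →
      (∀ j, d + 1 < j → x.1.coeff j = 0 ∧ x.2.coeff j = 0) ∧
      x.1.coeff (d + 1) = sgn a.2 * m * s ∧ x.2.coeff (d + 1) = sgn a.2 * m * s * f a.1 ∧
      (∀ j, d < j → f a.1 * x.1.coeff j - x.2.coeff j = 0) ∧
      f a.1 * x.1.coeff d - x.2.coeff d = s := by
  refine ⟨(1, f (L.getLast hne).1 + 1), ?_⟩
  intro a L'
  have c1 : ∀ (x : (ZMod p)[X] × (ZMod p)[X]) (c e : ZMod p) (n : ℕ), 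
      (act X (C c) (C e) x).1.coeff (n+1) = x.1.coeff (n+1) + e * (c * x.1.coeff n - x.2.coeff n) := by
    intro x c e n
    simp only [act]
    rw [coeff_step, coeff_sub, coeff_C_mul]
  have c2 : ∀ (x : (ZMod p)[X] × (ZMod p)[X]) (c e : ZMod p) (n : ℕ), 
      (act X (C c) (C e) x).2.coeff (n+1) = x.2.coeff (n+1) + e * c * (c * x.1.coeff n - x.2.coeff n) := by
    intro x c e n
    simp only [act]
    rw [show C e * X * C c = C (e * c) * X by rw [C_mul]; ring, coeff_step, coeff_sub, coeff_C_mul]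
  have c3 : ∀ (x : (ZMod p)[X] × (ZMod p)[X]) (c e : ZMod p) (n : ℕ), 
      c * (act X (C c) (C e) x).1.coeff n - (act X (C c) (C e) x).2.coeff n
        = c * x.1.coeff n - x.2.coeff n := by
    intro x c e n
    cases n with
    | succ n => rw [c1, c2]; ring
    | zero => simp [act, mul_assoc]
  have hs : ∀ b, (sgn b : ZMod p) ≠ 0 := by intro b; cases b <;> simp [sgn]
  induction L' generalizing a with
  | nil =>
    intro M hM _ _
    have hl : L.getLast hne = a := by subst hM; simp
    refine ⟨0, 1, -1, le_rfl, by simp, by simp, by simp, ?_⟩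
    rintro x rfl
    simp only [run, sgn_C, hl]
    refine ⟨?_, ?_, ?_, ?_, ?_⟩
    · intro j hj
      obtain ⟨j, rfl⟩ : ∃ i, j = i + 1 + 1 := ⟨j - 2, by omega⟩
      rw [c1, c2]
      simp [coeff_one, coeff_C]
    · rw [c1]; simp [coeff_one, coeff_C]
    · rw [c2]; simp [coeff_one, coeff_C]
    · intro j hj
      rw [c3]
      obtain ⟨j, rfl⟩ : ∃ i, j = i + 1 := ⟨j - 1, by omega⟩
      simp [coeff_one, coeff_C]
    · rw [c3]; simp
  | cons a' L' ih =>
    intro M hM hred hlen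
    have hred' : FreeGroup.IsReduced (a' :: L') := (List.isChain_cons_cons.1 hred).2
    have hhead := (List.isChain_cons_cons.1 hred).1
    obtain ⟨d, m, s, hm1, hm2, hd, hs0, h⟩ := ih a' (M ++ [a]) (by simp [hM]) hred'
      (by simp only [List.length_cons] at hlen ⊢; omega)
    set y := run (fun i => C (f i)) X
      (C (1 : ZMod p), C (f (L.getLast hne).1 + 1)) (a' :: L') with hy
    obtain ⟨h1, h2, h3, h4, h5⟩ := h y rfl
    have hmp : (m : ZMod p) ≠ 0 := by
      intro h0
      rw [ZMod.natCast_eq_zero_iff] at h0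
      have := Nat.le_of_dvd hm1 h0
      simp only [List.length_cons] at hlen hm2
      omega
    simp only [List.length_cons] at hlen hm2 hd ⊢
    by_cases hc : a.1 = a'.1
    · have hb := hhead hc
      refine ⟨d, m + 1, s, by omega, by omega, by omega, hs0, ?_⟩
      rintro x rfl
      rw [run, ← hy, sgn_C]
      rw [hc, hb]
      refine ⟨?_, ?_, ?_, ?_, ?_⟩
      · intro j hj
        obtain ⟨j, rfl⟩ : ∃ i, j = i + 1 := ⟨j - 1, by omega⟩
        rw [c1, c2, h4 j (by omega), (h1 _ hj).1, (h1 _ hj).2]; simp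
      · rw [c1, h5, h2]; push_cast; ring
      · rw [c2, h5, h3]; push_cast; ring
      · intro j hj
        rw [c3, h4 j hj]
      · rw [c3, h5]
    · have hfc : f a.1 - f a'.1 ≠ 0 := sub_ne_zero.2 fun h => hc (hf h)
      refine ⟨d + 1, 1, sgn a'.2 * m * s * (f a.1 - f a'.1), le_rfl, by omega, by omega,
        mul_ne_zero (mul_ne_zero (mul_ne_zero (hs _) hmp) hs0) hfc, ?_⟩
      rintro x rfl
      rw [run, ← hy, sgn_C]
      have key : f a.1 * y.1.coeff (d+1) - y.2.coeff (d+1)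
          = sgn a'.2 * m * s * (f a.1 - f a'.1) := by rw [h2, h3]; ring
      refine ⟨?_, ?_, ?_, ?_, ?_⟩
      · intro j hj
        obtain ⟨j, rfl⟩ : ∃ i, j = i + 1 := ⟨j - 1, by omega⟩
        rw [c1, c2, (h1 (j + 1) (by omega)).1, (h1 (j + 1) (by omega)).2, (h1 j (by omega)).1,
          (h1 j (by omega)).2]; simp
      · rw [c1, key, (h1 _ (by omega)).1]; push_cast; ring
      · rw [c2, key, (h1 _ (by omega)).2]; push_cast; ring
      · intro j hj
        rw [c3, (h1 _ hj).1, (h1 _ hj).2]; simp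
      · rw [c3, key]

lemma main {p k : ℕ} [Fact p.Prime] (hkp : k ≤ p) (ω : FreeGroup (Fin k)) (hω : ω ≠ 1)
    (h : ∀ g : Fin k → SL 2 p, FreeGroup.lift g ω = 1) : p ≤ FreeGroup.norm ω := by
  by_contra hlt
  push Not at hlt
  let f : Fin k → ZMod p := fun i => ((i : ℕ) : ZMod p)
  have hf : Function.Injective f := by
    intro i j hij
    have := (ZMod.natCast_eq_natCast_iff' _ _ _).1 hij
    rw [Nat.mod_eq_of_lt (by omega), Nat.mod_eq_of_lt (by omega)] at this
    exact Fin.ext this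
  have hne : ω.toWord ≠ [] := by simpa using hω
  obtain ⟨z, hz⟩ := invariant f hf ω.toWord hne
  obtain ⟨a, L, hL⟩ := List.exists_cons_of_ne_nil hne
  have hred : FreeGroup.IsReduced ω.toWord := FreeGroup.isReduced_toWord
  have hnorm : ω.toWord.length < p := hlt
  obtain ⟨d, m, s, hm1, hm2, hd, hs0, hx⟩ := hz a L [] (by simp [hL]) (hL ▸ hred) (hL ▸ hnorm)
  rw [← hL] at hm2 hd hx
  obtain ⟨h1, h2, -⟩ := hx _ rfl
  set P := (run (fun i => C (f i)) X (C z.1, C z.2) ω.toWord).1 with hP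
  have hev : ∀ t, P.eval t = z.1 := by
    intro t
    have e1 := prod_mulVec f t z ω.toWord
    have e2 := h (fun i => umat t (f i))
    rw [← FreeGroup.mk_toWord (x := ω), FreeGroup.lift_mk] at e2
    rw [e2, eval_run] at e1
    have := congrFun e1 0
    simp at this
    exact this.symm
  have hdeg : P.natDegree ≤ d + 1 := natDegree_le_iff_coeff_eq_zero.2 fun j hj => (h1 j hj).1
  have hPz : P = C z.1 := by
    refine Polynomial.eq_of_degree_sub_lt_of_eval_finset_eq (Finset.univ) ?_ ?_
    · refine lt_of_le_of_lt (degree_le_natDegree) ?_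
      rw [Finset.card_univ, ZMod.card]
      rw [natDegree_sub_C]
      exact_mod_cast (by omega)
    · intro t _
      rw [hev, eval_C]
  rw [hPz, coeff_C_succ] at h2
  have hmp : (m : ZMod p) ≠ 0 := by
    intro h0
    rw [ZMod.natCast_eq_zero_iff] at h0
    have := Nat.le_of_dvd hm1 h0
    omega
  have hs : ∀ b, (sgn b : ZMod p) ≠ 0 := by intro b; cases b <;> simp [sgn]
  exact mul_ne_zero (mul_ne_zero (hs _) hmp) hs0 h2.symm

end LawLen

/-- Fix k ≥ 1. There exists c > 0 such that for every prime p, every ω ≠ 1 in F_k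
with ω(g₁,…,g_k) = 1 for all tuples in SL₂(ℤ/pℤ)^k has word length at least c·p/log p. -/
theorem stmt4 (k : ℕ) (hk : 1 ≤ k) :
    ∃ c : ℝ, 0 < c ∧
      ∀ (p : ℕ), p.Prime →
        ∀ ω : FreeGroup (Fin k), ω ≠ 1 →
          (∀ g : Fin k → SL 2 p, FreeGroup.lift g ω = 1) →
          c * p / Real.log p ≤ (FreeGroup.norm ω : ℝ) := by
  have hl2 : 0 < Real.log 2 := Real.log_pos (by norm_num)
  have hl2' : Real.log 2 ≤ 1 := by
    have := Real.log_le_sub_one_of_pos (show (0:ℝ) < 2 by norm_num)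
    linarith
  refine ⟨Real.log 2 / (k + 1), by positivity, ?_⟩
  intro p hp ω hω h
  haveI : Fact p.Prime := ⟨hp⟩
  have hp2 : (2 : ℝ) ≤ p := by exact_mod_cast hp.two_le
  have hlp : Real.log 2 ≤ Real.log p := Real.log_le_log (by norm_num) hp2
  have hlp0 : 0 < Real.log p := lt_of_lt_of_le hl2 hlp
  have hk0 : (0 : ℝ) < k + 1 := by positivity
  have h1 : Real.log 2 / (k + 1) * p / Real.log p ≤ p / (k + 1) := by
    rw [div_le_iff₀ hlp0, div_mul_eq_mul_div, div_mul_eq_mul_div]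
    gcongr ?_ / _
    rw [mul_comm]
    gcongr
  refine h1.trans ?_
  rw [div_le_iff₀ hk0]
  have hn1 : 1 ≤ FreeGroup.norm ω := by
    rw [Nat.one_le_iff_ne_zero]
    simpa using hω
  rcases le_total k p with hkp | hkp
  · have := LawLen.main hkp ω hω h
    have h3 : (p : ℝ) ≤ FreeGroup.norm ω := by exact_mod_cast this
    nlinarith [(Nat.cast_nonneg k : (0:ℝ) ≤ k)]
  · have h3 : (1 : ℝ) ≤ FreeGroup.norm ω := by exact_mod_cast hn1
    have h4 : (p : ℝ) ≤ k := by exact_mod_cast hkp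
    nlinarith
end
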